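/- Suppose there exist numbers C₁, C₂ > 0 and, for every ball U ⊂ ℝ^d, a positive function α ↦ N(α,U), such that for all α > 0 and all μ ∈ ℳ_α(V): L_μV ≤ C₁ − C₂V pointwise and sup_{x∈U}|b(x,μ)| ≤ N(α,U). Suppose also that for all α > 0 and all μ_n, μ ∈ ℳ_α(V), convergence ‖μ_n − μ‖_W → 0 implies that b(·,μ_n) converges to b(·,μ) uniformly on every ball. Then there exists a stationary solution μ ∈ 𝒫_V(ℝ^d) of the nonlinear stationary equation L_μ^*μ = 0 satisfying ∫V dμ ≤ C₁/C₂. -/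

import Mathlib

open MeasureTheory Real Set Filter Metric
open scoped Topology RealInnerProductSpace NNReal ENNReal

noncomputable section

abbrev Ed (d : ℕ) : Type := EuclideanSpace ℝ (Fin d)

variable {d : ℕ}

/-- Second-order partial derivative `∂_i ∂_j φ (x)`. -/
def hess2 (φ : Ed d → ℝ) (x : Ed d) (i j : Fin d) : ℝ :=
  iteratedFDeriv ℝ 2 φ x ![EuclideanSpace.single i 1, EuclideanSpace.single j 1]

/-- The Kolmogorov operator `L φ = trace (A D²φ) + ⟨B, ∇φ⟩`. -/
def Lop (A : Ed d → Matrix (Fin d) (Fin d) ℝ) (B : Ed d → Ed d)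
    (φ : Ed d → ℝ) (x : Ed d) : ℝ :=
  (∑ i, ∑ j, A x i j * hess2 φ x i j) + ⟪B x, gradient φ x⟫

/-- Membership in `𝒫_V(ℝ^d)`. -/
def memPV (V : Ed d → ℝ) (μ : Measure (Ed d)) : Prop :=
  IsProbabilityMeasure μ ∧ Integrable V μ

/-- `C_0^∞` test functions. -/
def IsTestFun (φ : Ed d → ℝ) : Prop :=
  ContDiff ℝ (⊤ : ℕ∞) φ ∧ HasCompactSupport φ

/-- Weighted total-variation distance `‖W·(μ - ν)‖_{TV}` expressed by duality. -/
def wDist (W : Ed d → ℝ) (μ ν : Measure (Ed d)) : ℝ :=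
  ⨆ f : {f : Ed d → ℝ // Measurable f ∧ ∀ x, |f x| ≤ W x},
    (∫ x, f.1 x ∂μ - ∫ x, f.1 x ∂ν)

/-- Stationary solution of `L_μ^*μ = 0`. -/
def IsStationarySol (A : Ed d → Matrix (Fin d) (Fin d) ℝ) (B : Ed d → Ed d)
    (μ : Measure (Ed d)) : Prop :=
  ∀ φ : Ed d → ℝ, IsTestFun φ → ∫ x, Lop A B φ x ∂μ = 0

/-! ### Brouwer's fixed point theorem -/

section Brouwer

variable {E : Type*} [NormedAddCommGroup E] [InnerProductSpace ℝ E] [FiniteDimensional ℝ E]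

/-- The value `det (1 + M)` is a fixed linear combination of the values `det (1 + t M)` for
finitely many small `t`. -/
lemma exists_det_one_add_eq_sum (δ : ℝ) (hδ : 0 < δ) :
    ∃ (m : ℕ) (t w : Fin m → ℝ), (∀ i, t i ∈ Set.Icc 0 δ) ∧
      ∀ M : E →L[ℝ] E, (1 + M).det = ∑ i, w i * (1 + t i • M).det := by
  classical
  set b := Module.finBasis ℝ E
  set n := Module.finrank ℝ E
  let v : Fin (n + 1) → ℝ := fun i => δ * (i : ℝ) / (n + 1)
  have hv : Set.InjOn v (Finset.univ : Finset (Fin (n + 1))) := by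
    intro i _ j _ hij
    have h1 : (n + 1 : ℝ) ≠ 0 := by positivity
    simp only [v] at hij
    field_simp at hij
    exact Fin.ext (by exact_mod_cast hij)
  refine ⟨n + 1, v, fun i => (Lagrange.basis Finset.univ v i).eval 1, fun i => ⟨?_, ?_⟩, ?_⟩
  · positivity
  · simp only [v]
    rw [div_le_iff₀ (by positivity)]
    have : (i : ℝ) ≤ n + 1 := by exact_mod_cast i.2.le
    nlinarith
  · intro M
    let P := LinearMap.toMatrix b b (M : E →ₗ[ℝ] E)
    let q : Polynomial ℝ :=
      Matrix.det ((Polynomial.X : Polynomial ℝ) • P.map Polynomial.C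
        + (1 : Matrix _ _ ℝ).map Polynomial.C)
    have hq : ∀ s : ℝ, q.eval s = (1 + s • M).det := by
      intro s
      have h1 : (1 + s • M).det = (s • P + 1).det := by
        rw [ContinuousLinearMap.det, ← LinearMap.det_toMatrix b]
        congr 1
        simp only [P]
        have : ((1 + s • M : E →L[ℝ] E) : E →ₗ[ℝ] E) = s • (M : E →ₗ[ℝ] E) + 1 := by
          ext x; simp [add_comm]
        rw [this, map_add, map_smul, LinearMap.toMatrix_one]
      rw [h1]
      simp only [q]
      rw [← Polynomial.coe_evalRingHom, RingHom.map_det]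
      congr 1
      ext i j
      rcases eq_or_ne i j with rfl | h
      · simp [mul_comm s]
      · simp [h, mul_comm s]
    have hdeg : q.degree < (Finset.univ : Finset (Fin (n + 1))).card := by
      rw [Finset.card_univ, Fintype.card_fin]
      refine lt_of_le_of_lt Polynomial.degree_le_natDegree ?_
      have := Polynomial.natDegree_det_X_add_C_le P 1
      rw [Fintype.card_fin] at this
      exact_mod_cast Nat.lt_succ_of_le this
    have := Lagrange.eq_interpolate hv hdeg
    have h2 := congrArg (Polynomial.eval 1) this
    rw [Lagrange.interpolate_apply, Polynomial.eval_finsetSum, hq, one_smul] at h2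
    rw [h2]
    refine Finset.sum_congr rfl fun i _ => ?_
    rw [Polynomial.eval_mul, Polynomial.eval_C, hq, mul_comm]

/-- There is no `C¹` retraction of the closed unit ball onto the unit sphere. -/
lemma no_contDiff_retraction [Nontrivial E] (r : E → E)
    (hr : ∀ x ∈ closedBall (0 : E) 1, ContDiffAt ℝ 1 r x)
    (hr1 : ∀ x ∈ closedBall (0 : E) 1, ‖r x‖ = 1)
    (hr2 : ∀ x, ‖x‖ = 1 → r x = x) : False := by
  borelize E
  let μ : Measure E := Measure.addHaar
  let G : E → (E →L[ℝ] E) := fun x => fderiv ℝ r x - 1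
  have hGd : ∀ x ∈ closedBall (0 : E) 1, HasStrictFDerivAt (fun y => r y - y) (G x) x := by
    intro x hx
    have h1 := (hr x hx).hasStrictFDerivAt one_ne_zero
    exact h1.sub (hasStrictFDerivAt_id x)
  have hGc : ContinuousOn G (closedBall 0 1) := by
    intro x hx
    have h1 : ContinuousAt (fderiv ℝ r) x := ((hr x hx).fderiv_right (m := 0) le_rfl).continuousAt
    exact (h1.sub continuousAt_const).continuousWithinAt
  obtain ⟨C, hC⟩ := (isCompact_closedBall (0 : E) 1).exists_bound_of_continuousOn hGc
  have hC0 : 0 ≤ C := (norm_nonneg _).trans (hC 0 (by simp))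
  have hLip : ∀ x ∈ closedBall (0 : E) 1, ∀ y ∈ closedBall (0 : E) 1,
      ‖(r y - y) - (r x - x)‖ ≤ C * ‖y - x‖ := by
    intro x hx y hy
    exact (convex_closedBall (0 : E) 1).norm_image_sub_le_of_norm_hasFDerivWithin_le
      (fun z hz => (hGd z hz).hasFDerivAt.hasFDerivWithinAt) hC hx hy
  obtain ⟨η, hη, hdet⟩ : ∃ η > 0, ∀ M : E →L[ℝ] E, ‖M‖ < η → 0 < (1 + M).det := by
    have h1 : ContinuousAt (fun M : E →L[ℝ] E => (1 + M).det) 0 :=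
      (ContinuousLinearMap.continuous_det.comp (continuous_const.add continuous_id)).continuousAt
    have h2 : (0 : ℝ) < (1 + (0 : E →L[ℝ] E)).det := by
      rw [add_zero, ContinuousLinearMap.det, ContinuousLinearMap.toLinearMap_one, map_one]
      exact one_pos
    obtain ⟨η, hη, h⟩ := Metric.mem_nhds_iff.1 (h1.eventually (lt_mem_nhds h2))
    exact ⟨η, hη, fun M hM => h (by simpa using hM)⟩
  obtain ⟨δ, hδ, hδ1, hδC, hδη⟩ : ∃ δ : ℝ, 0 < δ ∧ δ < 1 ∧ δ * C < 1 ∧ δ * C < η := by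
    refine ⟨min (1 / 2) (min 1 η / (2 * (C + 1))), by positivity, ?_, ?_, ?_⟩
    · exact (min_le_left _ _).trans_lt (by norm_num)
    all_goals
      have h1 : min (1 / 2) (min 1 η / (2 * (C + 1))) * C ≤ min 1 η / (2 * (C + 1)) * (C + 1) :=
        mul_le_mul (min_le_right _ _) (by linarith) hC0 (by positivity)
      have h2 : min 1 η / (2 * (C + 1)) * (C + 1) = min 1 η / 2 := by field_simp
      have h3 : 0 < min 1 η := by positivity
    · linarith [min_le_left 1 η]
    · linarith [min_le_right 1 η]
  have key : ∀ t ∈ Set.Icc 0 δ, ∫ x in ball (0 : E) 1, (1 + t • G x).det ∂μ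
      = μ.real (ball (0 : E) 1) := by
    rintro t ⟨ht0, htδ⟩
    have htC : t * C ≤ δ * C := mul_le_mul_of_nonneg_right htδ hC0
    let f : E → E := fun x => x + t • (r x - x)
    have hfd : ∀ x ∈ closedBall (0 : E) 1, HasStrictFDerivAt f (1 + t • G x) x := fun x hx =>
      (hasStrictFDerivAt_id x).add ((hGd x hx).const_smul t)
    have hpos : ∀ x ∈ closedBall (0 : E) 1, 0 < (1 + t • G x).det := by
      intro x hx
      apply hdet
      rw [norm_smul, Real.norm_of_nonneg ht0]
      exact (mul_le_mul_of_nonneg_left (hC x hx) ht0).trans_lt (htC.trans_lt hδη)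
    have hinj : Set.InjOn f (closedBall 0 1) := by
      intro x hx y hy hxy
      have h1 : x - y = t • ((r y - y) - (r x - x)) := by
        have : x + t • (r x - x) = y + t • (r y - y) := hxy
        rw [smul_sub, sub_eq_sub_iff_add_eq_add, this]
        abel
      have h2 : ‖x - y‖ ≤ (t * C) * ‖x - y‖ := by
        conv_lhs => rw [h1, norm_smul, Real.norm_of_nonneg ht0]
        rw [mul_assoc, norm_sub_rev x y]
        exact mul_le_mul_of_nonneg_left (hLip x hx y hy) ht0
      have h3 : ‖x - y‖ = 0 := by nlinarith [norm_nonneg (x - y)]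
      exact sub_eq_zero.1 (norm_eq_zero.1 h3)
    have hsub : ball (0 : E) 1 ⊆ closedBall 0 1 := ball_subset_closedBall
    have himg : f '' ball 0 1 = ball 0 1 := by
      apply Set.Subset.antisymm
      · rintro _ ⟨x, hx, rfl⟩
        rw [mem_ball_zero_iff] at hx ⊢
        have h1 : f x = (1 - t) • x + t • r x := by simp only [f]; module
        rw [h1]
        refine (norm_add_le _ _).trans_lt ?_
        rw [norm_smul, norm_smul, Real.norm_of_nonneg ht0, Real.norm_of_nonneg (by linarith),
          hr1 x (by simpa using hx.le)]
        nlinarith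
      · have hopen : IsOpen (f '' ball 0 1) := by
          rw [isOpen_iff_mem_nhds]
          rintro _ ⟨x, hx, rfl⟩
          have h1 := hfd x (hsub hx)
          have h2 : HasStrictFDerivAt f (((1 + t • G x).toContinuousLinearEquivOfDetNeZero
            (hpos x (hsub hx)).ne' : E ≃L[ℝ] E) : E →L[ℝ] E) x := by
            rw [ContinuousLinearMap.coe_toContinuousLinearEquivOfDetNeZero]; exact h1
          rw [← h2.map_nhds_eq_of_equiv]
          exact image_mem_map (isOpen_ball.mem_nhds hx)
        have hcl : IsClosed (f '' closedBall 0 1) :=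
          ((isCompact_closedBall (0 : E) 1).image_of_continuousOn
            fun x hx => (hfd x hx).continuousAt.continuousWithinAt).isClosed
        have h0 : f 0 ∈ ball (0 : E) 1 := by
          have h1 : f 0 = t • r 0 := by simp [f]
          rw [mem_ball_zero_iff, h1, norm_smul, hr1 0 (by simp), Real.norm_of_nonneg ht0]
          linarith
        refine (convex_ball (0 : E) 1).isPreconnected.subset_of_closure_inter_subset hopen
          ⟨f 0, h0, mem_image_of_mem f (by simp)⟩ ?_
        rintro y ⟨hy1, hy2⟩
        obtain ⟨x, hx, rfl⟩ := closure_minimal (image_mono hsub) hcl hy1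
        refine mem_image_of_mem f ?_
        rw [mem_closedBall_zero_iff] at hx
        rw [mem_ball_zero_iff] at hy2 ⊢
        refine lt_of_le_of_ne hx fun h => ?_
        have : f x = x := by simp [f, hr2 x h]
        rw [this] at hy2
        linarith
    have h1 := integral_image_eq_integral_abs_det_fderiv_smul μ (measurableSet_ball (x := (0 : E))
      (ε := 1)) (fun x hx => (hfd x (hsub hx)).hasFDerivAt.hasFDerivWithinAt) (hinj.mono hsub)
      (fun _ => (1 : ℝ))
    rw [himg] at h1
    simp only [integral_const, smul_eq_mul, mul_one, measureReal_restrict_apply_univ] at h1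
    rw [h1]
    refine setIntegral_congr_fun measurableSet_ball fun x hx => ?_
    exact (abs_of_pos (hpos x (hsub hx))).symm
  obtain ⟨m, t, w, ht, hw⟩ := exists_det_one_add_eq_sum (E := E) δ hδ
  have hInt : ∀ s : ℝ, IntegrableOn (fun x => (1 + s • G x).det) (ball 0 1) μ := by
    intro s
    refine IntegrableOn.mono_set ?_ ball_subset_closedBall
    refine ContinuousOn.integrableOn_compact (isCompact_closedBall _ _) ?_
    exact ContinuousLinearMap.continuous_det.comp_continuousOn
      (continuousOn_const.add (hGc.const_smul s))
  have h1 : ∫ x in ball (0 : E) 1, (1 + G x).det ∂μ = μ.real (ball (0 : E) 1) := by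
    rw [integral_congr_ae (Eventually.of_forall fun x => hw (G x)),
      integral_finsetSum _ fun i _ => (hInt (t i)).const_mul (w i)]
    simp_rw [integral_const_mul]
    rw [Finset.sum_congr rfl fun i _ => by rw [key (t i) (ht i)], ← Finset.sum_mul]
    have h2 := hw 0
    simp only [smul_zero, add_zero, ContinuousLinearMap.det, ContinuousLinearMap.toLinearMap_one,
      map_one, mul_one] at h2
    rw [← h2, one_mul]
  have h2 : ∀ x ∈ ball (0 : E) 1, (1 + G x).det = 0 := by
    intro x hx
    have hG : 1 + G x = fderiv ℝ r x := by simp [G]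
    rw [hG]
    by_contra hne
    have hd : HasFDerivAt r (fderiv ℝ r x) x :=
      ((hr x (ball_subset_closedBall hx)).differentiableAt one_ne_zero).hasFDerivAt
    have h3 := hd.norm_sq
    have h4 : HasFDerivAt (fun y => ‖r y‖ ^ 2) (0 : E →L[ℝ] ℝ) x := by
      refine (hasFDerivAt_const (1 : ℝ) x).congr_of_eventuallyEq ?_
      filter_upwards [isOpen_ball.mem_nhds hx] with y hy
      rw [hr1 y (ball_subset_closedBall hy), one_pow]
    have h5 := h3.unique h4
    obtain ⟨v, hv⟩ : ∃ v, fderiv ℝ r x v = r x :=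
      ⟨((fderiv ℝ r x).toContinuousLinearEquivOfDetNeZero hne).symm (r x), by
        rw [← ContinuousLinearMap.toContinuousLinearEquivOfDetNeZero_apply _ hne]; simp⟩
    have h6 := DFunLike.congr_fun h5 v
    simp [hv, hr1 x (ball_subset_closedBall hx)] at h6
  rw [setIntegral_congr_fun measurableSet_ball h2] at h1
  simp only [integral_zero] at h1
  have h3 : 0 < μ.real (ball (0 : E) 1) :=
    ENNReal.toReal_pos (measure_ball_pos μ 0 one_pos).ne' measure_ball_lt_top.ne
  linarith

end Brouwer

section BrouwerFixedPoint

variable {E : Type*} [NormedAddCommGroup E] [InnerProductSpace ℝ E] [FiniteDimensional ℝ E]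

lemma exists_fixedPoint_of_contDiff [Nontrivial E] (F : E → E) (hF : ContDiff ℝ 1 F)
    (hF1 : ∀ x ∈ closedBall (0 : E) 1, ‖F x‖ ≤ 1) :
    ∃ x ∈ closedBall (0 : E) 1, F x = x := by
  by_contra! hne
  let u : E → E := fun x => x - F x
  have hu : ContDiff ℝ 1 u := contDiff_id.sub hF
  have hu0 : ∀ x ∈ closedBall (0 : E) 1, 0 < ‖u x‖ ^ 2 := fun x hx =>
    pow_pos (norm_pos_iff.2 (sub_ne_zero.2 (hne x hx).symm)) 2
  have hxu : ∀ x, ‖x‖ = 1 → 0 < ⟪x, u x⟫ := by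
    intro x hx
    have hx' : x ∈ closedBall (0 : E) 1 := by simp [hx]
    have h1 : ‖u x‖ ^ 2 = ‖x‖ ^ 2 - 2 * ⟪x, F x⟫ + ‖F x‖ ^ 2 := norm_sub_sq_real _ _
    have h2 : ⟪x, u x⟫ = ‖x‖ ^ 2 - ⟪x, F x⟫ := by
      simp only [u]; rw [inner_sub_right, real_inner_self_eq_norm_sq]
    have h3 := hF1 x hx'
    have h4 := hu0 x hx'
    rw [hx] at h1 h2
    nlinarith [norm_nonneg (F x)]
  let D : E → ℝ := fun x => ⟪x, u x⟫ ^ 2 + ‖u x‖ ^ 2 * (1 - ‖x‖ ^ 2)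
  have hD : ∀ x ∈ closedBall (0 : E) 1, 0 < D x := by
    intro x hx
    have hx1 : ‖x‖ ≤ 1 := by simpa using hx
    rcases hx1.lt_or_eq with h | h
    · have : 0 < 1 - ‖x‖ ^ 2 := by nlinarith [norm_nonneg x]
      have := mul_pos (hu0 x hx) this
      simp only [D]; positivity
    · have := hxu x h
      simp only [D, h]
      simpa using pow_pos this 2
  let l : E → ℝ := fun x => (-⟪x, u x⟫ + √(D x)) / ‖u x‖ ^ 2
  refine no_contDiff_retraction (fun x => x + l x • u x) ?_ ?_ ?_
  · intro x hx
    have hin : ContDiff ℝ 1 (fun x => ⟪x, u x⟫) := contDiff_id.inner ℝ hu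
    have hDc : ContDiff ℝ 1 D :=
      (hin.pow 2).add ((hu.norm_sq ℝ).mul (contDiff_const.sub (contDiff_norm_sq ℝ)))
    have hl : ContDiffAt ℝ 1 l x :=
      (hin.contDiffAt.neg.add (hDc.contDiffAt.sqrt (hD x hx).ne')).div (hu.norm_sq ℝ).contDiffAt
        (hu0 x hx).ne'
    exact contDiffAt_id.add (hl.smul hu.contDiffAt)
  · intro x hx
    have h0 : ‖u x‖ ≠ 0 := fun h => by simpa [h] using hu0 x hx
    have hs : √(D x) ^ 2 = D x := Real.sq_sqrt (hD x hx).le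
    have h1 : ‖x + l x • u x‖ ^ 2 = 1 := by
      rw [norm_add_sq_real, inner_smul_right, norm_smul, mul_pow, Real.norm_eq_abs, sq_abs]
      simp only [l]
      field_simp
      have : D x = ⟪x, u x⟫ ^ 2 + ‖u x‖ ^ 2 * (1 - ‖x‖ ^ 2) := rfl
      nlinarith
    exact (sq_eq_sq₀ (norm_nonneg _) zero_le_one).1 (by rw [h1, one_pow])
  · intro x hx
    have h1 : D x = ⟪x, u x⟫ ^ 2 := by simp [D, hx]
    have h2 : l x = 0 := by
      simp only [l]
      rw [h1, Real.sqrt_sq (hxu x hx).le]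
      simp
    simp [h2]

/-- **Brouwer's fixed point theorem** on the closed unit ball. -/
lemma exists_fixedPoint_closedBall [Nontrivial E] (F : E → E) (hF : Continuous F)
    (hF1 : ∀ x ∈ closedBall (0 : E) 1, ‖F x‖ ≤ 1) :
    ∃ x ∈ closedBall (0 : E) 1, F x = x := by
  by_contra! hne
  obtain ⟨x₀, hx₀, hmin⟩ := (isCompact_closedBall (0 : E) 1).exists_isMinOn
    ⟨0, by simp⟩ (hF.sub continuous_id).norm.continuousOn
  set ε := ‖F x₀ - x₀‖ with hε
  have hε0 : 0 < ε := norm_pos_iff.2 (sub_ne_zero.2 (hne x₀ hx₀))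
  have hmin' : ∀ x ∈ closedBall (0 : E) 1, ε ≤ ‖F x - x‖ := fun x hx => hmin hx
  obtain ⟨η, hη, hηF⟩ := Metric.uniformContinuousOn_iff.1
    ((isCompact_closedBall (0 : E) 2).uniformContinuousOn_of_continuous hF.continuousOn)
    (ε / 3) (by positivity)
  obtain ⟨g, hg, hgF⟩ := hF.exists_contDiff_dist_le_of_forall_mem_ball_dist_le
    (ε := min η 1) (by positivity)
  have hclose : ∀ a ∈ closedBall (0 : E) 1, ‖g a - F a‖ ≤ ε / 3 := by
    intro a ha
    rw [← dist_eq_norm]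
    refine hgF a _ fun x hx => (hηF x ?_ a ?_ ?_).le
    · have h1 : dist x a < 1 := lt_of_lt_of_le hx (min_le_right _ _)
      have h2 : dist a 0 ≤ 1 := ha
      have := dist_triangle x a 0
      exact mem_closedBall.2 (by linarith)
    · exact closedBall_subset_closedBall (by norm_num) ha
    · exact lt_of_lt_of_le hx (min_le_left _ _)
  have hk : 0 < 1 + ε / 3 := by positivity
  obtain ⟨x, hx, hfix⟩ := exists_fixedPoint_of_contDiff (fun x => (1 + ε / 3)⁻¹ • g x)
    (contDiff_const.smul (hg.of_le (by exact_mod_cast le_top))) (by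
      intro x hx
      rw [norm_smul, norm_inv, Real.norm_of_nonneg hk.le, inv_mul_le_iff₀ hk, mul_one]
      have h1 := hclose x hx
      have h2 := hF1 x hx
      have h3 := norm_add_le (g x - F x) (F x)
      rw [sub_add_cancel] at h3
      linarith)
  have hgx : g x = (1 + ε / 3) • x := by
    rw [inv_smul_eq_iff₀ hk.ne'] at hfix
    exact hfix
  have h1 : F x - x = (ε / 3) • x - (g x - F x) := by
    rw [hgx]; module
  have h2 := hmin' x hx
  rw [h1] at h2
  have h3 := norm_sub_le ((ε / 3) • x) (g x - F x)
  rw [norm_smul, Real.norm_of_nonneg (by positivity)] at h3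
  have h4 : ‖x‖ ≤ 1 := by simpa using hx
  have h5 := hclose x hx
  nlinarith

/-- **Brouwer's fixed point theorem** on the standard simplex. -/
lemma exists_fixedPoint_stdSimplex {ι : Type*} [Fintype ι] [Nonempty ι] (f : (ι → ℝ) → (ι → ℝ))
    (hf : ContinuousOn f (stdSimplex ℝ ι)) (hmaps : MapsTo f (stdSimplex ℝ ι) (stdSimplex ℝ ι)) :
    ∃ p ∈ stdSimplex ℝ ι, f p = p := by
  let s : (ι → ℝ) → ℝ := fun x => ∑ i, max (x i) 0
  have hs : Continuous s := by fun_prop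
  let ρ : (ι → ℝ) → (ι → ℝ) := fun x i =>
    (max (x i) 0 + max (1 - s x) 0 / Fintype.card ι) / max (s x) 1
  have hpos : ∀ x, 0 < max (s x) 1 := fun x => lt_of_lt_of_le one_pos (le_max_right _ _)
  have hρc : Continuous ρ := by
    refine continuous_pi fun i => Continuous.div (by fun_prop) (by fun_prop) fun x => (hpos x).ne'
  have hρm : ∀ x, ρ x ∈ stdSimplex ℝ ι := by
    intro x
    refine ⟨fun i => by positivity, ?_⟩
    simp only [ρ]
    rw [← Finset.sum_div, Finset.sum_add_distrib, Finset.sum_const, Finset.card_univ, nsmul_eq_mul,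
      mul_div_cancel₀ _ (by simp), div_eq_one_iff_eq (hpos x).ne']
    change s x + max (1 - s x) 0 = max (s x) 1
    rcases le_total (s x) 1 with h | h
    · rw [max_eq_left (by linarith), max_eq_right h]; ring
    · rw [max_eq_right (by linarith), max_eq_left h]; ring
  have hρid : ∀ x ∈ stdSimplex ℝ ι, ρ x = x := by
    intro x hx
    have h1 : s x = 1 := by
      rw [← hx.2]
      exact Finset.sum_congr rfl fun i _ => max_eq_left (hx.1 i)
    funext i
    simp [ρ, h1, hx.1 i]
  let F : EuclideanSpace ℝ ι → EuclideanSpace ℝ ι := fun x => WithLp.toLp 2 (f (ρ x.ofLp))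
  have hF : Continuous F := by
    have h1 : Continuous fun x : EuclideanSpace ℝ ι => f (ρ x.ofLp) :=
      hf.comp_continuous (by fun_prop) fun x => hρm _
    exact (PiLp.continuous_toLp 2 _).comp h1
  obtain ⟨x, -, hx⟩ := exists_fixedPoint_closedBall F hF (by
    intro x _
    have hm := hmaps (hρm x.ofLp)
    rw [EuclideanSpace.norm_eq, Real.sqrt_le_iff, one_pow]
    refine ⟨zero_le_one, ?_⟩
    have h1 : ∀ i, f (ρ x.ofLp) i ≤ 1 := fun i => by
      rw [← hm.2]
      exact Finset.single_le_sum (fun j _ => hm.1 j) (Finset.mem_univ i)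
    calc ∑ i, ‖F x i‖ ^ 2 ≤ ∑ i, f (ρ x.ofLp) i := by
          refine Finset.sum_le_sum fun i _ => ?_
          have : F x i = f (ρ x.ofLp) i := rfl
          rw [this, Real.norm_eq_abs, sq_abs]
          nlinarith [hm.1 i, h1 i]
      _ = 1 := hm.2)
  have hx' : f (ρ x.ofLp) = x.ofLp := congrArg WithLp.ofLp hx
  have hxm : x.ofLp ∈ stdSimplex ℝ ι := by
    rw [← hx']; exact hmaps (hρm _)
  exact ⟨x.ofLp, hxm, by rwa [hρid _ hxm] at hx'⟩

end BrouwerFixedPoint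

/-! ### Calculus of the operator `Lop` -/

/-- The second-order part `trace (A D²φ)`. -/
def trHess (A : Ed d → Matrix (Fin d) (Fin d) ℝ) (φ : Ed d → ℝ) (x : Ed d) : ℝ :=
  ∑ i, ∑ j, A x i j * hess2 φ x i j

lemma Lop_eq (A : Ed d → Matrix (Fin d) (Fin d) ℝ) (B : Ed d → Ed d) (φ : Ed d → ℝ) (x : Ed d) :
    Lop A B φ x = trHess A φ x + ⟪B x, gradient φ x⟫ := rfl

lemma hess2_eq (φ : Ed d → ℝ) (x : Ed d) (i j : Fin d) :
    hess2 φ x i j = fderiv ℝ (fderiv ℝ φ) x (EuclideanSpace.single i 1)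
      (EuclideanSpace.single j 1) := by
  simp [hess2, iteratedFDeriv_two_apply]

lemma inner_gradient (φ : Ed d → ℝ) (x v : Ed d) : ⟪v, gradient φ x⟫ = fderiv ℝ φ x v := by
  rw [real_inner_comm, gradient, InnerProductSpace.toDual_symm_apply]

lemma norm_gradient (φ : Ed d → ℝ) (x : Ed d) : ‖gradient φ x‖ = ‖fderiv ℝ φ x‖ := by
  rw [gradient, LinearIsometryEquiv.norm_map]

lemma continuous_gradient {φ : Ed d → ℝ} (hφ : ContDiff ℝ 2 φ) : Continuous (gradient φ) :=
  (LinearIsometryEquiv.continuous _).comp (hφ.continuous_fderiv (by norm_num))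

lemma continuous_hess2 {φ : Ed d → ℝ} (hφ : ContDiff ℝ 2 φ) (i j : Fin d) :
    Continuous fun x => hess2 φ x i j := by
  simp_rw [hess2_eq]
  have h1 : ContDiff ℝ 1 (fderiv ℝ φ) := hφ.fderiv_right (by norm_num)
  have h2 : Continuous (fderiv ℝ (fderiv ℝ φ)) := h1.continuous_fderiv (by norm_num)
  exact (h2.clm_apply continuous_const).clm_apply continuous_const

lemma continuous_trHess {A : Ed d → Matrix (Fin d) (Fin d) ℝ}
    (hA : ∀ i j, Continuous fun x => A x i j) {φ : Ed d → ℝ} (hφ : ContDiff ℝ 2 φ) :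
    Continuous (trHess A φ) :=
  continuous_finsetSum _ fun i _ => continuous_finsetSum _ fun j _ =>
    (hA i j).mul (continuous_hess2 hφ i j)

lemma IsTestFun.contDiff_two {φ : Ed d → ℝ} (hφ : IsTestFun φ) : ContDiff ℝ 2 φ :=
  contDiff_infty.1 hφ.1 2

lemma gradient_eq_zero_of_notMem_tsupport {φ : Ed d → ℝ} {x : Ed d} (hx : x ∉ tsupport φ) :
    gradient φ x = 0 := by
  have h1 : fderiv ℝ φ x = 0 := by
    by_contra h
    exact hx (support_fderiv_subset ℝ h)
  simp [gradient, h1]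

lemma trHess_eq_zero_of_notMem_tsupport {A : Ed d → Matrix (Fin d) (Fin d) ℝ} {φ : Ed d → ℝ}
    {x : Ed d} (hx : x ∉ tsupport φ) : trHess A φ x = 0 := by
  have h1 : fderiv ℝ (fderiv ℝ φ) x = 0 := by
    by_contra h
    exact hx (tsupport_fderiv_subset ℝ (support_fderiv_subset ℝ h))
  simp [trHess, hess2_eq, h1]

lemma hasCompactSupport_trHess {A : Ed d → Matrix (Fin d) (Fin d) ℝ} {φ : Ed d → ℝ}
    (hφ : HasCompactSupport φ) : HasCompactSupport (trHess A φ) :=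
  HasCompactSupport.intro hφ fun _ hx => trHess_eq_zero_of_notMem_tsupport hx

lemma hasCompactSupport_gradient {φ : Ed d → ℝ}
    (hφ : HasCompactSupport φ) : HasCompactSupport (gradient φ) :=
  HasCompactSupport.intro hφ fun _ hx => gradient_eq_zero_of_notMem_tsupport hx

lemma Lop_add (A : Ed d → Matrix (Fin d) (Fin d) ℝ) (B : Ed d → Ed d) {φ ψ : Ed d → ℝ}
    (hφ : ContDiff ℝ 2 φ) (hψ : ContDiff ℝ 2 ψ) (x : Ed d) :
    Lop A B (φ + ψ) x = Lop A B φ x + Lop A B ψ x := by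
  have h1 : fderiv ℝ (φ + ψ) = fderiv ℝ φ + fderiv ℝ ψ := by
    funext y
    exact fderiv_add (hφ.differentiable (by norm_num) y) (hψ.differentiable (by norm_num) y)
  have h2 : fderiv ℝ (fderiv ℝ φ + fderiv ℝ ψ) x
      = fderiv ℝ (fderiv ℝ φ) x + fderiv ℝ (fderiv ℝ ψ) x :=
    fderiv_add ((hφ.fderiv_right (m := 1) (by norm_num)).differentiable (by norm_num) x)
      ((hψ.fderiv_right (m := 1) (by norm_num)).differentiable (by norm_num) x)
  simp only [Lop, hess2_eq, inner_gradient, h1, h2, add_apply, Pi.add_apply,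
    mul_add, Finset.sum_add_distrib]
  ring

lemma Lop_const_smul (A : Ed d → Matrix (Fin d) (Fin d) ℝ) (B : Ed d → Ed d) {φ : Ed d → ℝ}
    (hφ : ContDiff ℝ 2 φ) (c : ℝ) (x : Ed d) :
    Lop A B (c • φ) x = c * Lop A B φ x := by
  have h1 : fderiv ℝ (c • φ) = c • fderiv ℝ φ := by
    funext y
    exact fderiv_const_smul (hφ.differentiable (by norm_num) y) c
  have h2 : fderiv ℝ (c • fderiv ℝ φ) x = c • fderiv ℝ (fderiv ℝ φ) x :=
    fderiv_const_smul ((hφ.fderiv_right (m := 1) (by norm_num)).differentiable (by norm_num) x) c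
  simp only [Lop, hess2_eq, inner_gradient, h1, h2, smul_apply, Pi.smul_apply,
    smul_eq_mul, mul_add, Finset.mul_sum]
  congr 1
  exact Finset.sum_congr rfl fun i _ => Finset.sum_congr rfl fun j _ => by ring

lemma Lop_sum (A : Ed d → Matrix (Fin d) (Fin d) ℝ) (B : Ed d → Ed d) {ι : Type*} (s : Finset ι)
    (θ : ι → ℝ) {φ : ι → Ed d → ℝ} (hφ : ∀ i, ContDiff ℝ 2 (φ i)) (x : Ed d) :
    ContDiff ℝ 2 (∑ i ∈ s, θ i • φ i) ∧
      Lop A B (∑ i ∈ s, θ i • φ i) x = ∑ i ∈ s, θ i * Lop A B (φ i) x := by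
  classical
  induction s using Finset.induction_on with
  | empty =>
    refine ⟨by simp only [Finset.sum_empty]; exact contDiff_const, ?_⟩
    have h := Lop_const_smul A B (contDiff_const : ContDiff ℝ 2 (fun _ : Ed d => (0 : ℝ))) 0 x
    rw [zero_smul, zero_mul] at h
    simpa using h
  | insert a s ha ih =>
    rw [Finset.sum_insert ha, Finset.sum_insert ha]
    have h1 : ContDiff ℝ 2 (θ a • φ a) := (hφ a).const_smul (θ a)
    exact ⟨h1.add ih.1, by rw [Lop_add A B h1 ih.1, ih.2, Lop_const_smul A B (hφ a)]⟩

lemma fderiv_fderiv_nonpos_of_isLocalMax {u : Ed d → ℝ} (hu : ContDiff ℝ 2 u) {x : Ed d}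
    (hx : IsLocalMax u x) (v : Ed d) : fderiv ℝ (fderiv ℝ u) x v v ≤ 0 := by
  by_contra! hpos
  let h : ℝ → ℝ := fun t => u (x + t • v)
  have hline : ∀ t : ℝ, HasDerivAt (fun t : ℝ => x + t • v) v t := fun t => by
    simpa using ((hasDerivAt_id t).smul_const v).const_add x
  have hd : ∀ t, HasDerivAt h (fderiv ℝ u (x + t • v) v) t := fun t =>
    (hu.differentiable (by norm_num) _).hasFDerivAt.comp_hasDerivAt t (hline t)
  have hd1 : deriv h = fun t => fderiv ℝ u (x + t • v) v := funext fun t => (hd t).deriv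
  have hd2 : deriv (deriv h) 0 = fderiv ℝ (fderiv ℝ u) x v v := by
    rw [hd1]
    have h1 : HasFDerivAt (fderiv ℝ u) (fderiv ℝ (fderiv ℝ u) (x + (0 : ℝ) • v))
        (x + (0 : ℝ) • v) :=
      ((hu.fderiv_right (m := 1) (by norm_num)).differentiable (by norm_num) _).hasFDerivAt
    have h2 : HasDerivAt (fun t : ℝ => fderiv ℝ u (x + t • v))
        (fderiv ℝ (fderiv ℝ u) (x + (0 : ℝ) • v) v) 0 := h1.comp_hasDerivAt (0 : ℝ) (hline 0)
    have h3 : HasDerivAt (fun t : ℝ => fderiv ℝ u (x + t • v) v)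
        (fderiv ℝ (fderiv ℝ u) (x + (0 : ℝ) • v) v v) 0 :=
      ((ContinuousLinearMap.apply ℝ ℝ v).hasFDerivAt).comp_hasDerivAt (0 : ℝ) h2
    rw [h3.deriv, zero_smul, add_zero]
  have hmax : IsLocalMax h 0 := by
    have hc : Tendsto (fun t : ℝ => x + t • v) (𝓝 0) (𝓝 x) := by
      simpa using (hline 0).continuousAt.tendsto
    have := hc.eventually hx
    filter_upwards [this] with t ht
    simpa [h] using ht
  have hmin : IsLocalMin h 0 :=
    isLocalMin_of_deriv_deriv_pos (by rw [hd2]; exact hpos) hmax.deriv_eq_zero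
      (hd 0).continuousAt
  have hconst : h =ᶠ[𝓝 0] fun _ => h 0 := by
    filter_upwards [hmax, hmin] with t h1 h2
    exact le_antisymm h1 h2
  have h3 : deriv (deriv h) 0 = 0 := by
    have h4 : deriv h =ᶠ[𝓝 0] deriv fun _ => h 0 := hconst.deriv
    rw [h4.deriv_eq]
    simp
  rw [hd2] at h3
  exact hpos.ne' h3

lemma clm_apply_eq_sum (D : Ed d →L[ℝ] Ed d →L[ℝ] ℝ) (v w : Ed d) :
    D v w = ∑ i, ∑ j, v i * w j * D (EuclideanSpace.single i 1) (EuclideanSpace.single j 1) := by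
  have h3 : ∀ w : Ed d, w = ∑ i, w i • (EuclideanSpace.single i (1 : ℝ) : Ed d) := by
    intro w
    ext j
    simp [Pi.single_apply]
  conv_lhs => rw [h3 v, h3 w]
  simp only [map_sum, map_smul, sum_apply, smul_apply, smul_eq_mul, Finset.mul_sum]
  rw [Finset.sum_comm]
  exact Finset.sum_congr rfl fun i _ => Finset.sum_congr rfl fun j _ => by ring

/-- A symmetric matrix field with nonnegative quadratic form is positive semidefinite. -/
lemma exists_eq_sum_vecMulVec {M : Matrix (Fin d) (Fin d) ℝ} (hM : M.IsSymm)
    (hpos : ∀ v : Ed d, 0 ≤ ∑ i, ∑ j, M i j * v i * v j) :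
    ∃ (m : ℕ) (v : Fin m → (Fin d → ℝ)), ∀ i j, M i j = ∑ k, v k i * v k j := by
  have h1 : M.PosSemidef := by
    refine Matrix.PosSemidef.of_dotProduct_mulVec_nonneg (by simpa using hM) fun x => ?_
    have := hpos (WithLp.toLp 2 x)
    simp only [dotProduct, Matrix.mulVec, Finset.mul_sum, Pi.star_apply, star_trivial]
    refine this.trans_eq (Finset.sum_congr rfl fun i _ => Finset.sum_congr rfl fun j _ => ?_)
    simp only []
    ring
  obtain ⟨m, v, hv⟩ := Matrix.posSemidef_iff_eq_sum_vecMulVec.1 h1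
  refine ⟨m, v, fun i j => ?_⟩
  rw [hv, Matrix.sum_apply]
  simp [Matrix.vecMulVec_apply]

lemma Lop_nonpos_of_isLocalMax {A : Ed d → Matrix (Fin d) (Fin d) ℝ} (B : Ed d → Ed d)
    (hAsymm : ∀ x, (A x).IsSymm)
    (hApos : ∀ x (v : Ed d), 0 ≤ ∑ i, ∑ j, A x i j * v i * v j)
    {u : Ed d → ℝ} (hu : ContDiff ℝ 2 u) {x : Ed d} (hx : IsLocalMax u x) :
    Lop A B u x ≤ 0 := by
  obtain ⟨m, v, hv⟩ := exists_eq_sum_vecMulVec (hAsymm x) (hApos x)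
  have h1 : ⟪B x, gradient u x⟫ = 0 := by
    rw [inner_gradient, hx.fderiv_eq_zero]; simp
  rw [Lop_eq, h1, add_zero, trHess]
  have h2 : ∑ i, ∑ j, A x i j * hess2 u x i j
      = ∑ k, fderiv ℝ (fderiv ℝ u) x (WithLp.toLp 2 (v k)) (WithLp.toLp 2 (v k)) := by
    refine Eq.symm ((Finset.sum_congr rfl fun k _ => clm_apply_eq_sum (fderiv ℝ (fderiv ℝ u) x)
      (WithLp.toLp 2 (v k)) (WithLp.toLp 2 (v k))).trans ?_)
    rw [Finset.sum_comm]
    refine Finset.sum_congr rfl fun i _ => ?_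
    rw [Finset.sum_comm]
    refine Finset.sum_congr rfl fun j _ => ?_
    rw [hv i j, hess2_eq, Finset.sum_mul]
  rw [h2]
  exact Finset.sum_nonpos fun k _ => fderiv_fderiv_nonpos_of_isLocalMax hu hx _

/-! ### Mixtures and moment sets -/

/-- The mixture `∑ j, p j • μ j` of a finite family of measures. -/
def mixture {ι : Type*} [Fintype ι] (p : ι → ℝ) (μ : ι → Measure (Ed d)) : Measure (Ed d) :=
  ∑ j, ENNReal.ofReal (p j) • μ j

lemma isProbabilityMeasure_mixture {ι : Type*} [Fintype ι] {p : ι → ℝ} (hp : p ∈ stdSimplex ℝ ι)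
    {μ : ι → Measure (Ed d)} (hμ : ∀ j, IsProbabilityMeasure (μ j)) :
    IsProbabilityMeasure (mixture p μ) := by
  refine ⟨?_⟩
  rw [mixture, Measure.finsetSum_apply]
  simp only [Measure.smul_apply, measure_univ, smul_eq_mul, mul_one]
  rw [← ENNReal.ofReal_sum_of_nonneg fun j _ => hp.1 j, hp.2, ENNReal.ofReal_one]

lemma integrable_mixture {ι : Type*} [Fintype ι] (p : ι → ℝ) {μ : ι → Measure (Ed d)}
    {f : Ed d → ℝ} (hf : ∀ j, Integrable f (μ j)) : Integrable f (mixture p μ) :=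
  integrable_finsetSum_measure.2 fun j _ => (hf j).smul_measure ENNReal.ofReal_ne_top

lemma integral_mixture {ι : Type*} [Fintype ι] {p : ι → ℝ} (hp : ∀ j, 0 ≤ p j)
    {μ : ι → Measure (Ed d)} {f : Ed d → ℝ} (hf : ∀ j, Integrable f (μ j)) :
    ∫ x, f x ∂(mixture p μ) = ∑ j, p j * ∫ x, f x ∂(μ j) := by
  rw [mixture, integral_finsetSum_measure fun j _ => (hf j).smul_measure ENNReal.ofReal_ne_top]
  exact Finset.sum_congr rfl fun j _ => by
    rw [integral_smul_measure, ENNReal.toReal_ofReal (hp j), smul_eq_mul]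

lemma memPV_mixture {ι : Type*} [Fintype ι] {p : ι → ℝ} (hp : p ∈ stdSimplex ℝ ι)
    {V : Ed d → ℝ} {μ : ι → Measure (Ed d)} (hμ : ∀ j, memPV V (μ j)) :
    memPV V (mixture p μ) :=
  ⟨isProbabilityMeasure_mixture hp fun j => (hμ j).1, integrable_mixture p fun j => (hμ j).2⟩

/-- Probability measures whose `V`-moment is at most `c`. -/
def momentSet (V : Ed d → ℝ) (c : ℝ) : Set (ProbabilityMeasure (Ed d)) :=
  {P | ∫⁻ x, ENNReal.ofReal (V x) ∂(P : Measure (Ed d)) ≤ ENNReal.ofReal c}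

lemma mem_momentSet_iff {V : Ed d → ℝ} (hV : Continuous V) (hV0 : ∀ x, 0 ≤ V x) {c : ℝ}
    (hc : 0 ≤ c) {P : ProbabilityMeasure (Ed d)} :
    P ∈ momentSet V c ↔ memPV V (P : Measure (Ed d)) ∧ ∫ x, V x ∂(P : Measure (Ed d)) ≤ c := by
  have h0 : ∀ μ : Measure (Ed d), 0 ≤ᵐ[μ] V := fun μ => Eventually.of_forall hV0
  constructor
  · intro h
    have hi : Integrable V (P : Measure (Ed d)) := by
      refine ⟨hV.aestronglyMeasurable, ?_⟩
      rw [hasFiniteIntegral_iff_ofReal (h0 _)]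
      exact lt_of_le_of_lt h ENNReal.ofReal_lt_top
    refine ⟨⟨P.2, hi⟩, ?_⟩
    rw [integral_eq_lintegral_of_nonneg_ae (h0 _) hV.aestronglyMeasurable]
    exact ENNReal.toReal_le_of_le_ofReal hc h
  · rintro ⟨⟨-, hi⟩, h⟩
    rw [momentSet, mem_ofPred_eq, ← ofReal_integral_eq_lintegral_ofReal hi (h0 _)]
    exact ENNReal.ofReal_le_ofReal h

lemma isClosed_momentSet {V : Ed d → ℝ} (hV : Continuous V) (c : ℝ) :
    IsClosed (momentSet V c) := by
  let f : ℕ → BoundedContinuousFunction (Ed d) ℝ≥0 := fun n =>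
    BoundedContinuousFunction.mkOfBound
      ⟨fun x => min (Real.toNNReal (V x)) n, by fun_prop⟩ n fun x y => by
        simp only [ContinuousMap.coe_mk, NNReal.dist_eq, abs_le]
        have h1 : ∀ z, ((min (Real.toNNReal (V z)) n : ℝ≥0) : ℝ) ≤ n := fun z => by
          exact_mod_cast min_le_right _ _
        have h2 : ∀ z, 0 ≤ ((min (Real.toNNReal (V z)) n : ℝ≥0) : ℝ) := fun z => NNReal.coe_nonneg _
        constructor <;> linarith [h1 x, h1 y, h2 x, h2 y]
  have hf : ∀ n x, f n x = min (Real.toNNReal (V x)) n := fun n x => rfl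
  have h1 : momentSet V c = ⋂ n, {P : ProbabilityMeasure (Ed d) |
      ∫⁻ x, f n x ∂(P : Measure (Ed d)) ≤ ENNReal.ofReal c} := by
    ext P
    simp only [momentSet, mem_ofPred_eq, mem_iInter]
    constructor
    · intro h n
      refine (lintegral_mono fun x => ?_).trans h
      rw [hf]
      exact ENNReal.coe_le_coe.2 (min_le_left _ _)
    · intro h
      have h2 : ∀ x, ENNReal.ofReal (V x) = ⨆ n, (f n x : ℝ≥0∞) := by
        intro x
        refine le_antisymm ?_ (iSup_le fun n => by
          rw [hf]; exact ENNReal.coe_le_coe.2 (min_le_left _ _))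
        obtain ⟨n, hn⟩ := exists_nat_ge (Real.toNNReal (V x))
        refine le_iSup_of_le n ?_
        rw [hf, min_eq_left hn]
        rfl
      simp_rw [h2]
      rw [lintegral_iSup (fun n => by
        exact ENNReal.continuous_coe.measurable.comp (f n).continuous.measurable)]
      · exact iSup_le h
      · intro n m hnm x
        simp only [hf]
        exact_mod_cast min_le_min le_rfl (by exact_mod_cast hnm)
  rw [h1]
  exact isClosed_iInter fun n => isClosed_le
    (ProbabilityMeasure.continuous_lintegral_boundedContinuousFunction (f n)) continuous_const

lemma isCompact_momentSet {V : Ed d → ℝ} (hV : Continuous V)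
    (hVinf : Tendsto V (cocompact (Ed d)) atTop) (c : ℝ) :
    IsCompact (momentSet V c) := by
  have h := isCompact_closure_of_isTightMeasureSet (S := momentSet V c) ?_
  · rwa [(isClosed_momentSet hV c).closure_eq] at h
  rw [isTightMeasureSet_iff_exists_isCompact_measure_compl_le]
  intro ε hε
  obtain ⟨R, hR0, hR⟩ : ∃ R : ℝ, 0 < R ∧ ENNReal.ofReal c / ENNReal.ofReal R ≤ ε := by
    by_cases htop : ε = ⊤
    · exact ⟨1, one_pos, by simp [htop]⟩
    refine ⟨(|c| + 1) / ε.toReal, by have := ENNReal.toReal_pos hε.ne' htop; positivity, ?_⟩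
    have hpos := ENNReal.toReal_pos hε.ne' htop
    rw [← ENNReal.ofReal_div_of_pos (by positivity)]
    refine ENNReal.ofReal_le_of_le_toReal ?_
    rw [div_le_iff₀ (by positivity)]
    rw [mul_div_cancel₀ _ hpos.ne']
    linarith [le_abs_self c]
  have h1 : {x | R ≤ V x} ∈ cocompact (Ed d) := hVinf.eventually_ge_atTop R
  obtain ⟨K, hK, hKR⟩ := mem_cocompact.1 h1
  refine ⟨K, hK, ?_⟩
  rintro μ ⟨P, hP, rfl⟩
  have h2 : (Kᶜ : Set (Ed d)) ⊆ {x | ENNReal.ofReal R ≤ ENNReal.ofReal (V x)} := fun x hx =>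
    ENNReal.ofReal_le_ofReal (hKR hx)
  refine (measure_mono h2).trans ((meas_ge_le_lintegral_div
    (ENNReal.measurable_ofReal.comp hV.measurable).aemeasurable (by simpa using hR0)
    ENNReal.ofReal_ne_top).trans ((ENNReal.div_le_div_right hP _).trans hR))

lemma continuous_integral_of_hasCompactSupport {f : Ed d → ℝ} (hf : Continuous f)
    (hc : HasCompactSupport f) :
    Continuous fun P : ProbabilityMeasure (Ed d) => ∫ x, f x ∂(P : Measure (Ed d)) := by
  obtain ⟨C, hC⟩ := hf.bounded_above_of_compact_support hc
  exact ProbabilityMeasure.continuous_integral_boundedContinuousFunction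
    (BoundedContinuousFunction.ofNormedAddCommGroup f hf C hC)

/-! ### Linear stationary equations with continuous drift -/

lemma continuous_Lop {A : Ed d → Matrix (Fin d) (Fin d) ℝ}
    (hA : ∀ i j, Continuous fun x => A x i j) {B : Ed d → Ed d} (hB : Continuous B)
    {φ : Ed d → ℝ} (hφ : ContDiff ℝ 2 φ) : Continuous (Lop A B φ) :=
  (continuous_trHess hA hφ).add (hB.inner (continuous_gradient hφ))

lemma hasCompactSupport_Lop (A : Ed d → Matrix (Fin d) (Fin d) ℝ) (B : Ed d → Ed d)
    {φ : Ed d → ℝ} (hφ : HasCompactSupport φ) : HasCompactSupport (Lop A B φ) :=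
  HasCompactSupport.intro hφ fun x hx => by
    rw [Lop_eq, trHess_eq_zero_of_notMem_tsupport hx, gradient_eq_zero_of_notMem_tsupport hx]
    simp

lemma exists_sum_Lop_sub_nonpos {A : Ed d → Matrix (Fin d) (Fin d) ℝ} (B : Ed d → Ed d)
    (hAsymm : ∀ x, (A x).IsSymm)
    (hApos : ∀ x (v : Ed d), 0 ≤ ∑ i, ∑ j, A x i j * v i * v j)
    {V : Ed d → ℝ} (hV : ContDiff ℝ 2 V) (hVinf : Tendsto V (cocompact (Ed d)) atTop)
    {ι : Type*} [Fintype ι] {φ : ι → Ed d → ℝ} (hφ : ∀ i, IsTestFun (φ i)) (θ : ι → ℝ)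
    {k : ℝ} (hk : 0 ≤ k) :
    ∃ x, ∑ i, θ i * Lop A B (φ i) x - k * Lop A B V x ≤ 0 := by
  classical
  let w : Ed d → ℝ := ∑ i, θ i • φ i + (-k) • V
  have hs := fun x => Lop_sum A B Finset.univ θ (fun i => (hφ i).contDiff_two) x
  have hkV : ContDiff ℝ 2 ((-k) • V) := hV.const_smul (-k)
  have hw2 : ContDiff ℝ 2 w := (hs 0).1.add hkV
  have hsc : HasCompactSupport (∑ i, θ i • φ i) := by
    have : ∀ s : Finset ι, HasCompactSupport (∑ i ∈ s, θ i • φ i) := by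
      intro s
      induction s using Finset.induction_on with
      | empty => simpa using (HasCompactSupport.zero : HasCompactSupport (0 : Ed d → ℝ))
      | insert a s ha ih =>
        rw [Finset.sum_insert ha]
        exact ((hφ a).2.smul_left (f := fun _ => θ a)).add ih
    exact this _
  obtain ⟨x, hx⟩ : ∃ x, ∀ y, w y ≤ w x := by
    rcases hk.eq_or_lt with hk0 | hk0
    · refine Continuous.exists_forall_ge_of_hasCompactSupport hw2.continuous ?_
      simpa [w, ← hk0] using hsc
    · refine hw2.continuous.exists_forall_ge ?_
      obtain ⟨M, hM⟩ := (hs 0).1.continuous.bounded_above_of_compact_support hsc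
      refine tendsto_atBot_mono (fun y => ?_)
        (tendsto_atBot_add_const_left _ M (hVinf.const_mul_atTop_of_neg (neg_neg_of_pos hk0)))
      have := (le_abs_self _).trans (hM y)
      simp only [w, Pi.add_apply, Pi.smul_apply, smul_eq_mul] at this ⊢
      linarith
  refine ⟨x, ?_⟩
  have h := Lop_nonpos_of_isLocalMax B hAsymm hApos hw2
    (Eventually.of_forall hx : IsLocalMax w x)
  rw [Lop_add A B (hs x).1 hkV, (hs x).2, Lop_const_smul A B hV] at h
  linarith

lemma exists_clm_prod_apply_eq {ι : Type*} [Fintype ι] (f : ((ι → ℝ) × ℝ) →L[ℝ] ℝ) :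
    ∃ (θ : ι → ℝ) (k : ℝ), ∀ q s, f (q, s) = ∑ i, θ i * q i + k * s := by
  classical
  refine ⟨fun i => f (Pi.single i 1, 0), f (0, 1), fun q s => ?_⟩
  have h1 : ((q, s) : (ι → ℝ) × ℝ)
      = ∑ i, q i • ((Pi.single i 1, 0) : (ι → ℝ) × ℝ) + s • ((0, 1) : (ι → ℝ) × ℝ) := by
    ext i
    · simp [Prod.fst_sum, Finset.sum_apply, Pi.single_apply]
    · simp [Prod.snd_sum]
  rw [h1, map_add, map_sum, map_smul]
  simp only [map_smul, smul_eq_mul]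
  congr 1
  · exact Finset.sum_congr rfl fun i _ => mul_comm _ _
  · exact mul_comm _ _

/-- A convex set meeting every half-space `∑ θ i * q i + k * s ≤ 0` with `0 ≤ k` contains points
with small first component and almost nonpositive second component. -/
lemma exists_mem_small_of_convex {ι : Type*} [Fintype ι] {S : Set ((ι → ℝ) × ℝ)}
    (hS : Convex ℝ S)
    (h : ∀ (θ : ι → ℝ) (k : ℝ), 0 ≤ k → ∃ z ∈ S, ∑ i, θ i * z.1 i + k * z.2 ≤ 0)
    {ε : ℝ} (hε : 0 < ε) : ∃ z ∈ S, (∀ i, |z.1 i| < ε) ∧ z.2 < ε := by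
  classical
  by_contra hcon
  have hdisj : Disjoint (ball (0 : ι → ℝ) ε ×ˢ Iio ε) S := by
    rw [Set.disjoint_left]
    intro z hz1 hz
    refine hcon ⟨z, hz, fun i => ?_, hz1.2⟩
    have h5 : ‖z.1‖ < ε := mem_ball_zero_iff.1 hz1.1
    exact lt_of_le_of_lt (norm_le_pi_norm z.1 i) h5
  have hT : Convex ℝ (ball (0 : ι → ℝ) ε ×ˢ Iio ε) := (convex_ball _ _).prod (convex_Iio ε)
  have hTo : IsOpen (ball (0 : ι → ℝ) ε ×ˢ Iio ε) := isOpen_ball.prod isOpen_Iio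
  obtain ⟨f, u, hfT, hfS⟩ := geometric_hahn_banach_open hT hTo hS hdisj
  obtain ⟨θ, k, hf⟩ := exists_clm_prod_apply_eq f
  have hu : 0 < u := by
    have := hfT (0, 0) ⟨by simpa using hε, hε⟩
    rw [hf] at this
    simpa using this
  have hk : 0 ≤ k := by
    by_contra! hk
    have h1 := hfT (0, u / k) ⟨by simpa using hε, (div_neg_of_pos_of_neg hu hk).trans hε⟩
    rw [hf] at h1
    simp [mul_div_cancel₀ _ hk.ne] at h1
  obtain ⟨z, hz, hz0⟩ := h θ k hk
  have h1 : u ≤ f (z.1, z.2) := hfS z hz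
  rw [hf] at h1
  linarith

/-- There is no finite family of test functions separating the drift from stationarity. -/
lemma exists_forall_abs_integral_Lop_lt {A : Ed d → Matrix (Fin d) (Fin d) ℝ}
    (hA : ∀ i j, Continuous fun x => A x i j) (hAsymm : ∀ x, (A x).IsSymm)
    (hApos : ∀ x (v : Ed d), 0 ≤ ∑ i, ∑ j, A x i j * v i * v j)
    {V : Ed d → ℝ} (hV : ContDiff ℝ 2 V) (hVinf : Tendsto V (cocompact (Ed d)) atTop)
    {B : Ed d → Ed d} (hB : Continuous B) {C C₂ : ℝ}
    (hLyap : ∀ x, Lop A B V x ≤ C - C₂ * V x)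
    {ι : Type*} [Fintype ι] {φ : ι → Ed d → ℝ} (hφ : ∀ i, IsTestFun (φ i)) {ε : ℝ} (hε : 0 < ε) :
    ∃ P : Measure (Ed d), memPV V P ∧ (∀ i, |∫ x, Lop A B (φ i) x ∂P| < ε) ∧
      C₂ * ∫ x, V x ∂P - C < ε := by
  have hInt : ∀ i (P : Measure (Ed d)), IsProbabilityMeasure P → Integrable (Lop A B (φ i)) P :=
    fun i P hP => (continuous_Lop hA hB (hφ i).contDiff_two).integrable_of_hasCompactSupport
      (hasCompactSupport_Lop A B (hφ i).2)
  let S : Set ((ι → ℝ) × ℝ) := {z | ∃ P : Measure (Ed d), memPV V P ∧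
    (∀ i, z.1 i = ∫ x, Lop A B (φ i) x ∂P) ∧ z.2 = C₂ * ∫ x, V x ∂P - C}
  have hSconv : Convex ℝ S := by
    rintro ⟨q, s⟩ ⟨P, hP, h1, h2⟩ ⟨q', s'⟩ ⟨P', hP', h1', h2'⟩ a b ha hb hab
    let p : Bool → ℝ := fun t => cond t a b
    let m : Bool → Measure (Ed d) := fun t => cond t P P'
    have hp : p ∈ stdSimplex ℝ Bool :=
      ⟨by rintro (_ | _) <;> assumption, by simpa [p] using hab⟩
    have hm : ∀ t, memPV V (m t) := by rintro (_ | _) <;> assumption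
    refine ⟨mixture p m, memPV_mixture hp hm, fun i => ?_, ?_⟩
    · rw [integral_mixture hp.1 fun t => hInt i _ (hm t).1]
      simp only [Fintype.sum_bool, p, m, cond_true, cond_false]
      rw [← h1, ← h1']
      rfl
    · rw [integral_mixture hp.1 fun t => (hm t).2]
      simp only [Fintype.sum_bool, p, m, cond_true, cond_false]
      simp only [Prod.smul_mk, Prod.mk_add_mk, smul_eq_mul] at h2 h2' ⊢
      rw [h2, h2']
      linear_combination (-C) * hab
  obtain ⟨z, ⟨P, hP, h1, h2⟩, h3, h4⟩ := exists_mem_small_of_convex hSconv (fun θ k hk => by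
    obtain ⟨x, hx⟩ := exists_sum_Lop_sub_nonpos B hAsymm hApos hV hVinf hφ θ hk
    refine ⟨(fun i => Lop A B (φ i) x, C₂ * V x - C), ⟨Measure.dirac x,
      ⟨inferInstance, integrable_dirac (by simp)⟩, fun i => by rw [integral_dirac],
      by rw [integral_dirac]⟩, ?_⟩
    have := mul_le_mul_of_nonneg_left (hLyap x) hk
    simp only
    linarith) hε
  exact ⟨P, hP, fun i => h1 i ▸ h3 i, h2 ▸ h4⟩

/-- Existence of a stationary measure for a continuous drift under a Lyapunov condition. -/
lemma exists_stationary_of_continuous {A : Ed d → Matrix (Fin d) (Fin d) ℝ}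
    (hA : ∀ i j, Continuous fun x => A x i j) (hAsymm : ∀ x, (A x).IsSymm)
    (hApos : ∀ x (v : Ed d), 0 ≤ ∑ i, ∑ j, A x i j * v i * v j)
    {V : Ed d → ℝ} (hV : ContDiff ℝ 2 V) (hV0 : ∀ x, 0 ≤ V x)
    (hVinf : Tendsto V (cocompact (Ed d)) atTop)
    {B : Ed d → Ed d} (hB : Continuous B) {C C₂ : ℝ} (hC : 0 < C) (hC₂ : 0 < C₂)
    (hLyap : ∀ x, Lop A B V x ≤ C - C₂ * V x) :
    ∃ μ : Measure (Ed d), memPV V μ ∧ IsStationarySol A B μ ∧ ∫ x, V x ∂μ ≤ C / C₂ := by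
  classical
  let I := {φ : Ed d → ℝ // IsTestFun φ} × {ε : ℝ // 0 < ε}
  let F : I → Set (ProbabilityMeasure (Ed d)) := fun i =>
    {P | |∫ x, Lop A B i.1.1 x ∂(P : Measure (Ed d))| ≤ i.2.1} ∩ momentSet V ((C + i.2.1) / C₂)
  have hF : ∀ i, IsClosed (F i) := fun i =>
    (isClosed_le (continuous_integral_of_hasCompactSupport
      (continuous_Lop hA hB i.1.2.contDiff_two) (hasCompactSupport_Lop A B i.1.2.2)).abs
      continuous_const).inter (isClosed_momentSet hV.continuous _)
  have hne := (isCompact_momentSet hV.continuous hVinf ((C + 1) / C₂)).inter_iInter_nonempty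
    F hF fun s => by
      obtain ⟨δ, hδ, hδ1, hδs⟩ : ∃ δ : ℝ, 0 < δ ∧ δ ≤ 1 ∧ ∀ i ∈ s, δ ≤ i.2.1 := by
        induction s using Finset.induction_on with
        | empty => exact ⟨1, one_pos, le_rfl, by simp⟩
        | insert a s ha ih =>
          obtain ⟨δ, h1, h2, h3⟩ := ih
          refine ⟨min δ a.2.1, lt_min h1 a.2.2, (min_le_left _ _).trans h2, ?_⟩
          intro i hi
          rcases Finset.mem_insert.1 hi with rfl | hi
          · exact min_le_right _ _
          · exact (min_le_left _ _).trans (h3 i hi)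
      obtain ⟨P, hP, h1, h2⟩ := exists_forall_abs_integral_Lop_lt hA hAsymm hApos hV hVinf hB hLyap
        (φ := fun i : s => i.1.1.1) (fun i => i.1.1.2) hδ
      have hP2 : ∀ ε, δ ≤ ε → (⟨P, hP.1⟩ : ProbabilityMeasure (Ed d))
          ∈ momentSet V ((C + ε) / C₂) := fun ε hε => by
        refine (mem_momentSet_iff hV.continuous hV0
          (by have := hδ.le.trans hε; positivity)).2 ⟨hP, ?_⟩
        rw [le_div_iff₀ hC₂]
        change (∫ x, V x ∂P) * C₂ ≤ _
        linarith
      refine ⟨⟨P, hP.1⟩, hP2 1 hδ1, ?_⟩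
      exact mem_iInter₂.2 fun i hi => ⟨(h1 ⟨i, hi⟩).le.trans (hδs i hi), hP2 _ (hδs i hi)⟩
  obtain ⟨P, hP, hPF⟩ := hne
  rw [mem_iInter] at hPF
  have hzero : IsTestFun (0 : Ed d → ℝ) := ⟨contDiff_const, HasCompactSupport.zero⟩
  have hmem := fun (ε : ℝ) (hε : 0 < ε) => (mem_momentSet_iff hV.continuous hV0
    (by positivity : 0 ≤ (C + ε) / C₂)).1 (hPF (⟨0, hzero⟩, ⟨ε, hε⟩)).2
  refine ⟨P, (hmem 1 one_pos).1, fun φ hφ => ?_, ?_⟩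
  · by_contra h
    have h1 := (hPF (⟨φ, hφ⟩, ⟨|∫ x, Lop A B φ x ∂(P : Measure (Ed d))| / 2,
      by have := abs_pos.2 h; positivity⟩)).1
    have h2 := abs_pos.2 h
    simp only [mem_ofPred_eq] at h1
    linarith
  · refine le_of_forall_pos_le_add fun ε hε => ?_
    have := (hmem (ε * C₂) (by positivity)).2
    rwa [add_div, mul_div_cancel_right₀ _ hC₂.ne'] at this

/-! ### The inverse diffusion matrix and the smooth profile -/

lemma sum_sum_mul_eq_inner (M : Matrix (Fin d) (Fin d) ℝ) (v w : Ed d) :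
    ∑ i, ∑ j, M i j * v i * w j = ⟪v, Matrix.toEuclideanCLM (𝕜 := ℝ) M w⟫ := by
  rw [Matrix.inner_toEuclideanCLM]
  simp only [dotProduct, Matrix.mulVec, Finset.mul_sum]
  exact Finset.sum_congr rfl fun i _ => Finset.sum_congr rfl fun j _ => by ring

/-- The field of inverse matrices of a uniformly elliptic continuous matrix field. -/
lemma exists_inverse_field {A : Ed d → Matrix (Fin d) (Fin d) ℝ} {K : ℝ} (hK : 0 < K)
    (hA : ∀ i j, Continuous fun x => A x i j) (hAsymm : ∀ x, (A x).IsSymm)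
    (hAlow : ∀ x (v : Ed d), K⁻¹ * ‖v‖ ^ 2 ≤ ∑ i, ∑ j, A x i j * v i * v j)
    (hAup : ∀ x (v : Ed d), ∑ i, ∑ j, A x i j * v i * v j ≤ K * ‖v‖ ^ 2) :
    ∃ Q : Ed d → Ed d →L[ℝ] Ed d, Continuous Q ∧ (∀ y v w, ⟪Q y v, w⟫ = ⟪v, Q y w⟫) ∧
      (∀ y z, K⁻¹ * ‖z‖ ^ 2 ≤ ⟪Q y z, z⟫) ∧ (∀ y z, ‖Q y z‖ ≤ K * ‖z‖) ∧
      (∀ y z, ∑ i, ∑ j, A y i j * Q y z i * Q y z j = ⟪Q y z, z⟫) ∧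
      (∀ y, ∑ i, ∑ j, A y i j * ⟪Q y (EuclideanSpace.single i 1),
        (EuclideanSpace.single j 1 : Ed d)⟫ = d) := by
  have hdet : ∀ y, (A y).det ≠ 0 := by
    intro y h0
    obtain ⟨v, hv, hv0⟩ := Matrix.exists_mulVec_eq_zero_iff.2 h0
    have h1 := hAlow y (WithLp.toLp 2 v)
    rw [sum_sum_mul_eq_inner, Matrix.toEuclideanCLM_toLp, hv0] at h1
    have h2 : (WithLp.toLp 2 v : Ed d) ≠ 0 := by simpa using hv
    have h3 : 0 < ‖(WithLp.toLp 2 v : Ed d)‖ := norm_pos_iff.2 h2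
    have h4 : 0 < K⁻¹ * ‖(WithLp.toLp 2 v : Ed d)‖ ^ 2 := by positivity
    simp at h1
    linarith
  let M : Ed d → Ed d →L[ℝ] Ed d := fun y => Matrix.toEuclideanCLM (𝕜 := ℝ) (A y)
  let Q : Ed d → Ed d →L[ℝ] Ed d := fun y => Matrix.toEuclideanCLM (𝕜 := ℝ) (A y)⁻¹
  have hMQ : ∀ y z, M y (Q y z) = z := by
    intro y z
    have h1 : M y * Q y = 1 := by
      simp only [M, Q]
      rw [← map_mul, Matrix.mul_nonsing_inv _ (isUnit_iff_ne_zero.2 (hdet y)), map_one]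
    exact congrArg (fun f : Ed d →L[ℝ] Ed d => f z) h1
  have hsymm : ∀ (B : Matrix (Fin d) (Fin d) ℝ), B.IsSymm → ∀ v w : Ed d,
      ⟪Matrix.toEuclideanCLM (𝕜 := ℝ) B v, w⟫ = ⟪v, Matrix.toEuclideanCLM (𝕜 := ℝ) B w⟫ := by
    intro B hB v w
    rw [real_inner_comm, ← sum_sum_mul_eq_inner, ← sum_sum_mul_eq_inner, Finset.sum_comm]
    refine Finset.sum_congr rfl fun i _ => Finset.sum_congr rfl fun j _ => ?_
    rw [hB.apply i j]
    ring
  have hMs : ∀ y v w, ⟪M y v, w⟫ = ⟪v, M y w⟫ := fun y => hsymm _ (hAsymm y)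
  have hlow : ∀ y v, K⁻¹ * ‖v‖ ^ 2 ≤ ⟪v, M y v⟫ := fun y v =>
    (hAlow y v).trans_eq (sum_sum_mul_eq_inner _ _ _)
  have hup : ∀ y v, ⟪v, M y v⟫ ≤ K * ‖v‖ ^ 2 := fun y v =>
    (sum_sum_mul_eq_inner _ _ _).symm.trans_le (hAup y v)
  refine ⟨Q, ?_, fun y => hsymm _ (hAsymm y).inv, ?_, ?_, ?_, ?_⟩
  · have hAc : Continuous A := continuous_pi fun i => continuous_pi fun j => hA i j
    have h1 : Continuous fun y => (A y)⁻¹ := by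
      simp_rw [Matrix.inv_def, Ring.inverse_eq_inv']
      exact (hAc.matrix_det.inv₀ hdet).smul hAc.matrix_adjugate
    have h2 : Continuous (Matrix.toEuclideanCLM (𝕜 := ℝ) (n := Fin d)) :=
      LinearMap.continuous_of_finiteDimensional
        ({ toFun := Matrix.toEuclideanCLM (𝕜 := ℝ) (n := Fin d)
           map_add' := map_add _
           map_smul' := map_smul _ } : Matrix (Fin d) (Fin d) ℝ →ₗ[ℝ] Ed d →L[ℝ] Ed d)
    exact h2.comp h1
  · intro y z
    have h1 := hlow y (Q y z - K⁻¹ • z)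
    have h0 : 0 ≤ K⁻¹ * ‖Q y z - K⁻¹ • z‖ ^ 2 := by positivity
    have h2 := hup y z
    rw [map_sub, map_smul, hMQ, inner_sub_left, inner_sub_right, inner_sub_right,
      real_inner_smul_left, real_inner_smul_left, real_inner_smul_right, real_inner_smul_right,
      ← hMs, hMQ, real_inner_self_eq_norm_sq] at h1
    have h3 : K⁻¹ * (K⁻¹ * ⟪z, M y z⟫) ≤ K⁻¹ * ‖z‖ ^ 2 := by
      refine mul_le_mul_of_nonneg_left ?_ (by positivity)
      calc K⁻¹ * ⟪z, M y z⟫ ≤ K⁻¹ * (K * ‖z‖ ^ 2) :=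
            mul_le_mul_of_nonneg_left h2 (by positivity)
        _ = ‖z‖ ^ 2 := by rw [← mul_assoc, inv_mul_cancel₀ hK.ne', one_mul]
    linarith
  · intro y z
    have h1 := hlow y (Q y z)
    rw [hMQ] at h1
    have h2 := h1.trans (real_inner_le_norm _ _)
    rcases (norm_nonneg (Q y z)).eq_or_lt with h0 | h0
    · rw [← h0]; positivity
    · rw [inv_mul_le_iff₀ hK] at h2
      nlinarith
  · intro y z
    rw [sum_sum_mul_eq_inner]
    exact congrArg _ (hMQ y z)
  · intro y
    have h1 : ∀ i j, ⟪Q y (EuclideanSpace.single i 1), (EuclideanSpace.single j 1 : Ed d)⟫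
        = (A y)⁻¹ j i := by
      intro i j
      simp [Q, EuclideanSpace.inner_single_right, Matrix.ofLp_toEuclideanCLM]
    have h2 := congrArg Matrix.trace (Matrix.mul_nonsing_inv _ (isUnit_iff_ne_zero.2 (hdet y)))
    rw [Matrix.trace_one, Fintype.card_fin] at h2
    rw [← h2]
    simp only [h1, Matrix.trace, Matrix.diag, Matrix.mul_apply]

/-- A smooth bump profile `k` on the half-line together with a compactly supported primitive. -/
lemma exists_profile : ∃ Z k : ℝ → ℝ, ContDiff ℝ (⊤ : ℕ∞) Z ∧ ContDiff ℝ (⊤ : ℕ∞) k ∧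
    (∀ s, HasDerivAt Z (-k s) s) ∧ (∀ s, 0 ≤ k s) ∧ (∀ s, k s ≤ 1) ∧ (∀ s, 1 ≤ s → k s = 0) ∧
    (∀ s, 1 ≤ s → Z s = 0) ∧ (∀ s, 0 ≤ s → s ≤ 1 / 2 → k s = 1) := by
  let f : ContDiffBump (0 : ℝ) := ⟨1 / 2, 1, by norm_num, by norm_num⟩
  have hd : ∀ s, HasDerivAt (fun s => ∫ u in s..1, f u) (-f s) s := fun s =>
    intervalIntegral.integral_hasDerivAt_left (f.continuous.intervalIntegrable _ _)
      (f.continuous.stronglyMeasurableAtFilter _ _) f.continuous.continuousAt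
  have h0 : ∀ s, 1 ≤ s → f s = 0 := fun s hs => f.zero_of_le_dist (by
    rw [Real.dist_eq, sub_zero]; exact hs.trans (le_abs_self s))
  refine ⟨fun s => ∫ u in s..1, f u, f, ?_, f.contDiff, hd, fun s => f.nonneg, fun s => f.le_one,
    h0, fun s hs => ?_, fun s hs hs2 => f.one_of_mem_closedBall ?_⟩
  · rw [contDiff_infty_iff_deriv]
    refine ⟨fun s => (hd s).differentiableAt, ?_⟩
    rw [show deriv (fun s => ∫ u in s..1, f u) = fun s => -f s from funext fun s => (hd s).deriv]
    exact f.contDiff.neg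
  · simp only []
    rw [intervalIntegral.integral_symm, neg_eq_zero]
    refine (intervalIntegral.integral_congr fun u hu => ?_).trans intervalIntegral.integral_zero
    rw [uIcc_of_le hs] at hu
    exact h0 u hu.1
  · rw [mem_closedBall, Real.dist_eq, sub_zero, abs_of_nonneg hs]
    exact hs2

/-! ### The frozen-coefficient parametrix -/

/-- The inverse matrix field and the profile used to build the parametrix of `trace (A D²)`. -/
structure ParametrixData (A : Ed d → Matrix (Fin d) (Fin d) ℝ) where
  K : ℝ
  K₂ : ℝ
  D : ℝ
  Q : Ed d → Ed d →L[ℝ] Ed d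
  Z : ℝ → ℝ
  k : ℝ → ℝ
  K_pos : 0 < K
  K₂_pos : 0 < K₂
  lipschitz : ∀ x y i j, |A x i j - A y i j| ≤ K₂ * ‖x - y‖
  continuous_Q : Continuous Q
  Q_symm : ∀ y v w, ⟪Q y v, w⟫ = ⟪v, Q y w⟫
  Q_low : ∀ y z, K⁻¹ * ‖z‖ ^ 2 ≤ ⟪Q y z, z⟫
  Q_bound : ∀ y z, ‖Q y z‖ ≤ K * ‖z‖
  sum_Q_mul_Q : ∀ y z, ∑ i, ∑ j, A y i j * Q y z i * Q y z j = ⟪Q y z, z⟫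
  sum_Q : ∀ y, ∑ i, ∑ j, A y i j * ⟪Q y (EuclideanSpace.single i 1),
    (EuclideanSpace.single j 1 : Ed d)⟫ = d
  contDiff_Z : ContDiff ℝ (⊤ : ℕ∞) Z
  contDiff_k : ContDiff ℝ (⊤ : ℕ∞) k
  hasDerivAt_Z : ∀ s, HasDerivAt Z (-k s) s
  k_nonneg : ∀ s, 0 ≤ k s
  k_le_one : ∀ s, k s ≤ 1
  k_eq_zero : ∀ s, 1 ≤ s → k s = 0
  Z_eq_zero : ∀ s, 1 ≤ s → Z s = 0
  k_eq_one : ∀ s, 0 ≤ s → s ≤ 1 / 2 → k s = 1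
  deriv_k_le : ∀ s, 0 ≤ s → |deriv k s| ≤ D

lemma nonempty_parametrixData {A : Ed d → Matrix (Fin d) (Fin d) ℝ} {K K₂ : ℝ} (hK : 0 < K)
    (hK₂ : 0 < K₂) (hAsymm : ∀ x, (A x).IsSymm)
    (hAlow : ∀ x (v : Ed d), K⁻¹ * ‖v‖ ^ 2 ≤ ∑ i, ∑ j, A x i j * v i * v j)
    (hAup : ∀ x (v : Ed d), ∑ i, ∑ j, A x i j * v i * v j ≤ K * ‖v‖ ^ 2)
    (hALip : ∀ x y i j, |A x i j - A y i j| ≤ K₂ * ‖x - y‖)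
    (hA : ∀ i j, Continuous fun x => A x i j) : Nonempty (ParametrixData A) := by
  obtain ⟨Q, hQ1, hQ2, hQ3, hQ4, hQ5, hQ6⟩ := exists_inverse_field hK hA hAsymm hAlow hAup
  obtain ⟨Z, k, h1, h2, h3, h4, h5, h6, h7, h8⟩ := exists_profile
  have hdk : Continuous (deriv k) := h2.continuous_deriv (by simp)
  obtain ⟨D, hD⟩ := (isCompact_Icc (a := (0 : ℝ)) (b := 1)).exists_bound_of_continuousOn
    hdk.continuousOn
  have hD0 : 0 ≤ D := (norm_nonneg _).trans (hD 0 (by simp))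
  refine ⟨⟨K, K₂, D, Q, Z, k, hK, hK₂, hALip, hQ1, hQ2, hQ3, hQ4, hQ5, hQ6, h1, h2, h3, h4, h5,
    h6, h7, h8, fun s hs => ?_⟩⟩
  rcases le_or_gt s 1 with hs1 | hs1
  · exact hD s ⟨hs, hs1⟩
  · have : k =ᶠ[𝓝 s] fun _ => 0 := by
      filter_upwards [lt_mem_nhds hs1] with u hu
      exact h6 u hu.le
    rw [this.deriv_eq]
    simpa using hD0

namespace ParametrixData

variable {A : Ed d → Matrix (Fin d) (Fin d) ℝ} (p : ParametrixData A)

/-- The quadratic form of the inverse matrix frozen at `y`. -/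
def quad (y z : Ed d) : ℝ := ⟪p.Q y z, z⟫

/-- The parametrix kernel at inverse scale `l`, with coefficients frozen at `y`. -/
def ker (l : ℝ) (y x : Ed d) : ℝ := l ^ d * p.k (l ^ 2 * p.quad y (x - y))

/-- A compactly supported potential of the scale derivative of `ker`. -/
def pot (l : ℝ) (y x : Ed d) : ℝ := l ^ d * p.Z (l ^ 2 * p.quad y (x - y))

/-- The range of the kernel at unit scale. -/
def rad : ℝ := p.K + 1

lemma rad_pos : 0 < p.rad := by have := p.K_pos; unfold rad; linarith

lemma D_nonneg : 0 ≤ p.D := (abs_nonneg _).trans (p.deriv_k_le 0 le_rfl)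

lemma quad_nonneg (y z : Ed d) : 0 ≤ p.quad y z :=
  le_trans (by have := p.K_pos; positivity) (p.Q_low y z)

lemma continuous_quad : Continuous fun w : Ed d × Ed d => p.quad w.1 w.2 :=
  ((p.continuous_Q.comp continuous_fst).clm_apply continuous_snd).inner continuous_snd

lemma continuous_ker (l : ℝ) : Continuous fun w : Ed d × Ed d => p.ker l w.1 w.2 :=
  continuous_const.mul (p.contDiff_k.continuous.comp (continuous_const.mul
    (p.continuous_quad.comp (continuous_fst.prodMk (continuous_snd.sub continuous_fst)))))

lemma ker_nonneg {l : ℝ} (hl : 0 ≤ l) (y x : Ed d) : 0 ≤ p.ker l y x :=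
  mul_nonneg (pow_nonneg hl d) (p.k_nonneg _)

lemma ker_le {l : ℝ} (hl : 0 ≤ l) (y x : Ed d) : p.ker l y x ≤ l ^ d :=
  mul_le_of_le_one_right (pow_nonneg hl d) (p.k_le_one _)

lemma one_le_mul_quad {l : ℝ} (hl : 0 < l) {y x : Ed d} (hx : x ∉ closedBall y (p.rad / l)) :
    1 ≤ l ^ 2 * p.quad y (x - y) := by
  have hK := p.K_pos
  have h1 : p.rad / l < ‖x - y‖ := by simpa [dist_eq_norm] using hx
  rw [div_lt_iff₀ hl] at h1
  have h2 : p.rad ^ 2 ≤ (‖x - y‖ * l) ^ 2 := pow_le_pow_left₀ p.rad_pos.le h1.le 2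
  have h3 : p.K ≤ p.rad ^ 2 := by unfold rad; nlinarith
  calc (1 : ℝ) = p.K⁻¹ * p.K := (inv_mul_cancel₀ hK.ne').symm
    _ ≤ p.K⁻¹ * (‖x - y‖ * l) ^ 2 := by gcongr; exact h3.trans h2
    _ = l ^ 2 * (p.K⁻¹ * ‖x - y‖ ^ 2) := by ring
    _ ≤ l ^ 2 * p.quad y (x - y) := by gcongr; exact p.Q_low y _

lemma ker_eq_zero {l : ℝ} (hl : 0 < l) {y x : Ed d} (hx : x ∉ closedBall y (p.rad / l)) :
    p.ker l y x = 0 := by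
  rw [ker, p.k_eq_zero _ (p.one_le_mul_quad hl hx), mul_zero]

lemma hasFDerivAt_quad (y x : Ed d) :
    HasFDerivAt (fun x => p.quad y (x - y)) ((2 : ℝ) • innerSL ℝ (p.Q y (x - y))) x := by
  have h1 : HasFDerivAt (fun x : Ed d => x - y) (ContinuousLinearMap.id ℝ (Ed d)) x :=
    (hasFDerivAt_id x).sub_const y
  have h2 : HasFDerivAt (fun x : Ed d => p.Q y (x - y)) (p.Q y) x :=
    (p.Q y).hasFDerivAt.comp x h1
  refine (h2.inner ℝ h1).congr_fderiv ?_
  ext v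
  have h3 : ⟪p.Q y (x - y), v⟫ + ⟪p.Q y v, x - y⟫ = 2 * ⟪p.Q y (x - y), v⟫ := by
    rw [p.Q_symm y v, real_inner_comm v, two_mul]
  exact h3

lemma hasFDerivAt_pot (l : ℝ) (y x : Ed d) :
    HasFDerivAt (p.pot l y)
      ((-2 * l ^ (d + 2) * p.k (l ^ 2 * p.quad y (x - y))) • innerSL ℝ (p.Q y (x - y))) x := by
  have h1 := ((p.hasDerivAt_Z (l ^ 2 * p.quad y (x - y))).comp_hasFDerivAt x
    ((p.hasFDerivAt_quad y x).const_mul (l ^ 2))).const_mul (l ^ d)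
  refine h1.congr_fderiv ?_
  simp only [smul_smul]
  congr 1
  ring

lemma fderiv_pot (l : ℝ) (y : Ed d) :
    fderiv ℝ (p.pot l y) = fun x => (-2 * l ^ (d + 2) * p.k (l ^ 2 * p.quad y (x - y))) •
      innerSL ℝ (p.Q y (x - y)) :=
  funext fun x => (p.hasFDerivAt_pot l y x).fderiv

lemma fderiv_fderiv_pot (l : ℝ) (y x v w : Ed d) :
    fderiv ℝ (fderiv ℝ (p.pot l y)) x v w =
      -2 * l ^ (d + 2) * (deriv p.k (l ^ 2 * p.quad y (x - y)) * (l ^ 2 * 2) *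
        ⟪p.Q y (x - y), v⟫ * ⟪p.Q y (x - y), w⟫ + p.k (l ^ 2 * p.quad y (x - y)) *
        ⟪p.Q y v, w⟫) := by
  have h1 : HasFDerivAt (fun x : Ed d => x - y) (ContinuousLinearMap.id ℝ (Ed d)) x :=
    (hasFDerivAt_id x).sub_const y
  have h2 : HasFDerivAt (fun x : Ed d => innerSL ℝ (p.Q y (x - y))) ((innerSL ℝ).comp (p.Q y)) x :=
    ((innerSL ℝ).comp (p.Q y)).hasFDerivAt.comp x h1
  have hk : HasDerivAt p.k (deriv p.k (l ^ 2 * p.quad y (x - y))) (l ^ 2 * p.quad y (x - y)) :=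
    (p.contDiff_k.differentiable (by simp) _).hasDerivAt
  have h3 := ((hk.comp_hasFDerivAt x
    ((p.hasFDerivAt_quad y x).const_mul (l ^ 2))).const_mul (-2 * l ^ (d + 2))).smul h2
  rw [fderiv_pot]
  refine (congrArg (fun f : Ed d →L[ℝ] Ed d →L[ℝ] ℝ => f v w) h3.fderiv).trans ?_
  simp only [Function.comp_apply, add_apply, smul_apply, ContinuousLinearMap.comp_apply,
    ContinuousLinearMap.smulRight_apply, innerSL_apply_apply, smul_eq_mul]
  ring

lemma contDiff_pot (l : ℝ) (y : Ed d) : ContDiff ℝ (⊤ : ℕ∞) (p.pot l y) := by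
  have h1 : ContDiff ℝ (⊤ : ℕ∞) fun x : Ed d => p.quad y (x - y) := by
    unfold quad
    have h2 : ContDiff ℝ (⊤ : ℕ∞) fun x : Ed d => x - y := contDiff_id.sub contDiff_const
    exact ((p.Q y).contDiff.comp h2).inner ℝ h2
  exact contDiff_const.mul (p.contDiff_Z.comp (contDiff_const.mul h1))

lemma tsupport_pot_subset {l : ℝ} (hl : 0 < l) (y : Ed d) :
    tsupport (p.pot l y) ⊆ closedBall y (p.rad / l) := by
  refine closure_minimal (fun x hx => ?_) isClosed_closedBall
  by_contra h
  exact hx (by rw [pot, p.Z_eq_zero _ (p.one_le_mul_quad hl h), mul_zero])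

lemma isTestFun_pot {l : ℝ} (hl : 0 < l) (y : Ed d) : IsTestFun (p.pot l y) :=
  ⟨p.contDiff_pot l y, HasCompactSupport.of_support_subset_isCompact
    (isCompact_closedBall y (p.rad / l)) (subset_tsupport _ |>.trans (p.tsupport_pot_subset hl y))⟩

/-- The scale derivative of the kernel. -/
def kerDeriv (l : ℝ) (y x : Ed d) : ℝ :=
  d * l ^ (d - 1) * p.k (l ^ 2 * p.quad y (x - y)) +
    l ^ d * (deriv p.k (l ^ 2 * p.quad y (x - y)) * (2 * l * p.quad y (x - y)))

lemma hasDerivAt_ker (l : ℝ) (y x : Ed d) :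
    HasDerivAt (fun l => p.ker l y x) (p.kerDeriv l y x) l := by
  have hk : HasDerivAt p.k (deriv p.k (l ^ 2 * p.quad y (x - y))) (l ^ 2 * p.quad y (x - y)) :=
    (p.contDiff_k.differentiable (by simp) _).hasDerivAt
  have h1 : HasDerivAt (fun l : ℝ => l ^ 2 * p.quad y (x - y)) (2 * l * p.quad y (x - y)) l := by
    simpa using (hasDerivAt_pow 2 l).mul_const (p.quad y (x - y))
  exact (hasDerivAt_pow d l).mul (hk.comp l h1)

lemma sum_mul_hess2_pot (l : ℝ) (y x : Ed d) :
    ∑ i, ∑ j, A y i j * hess2 (p.pot l y) x i j = -2 * l ^ 3 * p.kerDeriv l y x := by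
  have h1 : ∀ (v : Ed d) i, ⟪v, EuclideanSpace.single i (1 : ℝ)⟫ = v i := fun v i => by
    simp [EuclideanSpace.inner_single_right]
  have h2 : ∑ i, ∑ j, A y i j * hess2 (p.pot l y) x i j =
      -2 * l ^ (d + 2) * (deriv p.k (l ^ 2 * p.quad y (x - y)) * (l ^ 2 * 2) *
        (∑ i, ∑ j, A y i j * p.Q y (x - y) i * p.Q y (x - y) j) +
        p.k (l ^ 2 * p.quad y (x - y)) * (∑ i, ∑ j, A y i j *
          ⟪p.Q y (EuclideanSpace.single i 1), (EuclideanSpace.single j 1 : Ed d)⟫)) := by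
    simp only [Finset.mul_sum, ← Finset.sum_add_distrib]
    refine Finset.sum_congr rfl fun i _ => Finset.sum_congr rfl fun j _ => ?_
    rw [hess2_eq, fderiv_fderiv_pot, h1 (p.Q y (x - y)), h1 (p.Q y (x - y))]
    ring
  rw [h2, p.sum_Q_mul_Q, p.sum_Q, kerDeriv]
  have h3 : l ^ 3 * (d * l ^ (d - 1)) = l ^ (d + 2) * d := by
    rcases Nat.eq_zero_or_pos d with h0 | h0
    · subst h0; simp
    · obtain ⟨n, rfl⟩ := Nat.exists_eq_succ_of_ne_zero h0.ne'
      simp only [Nat.succ_eq_add_one, Nat.add_sub_cancel]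
      ring
  have h4 : ⟪p.Q y (x - y), x - y⟫ = p.quad y (x - y) := rfl
  rw [h4]
  linear_combination (-2 * p.k (l ^ 2 * p.quad y (x - y))) * (-h3)

end ParametrixData

/-! ### Scale estimates for measures with bounded drift -/

/-- Measures solving, in a weak sense, a stationary equation whose drift is locally bounded by
`N'`. -/
def DriftBounded (A : Ed d → Matrix (Fin d) (Fin d) ℝ) (N' : ℝ → ℝ) (μ : Measure (Ed d)) : Prop :=
  ∀ R : ℝ, 0 < R → ∀ φ : Ed d → ℝ, IsTestFun φ → tsupport φ ⊆ closedBall 0 R →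
    |∫ x, trHess A φ x ∂μ| ≤ N' R * ∫ x, ‖gradient φ x‖ ∂μ

lemma abs_integral_le_of_eq_zero_off {μ : Measure (Ed d)} [IsFiniteMeasure μ] {f : Ed d → ℝ}
    {S : Set (Ed d)} {C : ℝ} (h0 : ∀ x, x ∉ S → f x = 0)
    (hC : ∀ x ∈ S, |f x| ≤ C) : |∫ x, f x ∂μ| ≤ C * μ.real S := by
  rw [← setIntegral_eq_integral_of_forall_compl_eq_zero h0]
  have h := norm_setIntegral_le_of_norm_le_const (μ := μ) (f := f) (s := S) (C := C)
    (measure_lt_top _ _) (fun x hx => by rw [Real.norm_eq_abs]; exact hC x hx)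
  rwa [Real.norm_eq_abs] at h

namespace ParametrixData

lemma continuous_coeff {A : Ed d → Matrix (Fin d) (Fin d) ℝ} (p : ParametrixData A) (i j : Fin d) : Continuous fun x => A x i j := by
  have : LipschitzWith p.K₂.toNNReal fun x => A x i j := by
    refine LipschitzWith.of_dist_le_mul fun x y => ?_
    rw [Real.dist_eq, dist_eq_norm, Real.coe_toNNReal _ p.K₂_pos.le]
    exact p.lipschitz x y i j
  exact this.continuous

variable {A : Ed d → Matrix (Fin d) (Fin d) ℝ} (p : ParametrixData A)

/-- The constant in the Hessian bound of `pot`. -/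
def hessConst : ℝ := 2 * (p.D * 2 * p.K ^ 2 * p.rad ^ 2 + p.K)

lemma hessConst_nonneg : 0 ≤ p.hessConst := by
  have := p.K_pos; have := p.D_nonneg; unfold hessConst; positivity

lemma hess2_pot_eq_zero {l : ℝ} (hl : 0 < l) {y x : Ed d} (hx : x ∉ closedBall y (p.rad / l))
    (i j : Fin d) : hess2 (p.pot l y) x i j = 0 := by
  have h1 : fderiv ℝ (fderiv ℝ (p.pot l y)) x = 0 := by
    by_contra h
    exact hx (p.tsupport_pot_subset hl y
      (tsupport_fderiv_subset ℝ (support_fderiv_subset ℝ h)))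
  simp [hess2_eq, h1]

lemma norm_Q_sub_le {l : ℝ} (hl : 0 < l) {y x : Ed d} (hx : x ∈ closedBall y (p.rad / l)) :
    l * ‖p.Q y (x - y)‖ ≤ p.K * p.rad := by
  have h1 : ‖x - y‖ ≤ p.rad / l := by simpa [dist_eq_norm] using hx
  rw [le_div_iff₀ hl] at h1
  have := p.K_pos
  calc l * ‖p.Q y (x - y)‖ ≤ l * (p.K * ‖x - y‖) := by gcongr; exact p.Q_bound _ _
    _ = p.K * (‖x - y‖ * l) := by ring
    _ ≤ p.K * p.rad := by gcongr

lemma abs_hess2_pot_le {l : ℝ} (hl : 0 < l) (y x : Ed d) (i j : Fin d) :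
    |hess2 (p.pot l y) x i j| ≤ p.hessConst * l ^ (d + 2) := by
  have hK := p.K_pos
  have hD := p.D_nonneg
  by_cases hx : x ∈ closedBall y (p.rad / l)
  swap
  · rw [p.hess2_pot_eq_zero hl hx, abs_zero]
    have := p.hessConst_nonneg
    positivity
  have h1 : ∀ (v : Ed d) i, |⟪v, (EuclideanSpace.single i (1 : ℝ) : Ed d)⟫| ≤ ‖v‖ := fun v i =>
    (abs_real_inner_le_norm _ _).trans_eq (by simp)
  have h2 := p.norm_Q_sub_le hl hx
  have h3 : |⟪p.Q y (EuclideanSpace.single i 1), (EuclideanSpace.single j (1 : ℝ) : Ed d)⟫| ≤ p.K :=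
    (h1 _ _).trans ((p.Q_bound _ _).trans_eq (by simp))
  rw [hess2_eq, fderiv_fderiv_pot, abs_mul, abs_mul, abs_neg, abs_two, abs_of_pos (pow_pos hl _)]
  have h4 : ∀ m, l * |⟪p.Q y (x - y), (EuclideanSpace.single m (1 : ℝ) : Ed d)⟫| ≤ p.K * p.rad :=
    fun m => (mul_le_mul_of_nonneg_left (h1 _ m) hl.le).trans h2
  have h5 : |deriv p.k (l ^ 2 * p.quad y (x - y)) * (l ^ 2 * 2) *
        ⟪p.Q y (x - y), (EuclideanSpace.single i (1 : ℝ) : Ed d)⟫ *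
        ⟪p.Q y (x - y), (EuclideanSpace.single j (1 : ℝ) : Ed d)⟫| ≤
      p.D * 2 * p.K ^ 2 * p.rad ^ 2 := by
    rw [abs_mul, abs_mul, abs_mul, abs_mul, abs_two, abs_of_pos (pow_pos hl _)]
    have h6 := mul_le_mul (h4 i) (h4 j) (by positivity) (mul_nonneg hK.le p.rad_pos.le)
    have h7 := p.deriv_k_le (l ^ 2 * p.quad y (x - y))
      (mul_nonneg (sq_nonneg l) (p.quad_nonneg _ _))
    have h8 := mul_le_mul h7 h6 (by positivity) hD
    nlinarith
  have h6 : |p.k (l ^ 2 * p.quad y (x - y)) * ⟪p.Q y (EuclideanSpace.single i 1),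
      (EuclideanSpace.single j (1 : ℝ) : Ed d)⟫| ≤ p.K := by
    rw [abs_mul, abs_of_nonneg (p.k_nonneg _)]
    exact (mul_le_of_le_one_left (abs_nonneg _) (p.k_le_one _)).trans h3
  calc _ ≤ 2 * l ^ (d + 2) * (p.D * 2 * p.K ^ 2 * p.rad ^ 2 + p.K) :=
        mul_le_mul_of_nonneg_left ((abs_add_le _ _).trans (add_le_add h5 h6)) (by positivity)
    _ = _ := by unfold hessConst; ring

lemma norm_gradient_pot_le {l : ℝ} (hl : 0 < l) {y x : Ed d}
    (hx : x ∈ closedBall y (p.rad / l)) :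
    ‖gradient (p.pot l y) x‖ ≤ 2 * p.K * p.rad * l ^ (d + 1) := by
  have h2 := p.norm_Q_sub_le hl hx
  rw [norm_gradient, fderiv_pot, norm_smul, innerSL_apply_norm, Real.norm_eq_abs, abs_mul, abs_mul,
    abs_neg, abs_two, abs_of_pos (pow_pos hl _), abs_of_nonneg (p.k_nonneg _)]
  have h3 := p.k_le_one (l ^ 2 * p.quad y (x - y))
  calc 2 * l ^ (d + 2) * p.k (l ^ 2 * p.quad y (x - y)) * ‖p.Q y (x - y)‖
      ≤ 2 * l ^ (d + 2) * 1 * ‖p.Q y (x - y)‖ := by gcongr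
    _ = 2 * l ^ (d + 1) * (l * ‖p.Q y (x - y)‖) := by ring
    _ ≤ 2 * l ^ (d + 1) * (p.K * p.rad) := by gcongr
    _ = _ := by ring

/-- The constant in the scale estimate. -/
def scaleConst (N' : ℝ → ℝ) (R : ℝ) : ℝ :=
  (d ^ 2 * p.K₂ * p.rad * p.hessConst + N' (R + p.rad) * (2 * p.K * p.rad))

lemma scaleConst_nonneg {N' : ℝ → ℝ} (hN' : ∀ R, 0 ≤ N' R) (R : ℝ) : 0 ≤ p.scaleConst N' R := by
  have := p.K_pos; have := p.K₂_pos; have := p.rad_pos; have := p.hessConst_nonneg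
  have := hN' (R + p.rad)
  unfold scaleConst; positivity

lemma abs_integral_kerDeriv_le {N' : ℝ → ℝ} (hN' : ∀ R, 0 ≤ N' R) {μ : Measure (Ed d)}
    [IsProbabilityMeasure μ] (hμ : DriftBounded A N' μ) {R : ℝ} (hR : 0 < R) {y : Ed d}
    (hy : ‖y‖ ≤ R) {l : ℝ} (hl : 1 ≤ l) :
    2 * l ^ 3 * |∫ x, p.kerDeriv l y x ∂μ| ≤
      p.scaleConst N' R * l ^ (d + 1) * μ.real (closedBall y (p.rad / l)) := by
  have hl0 : 0 < l := by linarith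
  have hK := p.K_pos
  have hK₂ := p.K₂_pos
  have hrad := p.rad_pos
  have hH := p.hessConst_nonneg
  have htest := p.isTestFun_pot hl0 y
  have hhc := fun i j => continuous_hess2 htest.contDiff_two i j
  let E : Ed d → ℝ := fun x => ∑ i, ∑ j, (A y i j - A x i j) * hess2 (p.pot l y) x i j
  have hE0 : ∀ x, x ∉ closedBall y (p.rad / l) → E x = 0 := fun x hx => by
    simp [E, p.hess2_pot_eq_zero hl0 hx]
  have hEc : Continuous E := continuous_finsetSum _ fun i _ => continuous_finsetSum _ fun j _ =>
    (continuous_const.sub (p.continuous_coeff i j)).mul (hhc i j)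
  have hEi : Integrable E μ := hEc.integrable_of_hasCompactSupport
    (HasCompactSupport.intro (isCompact_closedBall _ _) hE0)
  have hTi : Integrable (trHess A (p.pot l y)) μ :=
    (continuous_trHess p.continuous_coeff htest.contDiff_two).integrable_of_hasCompactSupport
      (hasCompactSupport_trHess htest.2)
  have hsum : ∫ x, -2 * l ^ 3 * p.kerDeriv l y x ∂μ =
      ∫ x, E x ∂μ + ∫ x, trHess A (p.pot l y) x ∂μ := by
    rw [← integral_add hEi hTi]
    refine integral_congr_ae (Eventually.of_forall fun x => ?_)
    simp only [← p.sum_mul_hess2_pot, E, trHess, ← Finset.sum_add_distrib]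
    exact Finset.sum_congr rfl fun i _ => Finset.sum_congr rfl fun j _ => by ring
  have h1 : |∫ x, E x ∂μ| ≤ (d ^ 2 * p.K₂ * p.rad * p.hessConst * l ^ (d + 1)) *
      μ.real (closedBall y (p.rad / l)) := by
    refine abs_integral_le_of_eq_zero_off hE0 fun x hx => ?_
    have hxy : ‖y - x‖ ≤ p.rad / l := by rw [← dist_eq_norm, dist_comm]; exact hx
    have hij : ∀ i j, |(A y i j - A x i j) * hess2 (p.pot l y) x i j| ≤
        p.K₂ * (p.rad / l) * (p.hessConst * l ^ (d + 2)) := by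
      intro i j
      rw [abs_mul]
      refine mul_le_mul ((p.lipschitz y x i j).trans ?_) (p.abs_hess2_pot_le hl0 y x i j)
        (abs_nonneg _) (by positivity)
      gcongr
    calc |E x| ≤ ∑ i : Fin d, ∑ j : Fin d, p.K₂ * (p.rad / l) * (p.hessConst * l ^ (d + 2)) :=
          (Finset.abs_sum_le_sum_abs _ _).trans (Finset.sum_le_sum fun i _ =>
            (Finset.abs_sum_le_sum_abs _ _).trans (Finset.sum_le_sum fun j _ => hij i j))
      _ = _ := by
          simp only [Finset.sum_const, Finset.card_univ, Fintype.card_fin, nsmul_eq_mul]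
          field_simp
          ring
  have h2 : |∫ x, trHess A (p.pot l y) x ∂μ| ≤ N' (R + p.rad) *
      (2 * p.K * p.rad * l ^ (d + 1) * μ.real (closedBall y (p.rad / l))) := by
    refine (hμ (R + p.rad) (by positivity) _ htest ?_).trans
      (mul_le_mul_of_nonneg_left ?_ (hN' _))
    · refine (p.tsupport_pot_subset hl0 y).trans fun x hx => ?_
      rw [mem_closedBall_zero_iff]
      have h3 : ‖x - y‖ ≤ p.rad / l := by simpa [dist_eq_norm] using hx
      have h4 : p.rad / l ≤ p.rad := div_le_self hrad.le hl
      calc ‖x‖ = ‖y + (x - y)‖ := by rw [add_sub_cancel]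
        _ ≤ ‖y‖ + ‖x - y‖ := norm_add_le _ _
        _ ≤ R + p.rad := by linarith
    · refine (le_abs_self _).trans (abs_integral_le_of_eq_zero_off (fun x hx => ?_) fun x hx => ?_)
      · rw [gradient_eq_zero_of_notMem_tsupport fun h => hx (p.tsupport_pot_subset hl0 y h),
          norm_zero]
      · rw [abs_norm]
        exact p.norm_gradient_pot_le hl0 hx
  rw [integral_const_mul] at hsum
  have h3 : 2 * l ^ 3 * |∫ x, p.kerDeriv l y x ∂μ|
      = |∫ x, E x ∂μ + ∫ x, trHess A (p.pot l y) x ∂μ| := by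
    rw [← hsum, abs_mul, abs_mul, abs_neg, abs_two, abs_of_pos (pow_pos hl0 3)]
  rw [h3]
  refine (abs_add_le _ _).trans ((add_le_add h1 h2).trans_eq ?_)
  unfold scaleConst
  ring

lemma continuous_ker_right (l : ℝ) (y : Ed d) : Continuous (p.ker l y) := by
  have h1 : Continuous fun x : Ed d => p.quad y (x - y) :=
    ((p.Q y).continuous.comp (continuous_id.sub continuous_const)).inner
      (continuous_id.sub continuous_const)
  have h2 : Continuous fun x => l ^ 2 * p.quad y (x - y) := continuous_const.mul h1
  exact continuous_const.mul (p.contDiff_k.continuous.comp h2)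

lemma integrable_ker {l : ℝ} (hl : 0 < l) (y : Ed d) (μ : Measure (Ed d))
    [IsFiniteMeasureOnCompacts μ] : Integrable (p.ker l y) μ :=
  (p.continuous_ker_right l y).integrable_of_hasCompactSupport
    (HasCompactSupport.intro (isCompact_closedBall y (p.rad / l)) fun _ hx => p.ker_eq_zero hl hx)

/-- The parametrix regularization of a measure. -/
def reg (μ : Measure (Ed d)) (l : ℝ) (y : Ed d) : ℝ := ∫ x, p.ker l y x ∂μ

lemma hasDerivAt_reg (μ : Measure (Ed d)) [IsProbabilityMeasure μ] {l : ℝ} (hl : 0 < l)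
    (y : Ed d) : HasDerivAt (fun l => p.reg μ l y) (∫ x, p.kerDeriv l y x ∂μ) l := by
  have hH := p.hessConst_nonneg
  have hker : ∀ l' x, 0 < l' → p.kerDeriv l' y x
      = -(∑ i, ∑ j, A y i j * hess2 (p.pot l' y) x i j) / (2 * l' ^ 3) := fun l' x hl' => by
    rw [p.sum_mul_hess2_pot]
    field_simp
  have hm : AEStronglyMeasurable (p.kerDeriv l y) μ := by
    have h1 : Continuous (p.kerDeriv l y) := by
      rw [show p.kerDeriv l y = _ from funext fun x => hker l x hl]
      exact ((continuous_finsetSum _ fun i _ => continuous_finsetSum _ fun j _ =>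
        continuous_const.mul (continuous_hess2 (p.isTestFun_pot hl y).contDiff_two i j)).neg).div_const _
    exact h1.aestronglyMeasurable
  refine (hasDerivAt_integral_of_dominated_loc_of_deriv_le (μ := μ) (F := fun l => p.ker l y)
    (F' := fun l => p.kerDeriv l y)
    (s := Ioo (l / 2) (2 * l))
    (bound := fun _ => (∑ i, ∑ j, |A y i j| * (p.hessConst * (2 * l) ^ (d + 2))) / (2 * (l / 2) ^ 3))
    (Ioo_mem_nhds (by linarith) (by linarith))
    (Eventually.of_forall fun l' => (p.continuous_ker_right l' y).aestronglyMeasurable)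
    (p.integrable_ker hl y μ) hm (Eventually.of_forall fun x l' hl' => ?_) (integrable_const _)
    (Eventually.of_forall fun x l' _ => p.hasDerivAt_ker l' y x)).2
  have h0 : 0 < l' := lt_trans (by linarith) hl'.1
  rw [hker l' x h0, norm_div, norm_neg, Real.norm_eq_abs, Real.norm_eq_abs,
    abs_of_pos (by positivity : 0 < 2 * l' ^ 3)]
  refine div_le_div₀ (Finset.sum_nonneg fun i _ => Finset.sum_nonneg fun j _ => by positivity)
    ?_ (by positivity) (by gcongr; exact hl'.1.le)
  refine (Finset.abs_sum_le_sum_abs _ _).trans (Finset.sum_le_sum fun i _ =>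
    (Finset.abs_sum_le_sum_abs _ _).trans (Finset.sum_le_sum fun j _ => ?_))
  rw [abs_mul]
  refine mul_le_mul_of_nonneg_left ((p.abs_hess2_pot_le h0 y x i j).trans ?_) (abs_nonneg _)
  gcongr
  exact hl'.2.le

/-- Doubling the inverse scale changes the regularization by a small amount. -/
lemma abs_reg_sub_le {N' : ℝ → ℝ} (hN' : ∀ R, 0 ≤ N' R) {μ : Measure (Ed d)}
    [IsProbabilityMeasure μ] (hμ : DriftBounded A N' μ) {R : ℝ} (hR : 0 < R) {y : Ed d}
    (hy : ‖y‖ ≤ R) {l : ℝ} (hl : 1 ≤ l) :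
    |p.reg μ (2 * l) y - p.reg μ l y| ≤
      p.scaleConst N' R * 2 ^ d * l⁻¹ * (l ^ d * μ.real (closedBall y (p.rad / l))) := by
  have hl0 : 0 < l := by linarith
  have hS := p.scaleConst_nonneg hN' R
  have h := Convex.norm_image_sub_le_of_norm_hasDerivWithin_le (f := fun l => p.reg μ l y)
    (f' := fun l => ∫ x, p.kerDeriv l y x ∂μ) (s := Icc l (2 * l)) (x := l) (y := 2 * l)
    (C := p.scaleConst N' R * (2 * l) ^ (d + 1) * μ.real (closedBall y (p.rad / l)) / (2 * l ^ 3))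
    (fun l' hl' => (p.hasDerivAt_reg μ (hl0.trans_le hl'.1) y).hasDerivWithinAt)
    (fun l' hl' => by
      have h0 : 0 < l' := hl0.trans_le hl'.1
      have h1 := p.abs_integral_kerDeriv_le hN' hμ hR hy (hl.trans hl'.1)
      rw [Real.norm_eq_abs, le_div_iff₀ (by positivity)]
      calc |∫ x, p.kerDeriv l' y x ∂μ| * (2 * l ^ 3)
          ≤ |∫ x, p.kerDeriv l' y x ∂μ| * (2 * l' ^ 3) := by gcongr; exact hl'.1
        _ = 2 * l' ^ 3 * |∫ x, p.kerDeriv l' y x ∂μ| := by ring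
        _ ≤ _ := h1
        _ ≤ _ := by
          have h3 := p.rad_pos
          have h4 : μ.real (closedBall y (p.rad / l')) ≤ μ.real (closedBall y (p.rad / l)) :=
            measureReal_mono (closedBall_subset_closedBall (by gcongr; exact hl'.1))
          gcongr
          exact hl'.2) (convex_Icc _ _) ⟨le_rfl, by linarith⟩ ⟨by linarith, le_rfl⟩
  rw [Real.norm_eq_abs, Real.norm_eq_abs] at h
  refine h.trans_eq ?_
  rw [show 2 * l - l = l by ring, abs_of_pos hl0]
  field_simp
  ring

end ParametrixData

/-! ### Local densities -/

/-- Averaging the mass of balls over all centers gives the volume of a ball. -/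
lemma lintegral_measure_closedBall (μ : Measure (Ed d)) [IsProbabilityMeasure μ] (r : ℝ) :
    ∫⁻ y, μ (closedBall y r) = volume (closedBall (0 : Ed d) r) := by
  have hs : MeasurableSet {w : Ed d × Ed d | dist w.2 w.1 ≤ r} :=
    (isClosed_le (by fun_prop) continuous_const).measurableSet
  have h1 := Measure.prod_apply (μ := (volume : Measure (Ed d))) (ν := μ) hs
  have h2 := Measure.prod_apply_symm (μ := (volume : Measure (Ed d))) (ν := μ) hs
  have h3 : ∀ x : Ed d, (fun y : Ed d => (y, x)) ⁻¹' {w : Ed d × Ed d | dist w.2 w.1 ≤ r}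
      = closedBall x r := fun x => by ext y; simp [dist_comm]
  have h4 : ∀ y : Ed d, Prod.mk y ⁻¹' {w : Ed d × Ed d | dist w.2 w.1 ≤ r}
      = closedBall y r := fun y => by ext x; simp
  simp only [h4] at h1
  simp only [h3, Measure.addHaar_closedBall_center, lintegral_const, measure_univ, mul_one] at h2
  rw [← h1, h2]

lemma integrable_measureReal_closedBall (μ : Measure (Ed d)) [IsProbabilityMeasure μ] (r : ℝ) :
    Integrable fun y => μ.real (closedBall y r) := by
  have hs : MeasurableSet {w : Ed d × Ed d | dist w.2 w.1 ≤ r} :=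
    (isClosed_le (by fun_prop) continuous_const).measurableSet
  have h4 : ∀ y : Ed d, Prod.mk y ⁻¹' {w : Ed d × Ed d | dist w.2 w.1 ≤ r}
      = closedBall y r := fun y => by ext x; simp
  have hm : Measurable fun y => μ (closedBall y r) := by
    simpa only [h4] using measurable_measure_prodMk_left (ν := μ) hs
  refine integrable_toReal_of_lintegral_ne_top hm.aemeasurable ?_
  rw [lintegral_measure_closedBall]
  exact measure_closedBall_lt_top.ne

lemma integral_measureReal_closedBall (μ : Measure (Ed d)) [IsProbabilityMeasure μ] {r l : ℝ}
    (hr : 0 ≤ r) (hl : 0 < l) :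
    ∫ y, l ^ d * μ.real (closedBall y (r / l)) = volume.real (closedBall (0 : Ed d) r) := by
  have h := (integrable_measureReal_closedBall μ (r / l)).1.aemeasurable
  have h1 : ∫ y, μ.real (closedBall y (r / l)) = volume.real (closedBall (0 : Ed d) (r / l)) := by
    rw [integral_eq_lintegral_of_nonneg_ae (Eventually.of_forall fun _ => measureReal_nonneg) h.aestronglyMeasurable]
    simp only [Measure.real, ENNReal.ofReal_toReal (measure_ne_top μ _)]
    rw [lintegral_measure_closedBall]
  rw [integral_const_mul, h1, Measure.real, Measure.real, Measure.addHaar_closedBall _ _ (by positivity),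
    Measure.addHaar_closedBall _ _ hr, ENNReal.toReal_mul, ENNReal.toReal_mul,
    ENNReal.toReal_ofReal (by positivity), ENNReal.toReal_ofReal (by positivity)]
  simp only [finrank_euclideanSpace, Fintype.card_fin, div_pow]
  field_simp

namespace ParametrixData

variable {A : Ed d → Matrix (Fin d) (Fin d) ℝ} (p : ParametrixData A)

lemma continuous_ker_left (l : ℝ) (x : Ed d) : Continuous fun y => p.ker l y x := by
  have h0 : Continuous fun y : Ed d => x - y := continuous_const.sub continuous_id
  have h1 : Continuous fun y : Ed d => p.quad y (x - y) :=
    (p.continuous_Q.clm_apply h0).inner h0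
  have h2 : Continuous fun y => l ^ 2 * p.quad y (x - y) := continuous_const.mul h1
  exact continuous_const.mul (p.contDiff_k.continuous.comp h2)

lemma continuous_reg (μ : Measure (Ed d)) [IsProbabilityMeasure μ] {l : ℝ} (hl : 0 ≤ l) :
    Continuous (p.reg μ l) := by
  refine continuous_of_dominated (bound := fun _ => l ^ d)
    (fun y => (p.continuous_ker_right l y).aestronglyMeasurable)
    (fun y => Eventually.of_forall fun x => ?_) (integrable_const _)
    (Eventually.of_forall fun x => p.continuous_ker_left l x)
  rw [Real.norm_eq_abs, abs_of_nonneg (p.ker_nonneg hl y x)]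
  exact p.ker_le hl y x

lemma reg_nonneg (μ : Measure (Ed d)) {l : ℝ} (hl : 0 ≤ l) (y : Ed d) : 0 ≤ p.reg μ l y :=
  integral_nonneg fun x => p.ker_nonneg hl y x

lemma reg_le (μ : Measure (Ed d)) [IsProbabilityMeasure μ] {l : ℝ} (hl : 0 < l) (y : Ed d) :
    p.reg μ l y ≤ l ^ d := by
  have h := integral_mono (p.integrable_ker hl y μ) (integrable_const (l ^ d))
    fun x => p.ker_le hl.le y x
  simpa [reg] using h

/-- The total mass of the kernel. -/
def mass (y : Ed d) : ℝ := ∫ z, p.k (p.quad y z)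

lemma k_quad_eq_zero {y z : Ed d} (hz : z ∉ closedBall (0 : Ed d) p.rad) :
    p.k (p.quad y z) = 0 := by
  have h := p.ker_eq_zero (l := 1) one_pos (y := y) (x := y + z)
    (by simpa [dist_eq_norm] using hz)
  simpa [ker] using h

lemma k_quad_le_indicator (y z : Ed d) :
    p.k (p.quad y z) ≤ (closedBall (0 : Ed d) p.rad).indicator (fun _ => (1 : ℝ)) z := by
  by_cases hz : z ∈ closedBall (0 : Ed d) p.rad
  · rw [indicator_of_mem hz]; exact p.k_le_one _
  · rw [indicator_of_notMem hz, p.k_quad_eq_zero hz]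

lemma integrable_indicator_closedBall (r : ℝ) :
    Integrable ((closedBall (0 : Ed d) r).indicator fun _ => (1 : ℝ)) :=
  (integrable_indicator_iff isClosed_closedBall.measurableSet).2
    (integrableOn_const measure_closedBall_lt_top.ne)

lemma continuous_k_quad_left (z : Ed d) : Continuous fun y => p.k (p.quad y z) := by
  have h1 : Continuous fun y : Ed d => p.quad y z :=
    (p.continuous_Q.clm_apply continuous_const).inner continuous_const
  exact p.contDiff_k.continuous.comp h1

lemma continuous_k_quad_right (y : Ed d) : Continuous fun z => p.k (p.quad y z) := by
  have h1 : Continuous fun z : Ed d => p.quad y z := (p.Q y).continuous.inner continuous_id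
  exact p.contDiff_k.continuous.comp h1

lemma continuous_mass : Continuous p.mass := by
  refine continuous_of_dominated
    (fun y => (p.continuous_k_quad_right y).aestronglyMeasurable)
    (fun y => Eventually.of_forall fun z => ?_) (integrable_indicator_closedBall p.rad)
    (Eventually.of_forall fun z => p.continuous_k_quad_left z)
  rw [Real.norm_eq_abs, abs_of_nonneg (p.k_nonneg _)]
  exact p.k_quad_le_indicator y z

lemma integrable_k_quad (y : Ed d) : Integrable fun z => p.k (p.quad y z) :=
  (p.continuous_k_quad_right y).integrable_of_hasCompactSupport
    (HasCompactSupport.intro (isCompact_closedBall 0 p.rad) fun _ hz => p.k_quad_eq_zero hz)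

lemma mass_nonneg (y : Ed d) : 0 ≤ p.mass y := integral_nonneg fun _ => p.k_nonneg _

lemma mass_le (y : Ed d) : p.mass y ≤ volume.real (closedBall (0 : Ed d) p.rad) := by
  have h := integral_mono (p.integrable_k_quad y) (integrable_indicator_closedBall p.rad)
    (p.k_quad_le_indicator y)
  rwa [integral_indicator isClosed_closedBall.measurableSet, integral_const, smul_eq_mul,
    mul_one, measureReal_restrict_apply_univ] at h

/-- A uniform positive lower bound for the mass of the kernel. -/
def massLow : ℝ := volume.real (closedBall (0 : Ed d) (Real.sqrt (2 * p.K))⁻¹)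

lemma massLow_pos : 0 < p.massLow := by
  have := p.K_pos
  exact ENNReal.toReal_pos (measure_closedBall_pos _ _ (by positivity)).ne'
    measure_closedBall_lt_top.ne

lemma massLow_le (y : Ed d) : p.massLow ≤ p.mass y := by
  have hK := p.K_pos
  have h := integral_mono (integrable_indicator_closedBall (Real.sqrt (2 * p.K))⁻¹)
    (p.integrable_k_quad y) (fun z => ?_)
  · rwa [integral_indicator isClosed_closedBall.measurableSet, integral_const, smul_eq_mul,
      mul_one, measureReal_restrict_apply_univ] at h
  · by_cases hz : z ∈ closedBall (0 : Ed d) (Real.sqrt (2 * p.K))⁻¹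
    · rw [indicator_of_mem hz, p.k_eq_one _ (p.quad_nonneg _ _)]
      rw [mem_closedBall_zero_iff] at hz
      have h1 : p.quad y z ≤ p.K * ‖z‖ ^ 2 := by
        refine (real_inner_le_norm _ _).trans ?_
        nlinarith [p.Q_bound y z, norm_nonneg z]
      have h2 : ‖z‖ ^ 2 ≤ (2 * p.K)⁻¹ := by
        calc ‖z‖ ^ 2 ≤ ((Real.sqrt (2 * p.K))⁻¹) ^ 2 := by gcongr
          _ = _ := by rw [inv_pow, Real.sq_sqrt (by positivity)]
      calc p.quad y z ≤ p.K * (2 * p.K)⁻¹ := h1.trans (by gcongr)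
        _ = 1 / 2 := by field_simp
    · rw [indicator_of_notMem hz]; exact p.k_nonneg _

lemma mass_pos (y : Ed d) : 0 < p.mass y := p.massLow_pos.trans_le (p.massLow_le y)

lemma integral_mul_ker (f : Ed d → ℝ) {l : ℝ} (hl : 0 < l) (x : Ed d) :
    ∫ y, f y * p.ker l y x = ∫ z, f (x - l⁻¹ • z) * p.k (p.quad (x - l⁻¹ • z) z) := by
  have h1 : ∫ y, f y * p.ker l y x = ∫ y, f (x - y) * p.ker l (x - y) x :=
    (integral_sub_left_eq_self (fun y => f y * p.ker l y x) volume x).symm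
  have h2 := Measure.integral_comp_inv_smul (volume : Measure (Ed d))
    (fun y => f (x - y) * p.ker l (x - y) x) l
  rw [finrank_euclideanSpace, Fintype.card_fin, abs_of_pos (pow_pos hl d), smul_eq_mul, ← h1] at h2
  have h3 : ∀ z, f (x - l⁻¹ • z) * p.ker l (x - l⁻¹ • z) x =
      l ^ d * (f (x - l⁻¹ • z) * p.k (p.quad (x - l⁻¹ • z) z)) := fun z => by
    have h4 : l ^ 2 * p.quad (x - l⁻¹ • z) (x - (x - l⁻¹ • z)) = p.quad (x - l⁻¹ • z) z := by
      rw [sub_sub_cancel, quad, quad, map_smul, inner_smul_left, inner_smul_right]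
      simp
      field_simp
    rw [ker, h4]
    ring
  simp only [h3] at h2
  rw [integral_const_mul] at h2
  exact (mul_left_cancel₀ (pow_pos hl d).ne' h2).symm

lemma integral_mul_reg {f : Ed d → ℝ} (hf : Continuous f) (hfc : HasCompactSupport f)
    (μ : Measure (Ed d)) [IsProbabilityMeasure μ] {l : ℝ} (hl : 0 < l) :
    ∫ y, f y * p.reg μ l y = ∫ x, ∫ y, f y * p.ker l y x ∂volume ∂μ := by
  have hi : Integrable (Function.uncurry fun y x => f y * p.ker l y x)
      ((volume : Measure (Ed d)).prod μ) := by
    have h1 : Integrable (fun w : Ed d × Ed d => f w.1 * 1) ((volume : Measure (Ed d)).prod μ) :=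
      (hf.integrable_of_hasCompactSupport hfc).mul_prod (integrable_const (1 : ℝ))
    have hk := p.continuous_ker l
    have hc : Continuous (Function.uncurry fun y x => f y * p.ker l y x) := by
      unfold Function.uncurry
      exact (hf.comp continuous_fst).mul hk
    refine (h1.mul_const (l ^ d)).mono hc.aestronglyMeasurable (Eventually.of_forall fun w => ?_)
    simp only [Function.uncurry, norm_mul, mul_one, Real.norm_eq_abs]
    rw [abs_of_nonneg (p.ker_nonneg hl.le _ _), abs_of_nonneg (pow_nonneg hl.le d)]
    exact mul_le_mul_of_nonneg_left (p.ker_le hl.le _ _) (abs_nonneg _)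
  rw [← integral_integral_swap hi]
  simp only [integral_const_mul, reg]

lemma abs_mul_k_quad_le {f : Ed d → ℝ} {M : ℝ} (hM : ∀ x, |f x| ≤ M) (y z w : Ed d) :
    ‖f w * p.k (p.quad y z)‖ ≤ M * (closedBall (0 : Ed d) p.rad).indicator (fun _ => (1 : ℝ)) z := by
  rw [norm_mul, Real.norm_eq_abs, Real.norm_eq_abs, abs_of_nonneg (p.k_nonneg _)]
  exact mul_le_mul (hM _) (p.k_quad_le_indicator _ _) (p.k_nonneg _) ((abs_nonneg _).trans (hM 0))

lemma tendsto_integral_mul_ker {f : Ed d → ℝ} (hf : Continuous f) {M : ℝ} (hM : ∀ x, |f x| ≤ M)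
    {l : ℕ → ℝ} (hl : ∀ n, 0 < l n) (hlim : Tendsto l atTop atTop) (x : Ed d) :
    Tendsto (fun n => ∫ y, f y * p.ker (l n) y x) atTop (𝓝 (f x * p.mass x)) := by
  simp only [p.integral_mul_ker f (hl _), mass, ← integral_const_mul]
  have hshift : ∀ n, Continuous fun z : Ed d => x - (l n)⁻¹ • z := fun n => by fun_prop
  refine tendsto_integral_of_dominated_convergence _ (fun n => ?_)
    ((integrable_indicator_closedBall p.rad).const_mul M)
    (fun n => Eventually.of_forall fun z => p.abs_mul_k_quad_le hM _ _ _)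
    (Eventually.of_forall fun z => ?_)
  · have h1 : Continuous fun z : Ed d => p.quad (x - (l n)⁻¹ • z) z :=
      ((p.continuous_Q.comp (hshift n)).clm_apply continuous_id).inner continuous_id
    exact ((hf.comp (hshift n)).mul (p.contDiff_k.continuous.comp h1)).aestronglyMeasurable
  · have h0 : Tendsto (fun n => x - (l n)⁻¹ • z) atTop (𝓝 x) := by
      have := (tendsto_const_nhds (x := x)).sub
        ((tendsto_inv_atTop_zero.comp hlim).smul (tendsto_const_nhds (x := z)))
      simpa using this
    exact ((hf.tendsto x).comp h0).mul (((p.continuous_k_quad_left z).tendsto x).comp h0)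

lemma tendsto_integral_mul_reg {f : Ed d → ℝ} (hf : Continuous f) (hfc : HasCompactSupport f)
    (μ : Measure (Ed d)) [IsProbabilityMeasure μ]
    {l : ℕ → ℝ} (hl : ∀ n, 0 < l n) (hlim : Tendsto l atTop atTop) :
    Tendsto (fun n => ∫ y, f y * p.reg μ (l n) y) atTop (𝓝 (∫ x, f x * p.mass x ∂μ)) := by
  obtain ⟨M, hM⟩ := hf.bounded_above_of_compact_support hfc
  simp only [p.integral_mul_reg hf hfc μ (hl _)]
  refine tendsto_integral_of_dominated_convergence
    (fun _ => M * volume.real (closedBall (0 : Ed d) p.rad)) (fun n => ?_) (integrable_const _)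
    (fun n => Eventually.of_forall fun x => ?_)
    (Eventually.of_forall fun x => p.tendsto_integral_mul_ker hf hM hl hlim x)
  · have hk := (p.continuous_ker (l n)).comp continuous_swap
    simp only [Function.comp_def, Prod.fst_swap, Prod.snd_swap] at hk
    have hc : Continuous fun w : Ed d × Ed d => f w.2 * p.ker (l n) w.2 w.1 :=
      (hf.comp continuous_snd).mul hk
    have hc' : Continuous (Function.uncurry fun x y => f y * p.ker (l n) y x) := hc
    exact hc'.stronglyMeasurable.integral_prod_right.aestronglyMeasurable
  · rw [p.integral_mul_ker f (hl n)]
    refine (norm_integral_le_of_norm_le ((integrable_indicator_closedBall p.rad).const_mul M)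
      (Eventually.of_forall fun z => p.abs_mul_k_quad_le hM _ _ _)).trans_eq ?_
    rw [integral_const_mul, integral_indicator isClosed_closedBall.measurableSet, integral_const,
      smul_eq_mul, mul_one, measureReal_restrict_apply_univ]

/-- The constant in the local density estimate. -/
def densConst (N' : ℝ → ℝ) (R : ℝ) : ℝ :=
  p.scaleConst N' R * 2 ^ d * volume.real (closedBall (0 : Ed d) p.rad)

lemma densConst_nonneg {N' : ℝ → ℝ} (hN' : ∀ R, 0 ≤ N' R) (R : ℝ) : 0 ≤ p.densConst N' R := by
  have := p.scaleConst_nonneg hN' R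
  unfold densConst; positivity

lemma abs_integral_mul_reg_sub_le {N' : ℝ → ℝ} (hN' : ∀ R, 0 ≤ N' R) {μ : Measure (Ed d)}
    [IsProbabilityMeasure μ] (hμ : DriftBounded A N' μ) {R : ℝ} (hR : 0 < R)
    {f : Ed d → ℝ} (hf : Continuous f) (hf0 : ∀ x, x ∉ closedBall 0 R → f x = 0) {M : ℝ}
    (hM : ∀ x, |f x| ≤ M) {l : ℝ} (hl : 1 ≤ l) :
    |(∫ y, f y * p.reg μ (2 * l) y) - ∫ y, f y * p.reg μ l y| ≤ M * p.densConst N' R * l⁻¹ := by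
  have hl0 : 0 < l := by linarith
  have hM0 : 0 ≤ M := (abs_nonneg _).trans (hM 0)
  have hfc : HasCompactSupport f := HasCompactSupport.intro (isCompact_closedBall 0 R) hf0
  have hi : ∀ l', 0 ≤ l' → Integrable fun y => f y * p.reg μ l' y := fun l' hl' =>
    (hf.mul (p.continuous_reg μ hl')).integrable_of_hasCompactSupport hfc.mul_right
  rw [← integral_sub (hi _ (by positivity)) (hi _ hl0.le), ← Real.norm_eq_abs]
  have hb : Integrable fun y => M * (p.scaleConst N' R * 2 ^ d * l⁻¹ *
      (l ^ d * μ.real (closedBall y (p.rad / l)))) :=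
    (((integrable_measureReal_closedBall μ (p.rad / l)).const_mul _).const_mul _).const_mul _
  refine (norm_integral_le_of_norm_le hb (Eventually.of_forall fun y => ?_)).trans_eq ?_
  · rw [← mul_sub, norm_mul, Real.norm_eq_abs, Real.norm_eq_abs]
    have hS := p.scaleConst_nonneg hN' R
    by_cases hy : y ∈ closedBall (0 : Ed d) R
    · exact mul_le_mul (hM y) (p.abs_reg_sub_le hN' hμ hR (by simpa using hy) hl) (abs_nonneg _) hM0
    · rw [hf0 y hy, abs_zero, zero_mul]
      positivity
  · rw [integral_const_mul, integral_const_mul, integral_measureReal_closedBall μ p.rad_pos.le hl0,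
      densConst]
    ring

lemma abs_integral_mass_sub_le {N' : ℝ → ℝ} (hN' : ∀ R, 0 ≤ N' R) {μ : Measure (Ed d)}
    [IsProbabilityMeasure μ] (hμ : DriftBounded A N' μ) {R : ℝ} (hR : 0 < R)
    {f : Ed d → ℝ} (hf : Continuous f) (hf0 : ∀ x, x ∉ closedBall 0 R → f x = 0) {M : ℝ}
    (hM : ∀ x, |f x| ≤ M) (n : ℕ) :
    |∫ x, f x * p.mass x ∂μ - ∫ y, f y * p.reg μ (2 ^ n) y| ≤
      2 * M * p.densConst N' R * (2 ^ n)⁻¹ := by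
  have hM0 : 0 ≤ M := (abs_nonneg _).trans (hM 0)
  have hC := p.densConst_nonneg hN' R
  have hfc : HasCompactSupport f := HasCompactSupport.intro (isCompact_closedBall 0 R) hf0
  have hstep : ∀ m : ℕ, |(∫ y, f y * p.reg μ (2 ^ (n + m)) y) - ∫ y, f y * p.reg μ (2 ^ n) y| ≤
      2 * M * p.densConst N' R * ((2 ^ n)⁻¹ - (2 ^ (n + m))⁻¹) := by
    intro m
    induction m with
    | zero => simp
    | succ m ih =>
      have h1 := p.abs_integral_mul_reg_sub_le hN' hμ hR hf hf0 hM
        (l := 2 ^ (n + m)) (one_le_pow₀ (by norm_num))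
      rw [← pow_succ', add_assoc] at h1
      have h2 : ((2 : ℝ) ^ (n + (m + 1)))⁻¹ = (2 ^ (n + m))⁻¹ / 2 := by
        rw [← add_assoc, pow_succ, mul_inv]; ring
      rw [h2]
      refine (abs_sub_le _ (∫ y, f y * p.reg μ (2 ^ (n + m)) y) _).trans ((add_le_add h1 ih).trans_eq ?_)
      ring
  have hlim : Tendsto (fun m : ℕ => (2 : ℝ) ^ (n + m)) atTop atTop :=
    (tendsto_pow_atTop_atTop_of_one_lt (by norm_num)).comp
      (tendsto_atTop_mono (fun m => Nat.le_add_left m n) tendsto_id)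
  have h3 := (p.tendsto_integral_mul_reg hf hfc μ (fun m => by positivity) hlim).sub_const
    (∫ y, f y * p.reg μ (2 ^ n) y)
  refine le_of_tendsto h3.abs (Eventually.of_forall fun m => (hstep m).trans ?_)
  refine mul_le_mul_of_nonneg_left (sub_le_self _ (by positivity)) (by positivity)

end ParametrixData

namespace ParametrixData

variable {A : Ed d → Matrix (Fin d) (Fin d) ℝ} (p : ParametrixData A)

lemma exists_continuous_approx {R M : ℝ} (hM0 : 0 ≤ M) {f : Ed d → ℝ} (hfm : Measurable f)
    (hf0 : ∀ x, x ∉ closedBall 0 R → f x = 0) (hM : ∀ x, |f x| ≤ M) (μ : Measure (Ed d))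
    [IsFiniteMeasureOnCompacts μ] {ε : ℝ} (hε : 0 < ε) :
    ∃ g : Ed d → ℝ, Continuous g ∧ (∀ x, x ∉ closedBall 0 (R + 1) → g x = 0) ∧
      (∀ x, |g x| ≤ M) ∧ Integrable f μ ∧ Integrable g μ ∧ ∫ x, |f x - g x| ∂μ ≤ ε := by
  have hfi : Integrable f μ := by
    refine (integrableOn_iff_integrable_of_support_subset (s := closedBall 0 R)
      fun x hx => by_contra fun h => hx (hf0 x h)).1 ?_
    exact Measure.integrableOn_of_bounded (M := M) (isCompact_closedBall 0 R).measure_lt_top.ne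
      hfm.aestronglyMeasurable (Eventually.of_forall hM)
  obtain ⟨g, hgc, hg, hgcont, hgi⟩ := hfi.exists_hasCompactSupport_integral_sub_le hε
  let χ : Ed d → ℝ := fun x => max 0 (min 1 (R + 1 - ‖x‖))
  have hχ0 : ∀ x, 0 ≤ χ x := fun x => le_max_left _ _
  have hχ1 : ∀ x, χ x ≤ 1 := fun x => max_le zero_le_one (min_le_left _ _)
  have hc : Continuous fun x => χ x * max (-M) (min M (g x)) := by fun_prop
  have hz : ∀ x, x ∉ closedBall 0 (R + 1) → χ x * max (-M) (min M (g x)) = 0 := fun x hx => by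
    have h1 : R + 1 < ‖x‖ := by simpa using hx
    have h2 : χ x = 0 := max_eq_left ((min_le_right _ _).trans (by linarith))
    rw [h2, zero_mul]
  have hgi' : Integrable (fun x => χ x * max (-M) (min M (g x))) μ :=
    hc.integrable_of_hasCompactSupport (HasCompactSupport.intro (isCompact_closedBall _ _) hz)
  refine ⟨fun x => χ x * max (-M) (min M (g x)), hc, hz, fun x => ?_, hfi, hgi',
    (integral_mono (hfi.sub hgi').abs (hfi.sub hgi).norm fun x => ?_).trans hg⟩
  · rw [abs_mul, abs_of_nonneg (hχ0 x)]
    exact (mul_le_of_le_one_left (abs_nonneg _) (hχ1 x)).trans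
      (abs_le.2 ⟨le_max_left _ _, max_le (by linarith) (min_le_left _ _)⟩)
  · have hfx := abs_le.1 (hM x)
    simp only [Pi.sub_apply, Real.norm_eq_abs]
    by_cases hx : x ∈ closedBall (0 : Ed d) R
    · have h1 : ‖x‖ ≤ R := by simpa using hx
      have h2 : χ x = 1 := by
        simp only [χ]
        rw [min_eq_left (by linarith), max_eq_right zero_le_one]
      rw [h2, one_mul]
      rcases max_cases (-M) (min M (g x)) with h | h <;>
      rcases min_cases M (g x) with h' | h' <;>
      rcases abs_cases (f x - g x) with h'' | h'' <;>
      rw [abs_le] <;> constructor <;> linarith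
    · rw [hf0 x hx, zero_sub, zero_sub, abs_neg, abs_neg, abs_mul, abs_of_nonneg (hχ0 x)]
      refine (mul_le_of_le_one_left (abs_nonneg _) (hχ1 x)).trans ?_
      rcases max_cases (-M) (min M (g x)) with h | h <;>
      rcases min_cases M (g x) with h' | h' <;>
      rcases abs_cases (g x) with h'' | h'' <;>
      rw [abs_le] <;> constructor <;> linarith

lemma abs_integral_mass_sub_le_of_measurable {N' : ℝ → ℝ} (hN' : ∀ R, 0 ≤ N' R)
    {μ : Measure (Ed d)} [IsProbabilityMeasure μ] (hμ : DriftBounded A N' μ) {R : ℝ} (hR : 0 < R)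
    {f : Ed d → ℝ} (hfm : Measurable f) (hf0 : ∀ x, x ∉ closedBall 0 R → f x = 0) {M : ℝ}
    (hM : ∀ x, |f x| ≤ M) (n : ℕ) :
    |∫ x, f x * p.mass x ∂μ - ∫ y, f y * p.reg μ (2 ^ n) y| ≤
      2 * M * p.densConst N' (R + 1) * (2 ^ n)⁻¹ := by
  have hM0 : 0 ≤ M := (abs_nonneg _).trans (hM 0)
  have hl : (0 : ℝ) < 2 ^ n := by positivity
  set v := volume.real (closedBall (0 : Ed d) p.rad) with hv
  have hv0 : 0 ≤ v := measureReal_nonneg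
  refine le_of_forall_pos_le_add fun ε hε => ?_
  have hδ : 0 < ε / (v + (2 ^ n) ^ d + 1) := by positivity
  have : IsFiniteMeasureOnCompacts (μ + volume) :=
    ⟨fun K hK => by simp [Measure.add_apply, hK.measure_lt_top]⟩
  obtain ⟨g, hg, hg0, hgM, hfi, hgi, hfg⟩ :=
    exists_continuous_approx hM0 hfm hf0 hM (μ + volume) hδ
  rw [integrable_add_measure] at hfi hgi
  have hdi : Integrable (fun x => f x - g x) μ := hfi.1.sub hgi.1
  have hdi' : Integrable (fun x => f x - g x) := hfi.2.sub hgi.2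
  rw [integral_add_measure hdi.abs hdi'.abs] at hfg
  have h1 := p.abs_integral_mass_sub_le hN' hμ (by linarith) hg hg0 hgM n
  have hmul1 : ∀ h : Ed d → ℝ, Integrable h μ → Integrable (fun x => h x * p.mass x) μ :=
    fun h hh => hh.mul_bdd (c := v) p.continuous_mass.aestronglyMeasurable
      (Eventually.of_forall fun x => by
        rw [Real.norm_eq_abs, abs_of_nonneg (p.mass_nonneg x)]; exact p.mass_le x)
  have hmul2 : ∀ h : Ed d → ℝ, Integrable h → Integrable (fun x => h x * p.reg μ (2 ^ n) x) :=
    fun h hh => hh.mul_bdd (c := (2 ^ n) ^ d) (p.continuous_reg μ hl.le).aestronglyMeasurable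
      (Eventually.of_forall fun x => by
        rw [Real.norm_eq_abs, abs_of_nonneg (p.reg_nonneg μ hl.le x)]; exact p.reg_le μ hl x)
  have h2 : |∫ x, f x * p.mass x ∂μ - ∫ x, g x * p.mass x ∂μ| ≤ v * ∫ x, |f x - g x| ∂μ := by
    rw [← integral_sub (hmul1 f hfi.1) (hmul1 g hgi.1), ← integral_const_mul, ← Real.norm_eq_abs]
    refine norm_integral_le_of_norm_le (hdi.abs.const_mul v) (Eventually.of_forall fun x => ?_)
    rw [← sub_mul, norm_mul, mul_comm, Real.norm_eq_abs, Real.norm_eq_abs, abs_of_nonneg (p.mass_nonneg x)]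
    exact mul_le_mul_of_nonneg_right (p.mass_le x) (abs_nonneg _)
  have h3 : |(∫ x, f x * p.reg μ (2 ^ n) x) - ∫ x, g x * p.reg μ (2 ^ n) x| ≤
      (2 ^ n) ^ d * ∫ x, |f x - g x| := by
    rw [← integral_sub (hmul2 f hfi.2) (hmul2 g hgi.2), ← integral_const_mul, ← Real.norm_eq_abs]
    refine norm_integral_le_of_norm_le (hdi'.abs.const_mul _) (Eventually.of_forall fun x => ?_)
    rw [← sub_mul, norm_mul, mul_comm, Real.norm_eq_abs, Real.norm_eq_abs,
      abs_of_nonneg (p.reg_nonneg μ hl.le x)]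
    exact mul_le_mul_of_nonneg_right (p.reg_le μ hl x) (abs_nonneg _)
  have ha : 0 ≤ ∫ x, |f x - g x| ∂μ := integral_nonneg fun _ => abs_nonneg _
  have hb : 0 ≤ ∫ x, |f x - g x| := integral_nonneg fun _ => abs_nonneg _
  have h4 : v * ∫ x, |f x - g x| ∂μ + (2 ^ n) ^ d * ∫ x, |f x - g x| ≤ ε := by
    rw [le_div_iff₀ (by positivity)] at hfg
    have : (0 : ℝ) ≤ (2 ^ n) ^ d := by positivity
    nlinarith [mul_nonneg hv0 hb, mul_nonneg this ha]
  rw [abs_le] at h1 h2 h3 ⊢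
  constructor <;> linarith [h1.1, h1.2, h2.1, h2.2, h3.1, h3.2]

lemma absolutelyContinuous {A : Ed d → Matrix (Fin d) (Fin d) ℝ} (p : ParametrixData A) {N' : ℝ → ℝ} (hN' : ∀ R, 0 ≤ N' R)
    {μ : Measure (Ed d)} [IsProbabilityMeasure μ] (hμ : DriftBounded A N' μ) : μ ≪ volume := by
  refine Measure.AbsolutelyContinuous.mk fun s hs h0 => ?_
  have key : ∀ R : ℕ, μ (s ∩ closedBall 0 (R + 1)) = 0 := by
    intro R
    set t := s ∩ closedBall (0 : Ed d) (R + 1) with ht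
    have htm : MeasurableSet t := hs.inter isClosed_closedBall.measurableSet
    have hvt : volume t = 0 := measure_mono_null inter_subset_left h0
    have h1 : ∀ n : ℕ, |∫ x, t.indicator (fun _ => (1 : ℝ)) x * p.mass x ∂μ| ≤
        2 * 1 * p.densConst N' (R + 1 + 1) * (2 ^ n)⁻¹ := fun n => by
      have h := p.abs_integral_mass_sub_le_of_measurable hN' hμ (R := R + 1) (by positivity)
        (f := t.indicator fun _ => (1 : ℝ)) (measurable_const.indicator htm)
        (fun x hx => indicator_of_notMem (fun h => hx h.2) _) (M := 1)
        (fun x => by by_cases hx : x ∈ t <;> simp [hx]) n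
      have h2 : ∫ y, t.indicator (fun _ => (1 : ℝ)) y * p.reg μ (2 ^ n) y = 0 := by
        refine integral_eq_zero_of_ae ?_
        have h3 : ∀ᵐ y ∂(volume : Measure (Ed d)), y ∉ t := measure_eq_zero_iff_ae_notMem.1 hvt
        filter_upwards [h3] with y hy
        simp [hy]
      rwa [h2, sub_zero] at h
    have h2 : |∫ x, t.indicator (fun _ => (1 : ℝ)) x * p.mass x ∂μ| ≤ 0 := by
      have h3 : Tendsto (fun n : ℕ => 2 * 1 * p.densConst N' (R + 1 + 1) * ((2 : ℝ) ^ n)⁻¹) atTop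
          (𝓝 (2 * 1 * p.densConst N' (R + 1 + 1) * 0)) :=
        (tendsto_inv_atTop_zero.comp
          (tendsto_pow_atTop_atTop_of_one_lt (by norm_num))).const_mul _
      rw [mul_zero] at h3
      exact ge_of_tendsto h3 (Eventually.of_forall h1)
    have h3 : ∫ x, t.indicator (fun _ => p.massLow) x ∂μ ≤ 0 := by
      refine le_trans (integral_mono ((integrable_const _).indicator htm) ?_ fun x => ?_)
        ((le_abs_self _).trans h2)
      · refine Integrable.mul_bdd (c := volume.real (closedBall (0 : Ed d) p.rad))
          ((integrable_const (1 : ℝ)).indicator htm) p.continuous_mass.aestronglyMeasurable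
          (Eventually.of_forall fun x => ?_)
        rw [Real.norm_eq_abs, abs_of_nonneg (p.mass_nonneg x)]; exact p.mass_le x
      · by_cases hx : x ∈ t
        · simpa [hx] using p.massLow_le x
        · simp [hx]
    rw [integral_indicator htm, integral_const, smul_eq_mul, measureReal_restrict_apply_univ] at h3
    have h4 : μ.real t = 0 := le_antisymm (by have := p.massLow_pos; nlinarith) measureReal_nonneg
    exact (measureReal_eq_zero_iff).1 h4
  have hU : s = ⋃ R : ℕ, s ∩ closedBall 0 (R + 1) := by
    ext x
    simp only [mem_iUnion, mem_inter_iff, exists_and_left, mem_closedBall_zero_iff]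
    obtain ⟨n, hn⟩ := exists_nat_ge ‖x‖
    exact ⟨fun h => ⟨h, n, by linarith⟩, fun h => h.1⟩
  rw [hU]
  exact measure_iUnion_null key

end ParametrixData

/-! ### Weighted total variation distance -/

section WeightedDistance

variable {W : Ed d → ℝ} {μ ν ρ : Measure (Ed d)}

lemma abs_integral_le_of_abs_le {f : Ed d → ℝ} (hW : Integrable W μ) (hf : ∀ x, |f x| ≤ W x) :
    |∫ x, f x ∂μ| ≤ ∫ x, W x ∂μ := by
  rw [← Real.norm_eq_abs]
  exact norm_integral_le_of_norm_le hW (Eventually.of_forall hf)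

lemma integrable_of_abs_le {f : Ed d → ℝ} (hW : Integrable W μ) (hfm : Measurable f)
    (hf : ∀ x, |f x| ≤ W x) : Integrable f μ :=
  hW.mono' hfm.aestronglyMeasurable (Eventually.of_forall hf)

lemma integral_sub_le_wDist (hμ : Integrable W μ) (hν : Integrable W ν) {f : Ed d → ℝ}
    (hfm : Measurable f) (hf : ∀ x, |f x| ≤ W x) :
    ∫ x, f x ∂μ - ∫ x, f x ∂ν ≤ wDist W μ ν := by
  refine le_ciSup (f := fun f : {f : Ed d → ℝ // Measurable f ∧ ∀ x, |f x| ≤ W x} =>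
    ∫ x, f.1 x ∂μ - ∫ x, f.1 x ∂ν) ⟨∫ x, W x ∂μ + ∫ x, W x ∂ν, ?_⟩ ⟨f, hfm, hf⟩
  rintro _ ⟨g, rfl⟩
  have h1 := abs_le.1 (abs_integral_le_of_abs_le hμ g.2.2)
  have h2 := abs_le.1 (abs_integral_le_of_abs_le hν g.2.2)
  show ∫ x, g.1 x ∂μ - ∫ x, g.1 x ∂ν ≤ _
  linarith

lemma wDist_le {c : ℝ} (hW : ∀ x, 0 ≤ W x)
    (h : ∀ f : Ed d → ℝ, Measurable f → (∀ x, |f x| ≤ W x) → ∫ x, f x ∂μ - ∫ x, f x ∂ν ≤ c) :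
    wDist W μ ν ≤ c := by
  have : Nonempty {f : Ed d → ℝ // Measurable f ∧ ∀ x, |f x| ≤ W x} :=
    ⟨⟨fun _ => 0, measurable_const, fun x => by simpa using hW x⟩⟩
  exact ciSup_le fun f => h f.1 f.2.1 f.2.2

lemma wDist_nonneg (hW : ∀ x, 0 ≤ W x) (hμ : Integrable W μ) (hν : Integrable W ν) :
    0 ≤ wDist W μ ν := by
  have h := integral_sub_le_wDist hμ hν (f := fun _ => 0) measurable_const
    fun x => by simpa using hW x
  simpa using h

lemma wDist_comm_le (hW : ∀ x, 0 ≤ W x) (hμ : Integrable W μ) (hν : Integrable W ν) :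
    wDist W μ ν ≤ wDist W ν μ := by
  refine wDist_le hW fun f hfm hf => ?_
  have h := integral_sub_le_wDist hν hμ (f := fun x => -f x) hfm.neg fun x => by simpa using hf x
  rw [integral_neg, integral_neg] at h
  linarith

lemma wDist_comm (hW : ∀ x, 0 ≤ W x) (hμ : Integrable W μ) (hν : Integrable W ν) :
    wDist W μ ν = wDist W ν μ :=
  le_antisymm (wDist_comm_le hW hμ hν) (wDist_comm_le hW hν hμ)

lemma wDist_triangle (hW : ∀ x, 0 ≤ W x) (hμ : Integrable W μ) (hν : Integrable W ν)
    (hρ : Integrable W ρ) : wDist W μ ρ ≤ wDist W μ ν + wDist W ν ρ := by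
  refine wDist_le hW fun f hfm hf => ?_
  have h1 := integral_sub_le_wDist hμ hν hfm hf
  have h2 := integral_sub_le_wDist hν hρ hfm hf
  linarith

lemma abs_wDist_sub_wDist_le (hW : ∀ x, 0 ≤ W x) (hμ : Integrable W μ) (hν : Integrable W ν)
    (hρ : Integrable W ρ) : |wDist W μ ρ - wDist W ν ρ| ≤ wDist W μ ν := by
  have h1 := wDist_triangle hW hμ hν hρ
  have h2 := wDist_triangle hW hν hμ hρ
  rw [wDist_comm hW hν hμ] at h2
  rw [abs_le]
  constructor <;> linarith

lemma wDist_mixture_le {ι : Type*} [Fintype ι] (hW : ∀ x, 0 ≤ W x) {p q : ι → ℝ}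
    (hp : ∀ j, 0 ≤ p j) (hq : ∀ j, 0 ≤ q j) {μ : ι → Measure (Ed d)}
    (hμ : ∀ j, Integrable W (μ j)) :
    wDist W (mixture p μ) (mixture q μ) ≤ ∑ j, |p j - q j| * ∫ x, W x ∂(μ j) := by
  refine wDist_le hW fun f hfm hf => ?_
  have hfi := fun j => integrable_of_abs_le (hμ j) hfm hf
  rw [integral_mixture hp hfi, integral_mixture hq hfi, ← Finset.sum_sub_distrib]
  refine Finset.sum_le_sum fun j _ => ?_
  rw [← sub_mul]
  refine (le_abs_self _).trans ?_
  rw [abs_mul]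
  exact mul_le_mul_of_nonneg_left (abs_integral_le_of_abs_le (hμ j) hf) (abs_nonneg _)

lemma continuousOn_wDist_mixture {ι : Type*} [Fintype ι] (hW : ∀ x, 0 ≤ W x)
    {μ : ι → Measure (Ed d)} (hμ : ∀ j, Integrable W (μ j)) (hρ : Integrable W ρ) :
    ContinuousOn (fun p : ι → ℝ => wDist W (mixture p μ) ρ) (stdSimplex ℝ ι) := by
  intro p hp
  have hlim : Tendsto (fun q : ι → ℝ => ∑ j, |q j - p j| * ∫ x, W x ∂(μ j))
      (𝓝[stdSimplex ℝ ι] p) (𝓝 0) := by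
    have hc : Continuous fun q : ι → ℝ => ∑ j, |q j - p j| * ∫ x, W x ∂(μ j) := by fun_prop
    have h := hc.tendsto p
    simp only [sub_self, abs_zero, zero_mul, Finset.sum_const_zero] at h
    exact h.mono_left nhdsWithin_le_nhds
  refine tendsto_iff_dist_tendsto_zero.2 (squeeze_zero' (Eventually.of_forall fun _ => dist_nonneg)
    ?_ hlim)
  filter_upwards [self_mem_nhdsWithin] with q hq
  rw [Real.dist_eq]
  exact (abs_wDist_sub_wDist_le hW (integrable_mixture q hμ) (integrable_mixture p hμ) hρ).trans
    (wDist_mixture_le hW hq.1 hp.1 hμ)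

end WeightedDistance

/-! ### Compactness in weighted total variation -/

lemma isClosed_driftBounded {A : Ed d → Matrix (Fin d) (Fin d) ℝ}
    (hA : ∀ i j, Continuous fun x => A x i j) (N' : ℝ → ℝ) :
    IsClosed {P : ProbabilityMeasure (Ed d) | DriftBounded A N' (P : Measure (Ed d))} := by
  have h : {P : ProbabilityMeasure (Ed d) | DriftBounded A N' (P : Measure (Ed d))} =
      ⋂ (R : ℝ) (_ : 0 < R) (φ : Ed d → ℝ) (_ : IsTestFun φ) (_ : tsupport φ ⊆ closedBall 0 R),
        {P : ProbabilityMeasure (Ed d) | |∫ x, trHess A φ x ∂(P : Measure (Ed d))| ≤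
          N' R * ∫ x, ‖gradient φ x‖ ∂(P : Measure (Ed d))} := by
    ext P
    simp only [DriftBounded, mem_ofPred_eq, mem_iInter]
  rw [h]
  refine isClosed_iInter fun R => isClosed_iInter fun _ => isClosed_iInter fun φ =>
    isClosed_iInter fun hφ => isClosed_iInter fun _ => isClosed_le ?_ ?_
  · exact (continuous_integral_of_hasCompactSupport (continuous_trHess hA hφ.contDiff_two)
      (hasCompactSupport_trHess hφ.2)).abs
  · exact continuous_const.mul (continuous_integral_of_hasCompactSupport
      (continuous_gradient hφ.contDiff_two).norm (hasCompactSupport_gradient hφ.2).norm)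

namespace ParametrixData

variable {A : Ed d → Matrix (Fin d) (Fin d) ℝ} (p : ParametrixData A)

lemma tendsto_reg {P : ℕ → ProbabilityMeasure (Ed d)} {Q : ProbabilityMeasure (Ed d)}
    (hP : Tendsto P atTop (𝓝 Q)) {l : ℝ} (hl : 0 < l) (y : Ed d) :
    Tendsto (fun m => p.reg (P m) l y) atTop (𝓝 (p.reg Q l y)) :=
  ((continuous_integral_of_hasCompactSupport (p.continuous_ker_right l y)
    (HasCompactSupport.intro (isCompact_closedBall y (p.rad / l))
      fun _ hx => p.ker_eq_zero hl hx)).tendsto Q).comp hP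

lemma tendsto_integral_abs_reg_sub {P : ℕ → ProbabilityMeasure (Ed d)}
    {Q : ProbabilityMeasure (Ed d)} (hP : Tendsto P atTop (𝓝 Q)) {l : ℝ} (hl : 0 < l) (R : ℝ) :
    Tendsto (fun m => ∫ y in closedBall (0 : Ed d) R, |p.reg (P m) l y - p.reg Q l y|) atTop
      (𝓝 0) := by
  have : IsFiniteMeasure (volume.restrict (closedBall (0 : Ed d) R)) :=
    ⟨by simpa using measure_closedBall_lt_top⟩
  have h := tendsto_integral_of_dominated_convergence (μ := volume.restrict (closedBall (0 : Ed d) R))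
    (F := fun m y => |p.reg (P m) l y - p.reg Q l y|) (f := fun _ => (0 : ℝ))
    (fun _ => 2 * l ^ d)
    (fun m => ((p.continuous_reg _ hl.le).sub (p.continuous_reg _ hl.le)).abs.aestronglyMeasurable)
    (integrable_const _) (fun m => Eventually.of_forall fun y => ?_)
    (Eventually.of_forall fun y => ?_)
  · simpa using h
  · rw [Real.norm_eq_abs, abs_abs, abs_le]
    have h1 := p.reg_nonneg (P m) hl.le y
    have h2 := p.reg_le (P m) hl y
    have h3 := p.reg_nonneg Q hl.le y
    have h4 := p.reg_le Q hl y
    constructor <;> linarith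
  · have h := ((p.tendsto_reg hP hl y).sub_const (p.reg Q l y)).abs
    simpa using h

/-- Weak convergence improves to convergence in total variation on balls. -/
lemma eventually_abs_integral_sub_le {A : Ed d → Matrix (Fin d) (Fin d) ℝ} (p : ParametrixData A)
    {N' : ℝ → ℝ} (hN' : ∀ R, 0 ≤ N' R)
    {P : ℕ → ProbabilityMeasure (Ed d)} {Q : ProbabilityMeasure (Ed d)}
    (hP : Tendsto P atTop (𝓝 Q)) (hPd : ∀ m, DriftBounded A N' (P m : Measure (Ed d)))
    (hQd : DriftBounded A N' (Q : Measure (Ed d))) {R : ℝ} (hR : 0 < R) {M : ℝ} (hM : 0 ≤ M)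
    {ε : ℝ} (hε : 0 < ε) :
    ∀ᶠ m in atTop, ∀ f : Ed d → ℝ, Measurable f → (∀ x, x ∉ closedBall 0 R → f x = 0) →
      (∀ x, |f x| ≤ M) →
      |∫ x, f x ∂(P m : Measure (Ed d)) - ∫ x, f x ∂(Q : Measure (Ed d))| ≤ ε := by
  have hm := p.massLow_pos
  set M' := M / p.massLow with hM'
  have hM'0 : 0 ≤ M' := by positivity
  have hC := p.densConst_nonneg hN' (R + 1)
  obtain ⟨n, hn⟩ : ∃ n : ℕ, 2 * M' * p.densConst N' (R + 1) * ((2 : ℝ) ^ n)⁻¹ < ε / 4 := by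
    have h3 : Tendsto (fun n : ℕ => 2 * M' * p.densConst N' (R + 1) * ((2 : ℝ) ^ n)⁻¹) atTop
        (𝓝 (2 * M' * p.densConst N' (R + 1) * 0)) :=
      (tendsto_inv_atTop_zero.comp
        (tendsto_pow_atTop_atTop_of_one_lt (by norm_num))).const_mul _
    rw [mul_zero] at h3
    exact (h3.eventually (gt_mem_nhds (by positivity))).exists
  have hl : (0 : ℝ) < 2 ^ n := by positivity
  have hev := (((p.tendsto_integral_abs_reg_sub hP hl R).const_mul M').eventually
    (gt_mem_nhds (by rw [mul_zero]; positivity : M' * 0 < ε / 4)))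
  filter_upwards [hev] with m hm1 f hfm hf0 hfM
  set g : Ed d → ℝ := fun x => f x / p.mass x with hg
  have hgm : Measurable g := hfm.div p.continuous_mass.measurable
  have hg0 : ∀ x, x ∉ closedBall 0 R → g x = 0 := fun x hx => by simp [hg, hf0 x hx]
  have hgM : ∀ x, |g x| ≤ M' := fun x => by
    simp only [hg]
    rw [abs_div, abs_of_pos (p.mass_pos x)]
    exact div_le_div₀ hM (hfM x) hm (p.massLow_le x)
  have hgf : ∀ x, g x * p.mass x = f x := fun x => div_mul_cancel₀ _ (p.mass_pos x).ne'
  have h1 := p.abs_integral_mass_sub_le_of_measurable hN' (hPd m) hR hgm hg0 hgM n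
  have h2 := p.abs_integral_mass_sub_le_of_measurable hN' hQd hR hgm hg0 hgM n
  simp only [hgf] at h1 h2
  have hgi : IntegrableOn g (closedBall 0 R) :=
    Measure.integrableOn_of_bounded (M := M') measure_closedBall_lt_top.ne
      hgm.aestronglyMeasurable (Eventually.of_forall hgM)
  have hs : ∀ μ : ProbabilityMeasure (Ed d), ∫ y, g y * p.reg μ (2 ^ n) y =
      ∫ y in closedBall 0 R, g y * p.reg μ (2 ^ n) y := fun μ =>
    (setIntegral_eq_integral_of_forall_compl_eq_zero fun x hx => by rw [hg0 x hx, zero_mul]).symm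
  have hmul : ∀ μ : ProbabilityMeasure (Ed d),
      IntegrableOn (fun x => g x * p.reg μ (2 ^ n) x) (closedBall 0 R) :=
    fun μ => hgi.mul_bdd (c := (2 ^ n) ^ d) (p.continuous_reg μ hl.le).aestronglyMeasurable
      (Eventually.of_forall fun x => by
        rw [Real.norm_eq_abs, abs_of_nonneg (p.reg_nonneg μ hl.le x)]; exact p.reg_le μ hl x)
  have h3 : |(∫ y, g y * p.reg (P m) (2 ^ n) y) - ∫ y, g y * p.reg Q (2 ^ n) y| ≤
      M' * ∫ y in closedBall (0 : Ed d) R, |p.reg (P m) (2 ^ n) y - p.reg Q (2 ^ n) y| := by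
    rw [hs, hs, ← integral_sub (hmul _) (hmul _), ← integral_const_mul, ← Real.norm_eq_abs]
    have hci : IntegrableOn (fun y => M' * |p.reg (P m) (2 ^ n) y - p.reg Q (2 ^ n) y|)
        (closedBall (0 : Ed d) R) :=
      (((p.continuous_reg _ hl.le).sub (p.continuous_reg _ hl.le)).abs.const_mul
        M').continuousOn.integrableOn_compact (isCompact_closedBall _ _)
    refine norm_integral_le_of_norm_le hci (Eventually.of_forall fun y => ?_)
    rw [← mul_sub, norm_mul, Real.norm_eq_abs, Real.norm_eq_abs]
    exact mul_le_mul_of_nonneg_right (hgM y) (abs_nonneg _)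
  rw [abs_le] at h1 h2 h3 ⊢
  constructor <;> linarith [h1.1, h1.2, h2.1, h2.2, h3.1, h3.2]

lemma integral_indicator_compl_le {V W : Ed d → ℝ} {μ : Measure (Ed d)} (hV : Integrable V μ)
    (hV0 : ∀ x, 0 ≤ V x) {α δ R : ℝ} (hδ : 0 ≤ δ) (hα : ∫ x, V x ∂μ ≤ α)
    (hR : ∀ x, R < ‖x‖ → W x ≤ δ * V x) {f : Ed d → ℝ} (hf : ∀ x, |f x| ≤ W x) :
    |∫ x, (closedBall (0 : Ed d) R)ᶜ.indicator f x ∂μ| ≤ δ * α := by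
  rw [← Real.norm_eq_abs]
  refine (norm_integral_le_of_norm_le (hV.const_mul δ) (Eventually.of_forall fun x => ?_)).trans ?_
  · by_cases hx : x ∈ closedBall (0 : Ed d) R
    · simp only [indicator, mem_compl_iff, hx, not_true_eq_false, if_false, norm_zero]
      exact mul_nonneg hδ (hV0 x)
    · rw [indicator_of_mem (by exact hx)]
      exact (hf x).trans (hR x (by simpa using hx))
  · rw [integral_const_mul]
    exact mul_le_mul_of_nonneg_left hα hδ

lemma tendsto_wDist {A : Ed d → Matrix (Fin d) (Fin d) ℝ} (p : ParametrixData A)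
    {V W : Ed d → ℝ} (hVc : Continuous V) (hV0 : ∀ x, 0 ≤ V x) (hWc : Continuous W)
    (hW0 : ∀ x, 0 ≤ W x) (hWV : ∀ x, W x ≤ V x)
    (hWo : ∀ δ : ℝ, 0 < δ → ∃ R : ℝ, 0 < R ∧ ∀ x, R < ‖x‖ → W x ≤ δ * V x)
    {N' : ℝ → ℝ} (hN' : ∀ R, 0 ≤ N' R) {α : ℝ} (hα : 0 ≤ α)
    {P : ℕ → ProbabilityMeasure (Ed d)} {Q : ProbabilityMeasure (Ed d)}
    (hP : Tendsto P atTop (𝓝 Q)) (hPd : ∀ m, DriftBounded A N' (P m : Measure (Ed d)))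
    (hQd : DriftBounded A N' (Q : Measure (Ed d))) (hPV : ∀ m, P m ∈ momentSet V α)
    (hQV : Q ∈ momentSet V α) :
    Tendsto (fun m => wDist W (P m : Measure (Ed d)) (Q : Measure (Ed d))) atTop (𝓝 0) := by
  simp only [mem_momentSet_iff hVc hV0 hα] at hPV hQV
  have hWi : ∀ {μ : Measure (Ed d)}, memPV V μ → Integrable W μ := fun hμ =>
    integrable_of_abs_le hμ.2 hWc.measurable fun x => by rw [abs_of_nonneg (hW0 x)]; exact hWV x
  rw [Metric.tendsto_atTop']
  suffices h : ∀ ε > 0, ∀ᶠ m in atTop, wDist W (P m : Measure (Ed d)) (Q : Measure (Ed d)) ≤ ε by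
    intro ε hε
    obtain ⟨n, hn⟩ := eventually_atTop.1 (h (ε / 2) (by positivity))
    refine ⟨n, fun m hm => ?_⟩
    rw [Real.dist_eq, sub_zero, abs_of_nonneg (wDist_nonneg hW0 (hWi (hPV m).1) (hWi hQV.1))]
    linarith [hn m hm.le]
  intro ε hε
  have hδ : 0 < ε / (4 * (α + 1)) := by positivity
  obtain ⟨R, hR, hRW⟩ := hWo _ hδ
  obtain ⟨M, hM⟩ := (isCompact_closedBall (0 : Ed d) R).exists_bound_of_continuousOn hWc.continuousOn
  have hM0 : 0 ≤ M := (norm_nonneg _).trans (hM 0 (by simp [hR.le]))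
  filter_upwards [p.eventually_abs_integral_sub_le hN' hP hPd hQd hR hM0 (half_pos hε)] with m hm
  refine wDist_le hW0 fun f hfm hf => ?_
  have hBm : MeasurableSet (closedBall (0 : Ed d) R) := isClosed_closedBall.measurableSet
  have hsplit : ∀ μ : Measure (Ed d), memPV V μ → ∫ x, f x ∂μ =
      ∫ x, (closedBall (0 : Ed d) R).indicator f x ∂μ +
        ∫ x, (closedBall (0 : Ed d) R)ᶜ.indicator f x ∂μ := fun μ hμ => by
    have hfi := integrable_of_abs_le (hWi hμ) hfm hf
    rw [← integral_add (hfi.indicator hBm) (hfi.indicator hBm.compl)]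
    refine integral_congr_ae (Eventually.of_forall fun x => ?_)
    have := congrFun (indicator_self_add_compl (closedBall (0 : Ed d) R) f) x
    exact this.symm
  have h1 := hm ((closedBall (0 : Ed d) R).indicator f) (hfm.indicator hBm)
    (fun x hx => indicator_of_notMem hx _) (fun x => by
      by_cases hx : x ∈ closedBall (0 : Ed d) R
      · rw [indicator_of_mem hx]
        exact (hf x).trans ((le_abs_self _).trans (hM x hx))
      · rw [indicator_of_notMem hx, abs_zero]; exact hM0)
  have h2 := integral_indicator_compl_le (hPV m).1.2 hV0 hδ.le (hPV m).2 hRW hf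
  have h3 := integral_indicator_compl_le hQV.1.2 hV0 hδ.le hQV.2 hRW hf
  have h4 : ε / (4 * (α + 1)) * α ≤ ε / 4 := by
    rw [div_mul_eq_mul_div, div_le_div_iff₀ (by positivity) (by norm_num)]
    nlinarith
  rw [hsplit _ (hPV m).1, hsplit _ hQV.1]
  rw [abs_le] at h1 h2 h3
  linarith [h1.1, h1.2, h2.1, h2.2, h3.1, h3.2]

end ParametrixData

/-- The measures with `V`-moment at most `α` whose drift is locally bounded by `N'`. -/
def goodSet (A : Ed d → Matrix (Fin d) (Fin d) ℝ) (V : Ed d → ℝ) (N' : ℝ → ℝ) (α : ℝ) :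
    Set (ProbabilityMeasure (Ed d)) :=
  momentSet V α ∩ {P | DriftBounded A N' (P : Measure (Ed d))}

lemma isCompact_goodSet {A : Ed d → Matrix (Fin d) (Fin d) ℝ}
    (hA : ∀ i j, Continuous fun x => A x i j) {V : Ed d → ℝ} (hVc : Continuous V)
    (hVinf : Tendsto V (cocompact (Ed d)) atTop) (N' : ℝ → ℝ) (α : ℝ) :
    IsCompact (goodSet A V N' α) :=
  (isCompact_momentSet hVc hVinf α).inter_right (isClosed_driftBounded hA N')

/-- The good set is totally bounded for the weighted total variation distance. -/
lemma exists_finite_net {A : Ed d → Matrix (Fin d) (Fin d) ℝ} (p : ParametrixData A)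
    {V W : Ed d → ℝ} (hVc : Continuous V) (hV0 : ∀ x, 0 ≤ V x)
    (hVinf : Tendsto V (cocompact (Ed d)) atTop) (hWc : Continuous W)
    (hW0 : ∀ x, 0 ≤ W x) (hWV : ∀ x, W x ≤ V x)
    (hWo : ∀ δ : ℝ, 0 < δ → ∃ R : ℝ, 0 < R ∧ ∀ x, R < ‖x‖ → W x ≤ δ * V x)
    {N' : ℝ → ℝ} (hN' : ∀ R, 0 ≤ N' R) {α : ℝ} (hα : 0 ≤ α) {δ : ℝ} (hδ : 0 < δ) :
    ∃ t : Finset (ProbabilityMeasure (Ed d)), (∀ P ∈ t, P ∈ goodSet A V N' α) ∧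
      ∀ P ∈ goodSet A V N' α, ∃ Q ∈ t, wDist W (P : Measure (Ed d)) (Q : Measure (Ed d)) < δ := by
  have hnhds : ∀ Q ∈ goodSet A V N' α,
      {P : ProbabilityMeasure (Ed d) | wDist W (P : Measure (Ed d)) (Q : Measure (Ed d)) < δ} ∈
        𝓝[goodSet A V N' α] Q := by
    intro Q hQ
    have h : Tendsto (fun P : ProbabilityMeasure (Ed d) =>
        wDist W (P : Measure (Ed d)) (Q : Measure (Ed d))) (𝓝[goodSet A V N' α] Q) (𝓝 0) := by
      refine tendsto_of_seq_tendsto fun u hu => ?_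
      rw [tendsto_nhdsWithin_iff] at hu
      obtain ⟨k, hk⟩ := eventually_atTop.1 hu.2
      refine (tendsto_add_atTop_iff_nat k).1 ?_
      exact p.tendsto_wDist hVc hV0 hWc hW0 hWV hWo hN' hα
        ((tendsto_add_atTop_iff_nat k).2 hu.1)
        (fun m => (hk (m + k) (Nat.le_add_left _ _)).2) hQ.2
        (fun m => (hk (m + k) (Nat.le_add_left _ _)).1) hQ.1
    exact h.eventually (gt_mem_nhds hδ)
  obtain ⟨t, ht⟩ := (isCompact_goodSet p.continuous_coeff hVc hVinf N' α).elim_nhdsWithin_subcover'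
    (fun Q _ => {P : ProbabilityMeasure (Ed d) |
      wDist W (P : Measure (Ed d)) (Q : Measure (Ed d)) < δ}) hnhds
  classical
  refine ⟨t.image Subtype.val, fun P hP => ?_, fun P hP => ?_⟩
  · obtain ⟨Q, _, rfl⟩ := Finset.mem_image.1 hP
    exact Q.2
  · obtain ⟨Q, hQ⟩ := mem_iUnion.1 (ht hP)
    obtain ⟨hQt, hQ'⟩ := mem_iUnion.1 hQ
    exact ⟨Q, Finset.mem_image_of_mem _ hQt, hQ'⟩

lemma exists_subseq_tendsto_wDist {A : Ed d → Matrix (Fin d) (Fin d) ℝ} (p : ParametrixData A)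
    {V W : Ed d → ℝ} (hVc : Continuous V) (hV0 : ∀ x, 0 ≤ V x)
    (hVinf : Tendsto V (cocompact (Ed d)) atTop) (hWc : Continuous W)
    (hW0 : ∀ x, 0 ≤ W x) (hWV : ∀ x, W x ≤ V x)
    (hWo : ∀ δ : ℝ, 0 < δ → ∃ R : ℝ, 0 < R ∧ ∀ x, R < ‖x‖ → W x ≤ δ * V x)
    {N' : ℝ → ℝ} (hN' : ∀ R, 0 ≤ N' R) {α : ℝ} (hα : 0 ≤ α)
    {P : ℕ → ProbabilityMeasure (Ed d)} (hP : ∀ n, P n ∈ goodSet A V N' α) :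
    ∃ Q ∈ goodSet A V N' α, ∃ φ : ℕ → ℕ, StrictMono φ ∧ Tendsto (P ∘ φ) atTop (𝓝 Q) ∧
      Tendsto (fun n => wDist W (P (φ n) : Measure (Ed d)) (Q : Measure (Ed d))) atTop (𝓝 0) := by
  obtain ⟨Q, hQ, φ, hφ, hlim⟩ :=
    (isCompact_goodSet p.continuous_coeff hVc hVinf N' α).isSeqCompact hP
  exact ⟨Q, hQ, φ, hφ, hlim, p.tendsto_wDist hVc hV0 hWc hW0 hWV hWo hN' hα hlim
    (fun m => (hP _).2) hQ.2 (fun m => (hP _).1) hQ.1⟩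

/-! ### Mollified drifts -/

/-- The mollification of a vector field by a normalized bump function. -/
def moll (ψ : ContDiffBump (0 : Ed d)) (β : Ed d → Ed d) (x : Ed d) : Ed d :=
  convolution (ψ.normed volume) β (ContinuousLinearMap.lsmul ℝ ℝ) volume x

lemma moll_eq (ψ : ContDiffBump (0 : Ed d)) (β : Ed d → Ed d) (x : Ed d) :
    moll ψ β x = ∫ t, ψ.normed volume t • β (x - t) := rfl

/-- Measurable vector fields bounded by `N` on balls and satisfying `⟨β, G⟩ ≤ F`. -/
def Admissible (F : Ed d → ℝ) (G : Ed d → Ed d) (N : ℝ → ℝ) (β : Ed d → Ed d) : Prop :=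
  Measurable β ∧ (∀ S : ℝ, 0 < S → ∀ x, ‖x‖ ≤ S → ‖β x‖ ≤ N S) ∧ ∀ x, ⟪β x, G x⟫ ≤ F x

section Mollification

variable {F : Ed d → ℝ} {G : Ed d → Ed d} {N : ℝ → ℝ} {β : Ed d → Ed d}

lemma Admissible.locallyIntegrable (h : Admissible F G N β) :
    LocallyIntegrable β := by
  intro x
  refine ⟨ball x 1, ball_mem_nhds x one_pos, ?_⟩
  have hb : ∀ᵐ y ∂(volume.restrict (ball x 1)), ‖β y‖ ≤ N (‖x‖ + 1) := by
    refine (ae_restrict_iff' isOpen_ball.measurableSet).2 (Eventually.of_forall fun y hy => ?_)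
    refine h.2.1 _ (by positivity) y ?_
    have : ‖y - x‖ < 1 := by simpa [dist_eq_norm] using hy
    linarith [norm_le_norm_add_norm_sub' y x]
  exact Measure.integrableOn_of_bounded measure_ball_lt_top.ne
    h.1.aestronglyMeasurable hb

lemma integrable_moll (ψ : ContDiffBump (0 : Ed d)) (hβ : LocallyIntegrable β) (x : Ed d) :
    Integrable fun t => ψ.normed volume t • β (x - t) :=
  (ψ.hasCompactSupport_normed.convolutionExists_left (ContinuousLinearMap.lsmul ℝ ℝ)
    ψ.continuous_normed hβ) x

lemma continuous_moll (ψ : ContDiffBump (0 : Ed d)) (hβ : LocallyIntegrable β) :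
    Continuous (moll ψ β) :=
  ψ.hasCompactSupport_normed.continuous_convolution_left (ContinuousLinearMap.lsmul ℝ ℝ)
    ψ.continuous_normed hβ

lemma normed_eq_zero_or_mem (ψ : ContDiffBump (0 : Ed d)) (x t : Ed d) :
    ψ.normed volume t = 0 ∨ ‖(x - t) - x‖ < ψ.rOut := by
  by_cases h : ψ.normed volume t = 0
  · exact Or.inl h
  · right
    have : t ∈ Function.support (ψ.normed volume) := h
    rw [ψ.support_normed_eq] at this
    simpa using this

lemma norm_moll_le (ψ : ContDiffBump (0 : Ed d)) {x : Ed d} {c : ℝ}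
    (h : ∀ y, ‖y - x‖ < ψ.rOut → ‖β y‖ ≤ c) : ‖moll ψ β x‖ ≤ c := by
  rw [moll_eq]
  refine (norm_integral_le_of_norm_le (ψ.integrable_normed.mul_const c)
    (Eventually.of_forall fun t => ?_)).trans_eq ?_
  · rw [norm_smul, Real.norm_eq_abs, abs_of_nonneg (ψ.nonneg_normed t)]
    rcases normed_eq_zero_or_mem ψ x t with ht | ht
    · simp [ht]
    · exact mul_le_mul_of_nonneg_left (h _ ht) (ψ.nonneg_normed t)
  · rw [integral_mul_const, ψ.integral_normed, one_mul]

lemma inner_moll_le (ψ : ContDiffBump (0 : Ed d)) (hβ : LocallyIntegrable β) {x v : Ed d} {c : ℝ}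
    (h : ∀ y, ‖y - x‖ < ψ.rOut → ⟪β y, v⟫ ≤ c) : ⟪moll ψ β x, v⟫ ≤ c := by
  have hi := integrable_moll ψ hβ x
  rw [moll_eq, real_inner_comm, ← integral_inner hi]
  calc ∫ t, ⟪v, ψ.normed volume t • β (x - t)⟫ ≤ ∫ t, ψ.normed volume t * c := by
        refine integral_mono (hi.const_inner v) (ψ.integrable_normed.mul_const c) fun t => ?_
        simp only [real_inner_smul_right]
        rcases normed_eq_zero_or_mem ψ x t with ht | ht
        · simp [ht]
        · rw [real_inner_comm]
          exact mul_le_mul_of_nonneg_left (h _ ht) (ψ.nonneg_normed t)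
    _ = c := by rw [integral_mul_const, ψ.integral_normed, one_mul]

lemma moll_sub (ψ : ContDiffBump (0 : Ed d)) {β' : Ed d → Ed d} (hβ : LocallyIntegrable β)
    (hβ' : LocallyIntegrable β') (x : Ed d) :
    moll ψ (fun y => β y - β' y) x = moll ψ β x - moll ψ β' x := by
  simp only [moll_eq, smul_sub]
  exact integral_sub (integrable_moll ψ hβ x) (integrable_moll ψ hβ' x)

lemma exists_continuous_admissible (hF : Continuous F) (hG : Continuous G)
    (hβ : Admissible F G N β) {ε : ℝ} (hε : 0 < ε) :
    ∃ B : Ed d → Ed d, Continuous B ∧ (∀ S : ℝ, 0 < S → ∀ x, ‖x‖ ≤ S → ‖B x‖ ≤ N (S + 1)) ∧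
      ∀ x, ⟪B x, G x⟫ ≤ F x + ε := by
  let t : Ed d → Set (Ed d) := fun x =>
    {v | (∀ S : ℝ, 0 < S → ‖x‖ ≤ S → ‖v‖ ≤ N (S + 1)) ∧ ⟪v, G x⟫ ≤ F x + ε}
  have ht : ∀ x, Convex ℝ (t x) := by
    intro x u hu v hv a b ha hb hab
    refine ⟨fun S hS hx => ?_, ?_⟩
    · have h1 := hu.1 S hS hx
      have h2 := hv.1 S hS hx
      calc ‖a • u + b • v‖ ≤ a * ‖u‖ + b * ‖v‖ := by
            refine (norm_add_le _ _).trans_eq ?_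
            rw [norm_smul, norm_smul, Real.norm_eq_abs, Real.norm_eq_abs, abs_of_nonneg ha,
              abs_of_nonneg hb]
        _ ≤ a * N (S + 1) + b * N (S + 1) := by gcongr
        _ = N (S + 1) := by rw [← add_mul, hab, one_mul]
    · rw [inner_add_left, real_inner_smul_left, real_inner_smul_left]
      calc a * ⟪u, G x⟫ + b * ⟪v, G x⟫ ≤ a * (F x + ε) + b * (F x + ε) :=
            add_le_add (mul_le_mul_of_nonneg_left hu.2 ha) (mul_le_mul_of_nonneg_left hv.2 hb)
        _ = F x + ε := by rw [← add_mul, hab, one_mul]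
  have H : ∀ x, ∃ c, ∀ᶠ y in 𝓝 x, c ∈ t y := by
    intro x
    refine ⟨β x, ?_⟩
    have h1 : ∀ᶠ y in 𝓝 x, ⟪β x, G y⟫ < F y + ε :=
      (continuous_const.inner hG).continuousAt.eventually_lt (hF.add continuous_const).continuousAt
        (by linarith [hβ.2.2 x])
    filter_upwards [h1, ball_mem_nhds x one_pos] with y hy1 hy2
    refine ⟨fun S hS hyS => hβ.2.1 _ (by linarith) _ ?_, hy1.le⟩
    have : ‖y - x‖ < 1 := by simpa [dist_eq_norm] using hy2
    linarith [norm_le_norm_add_norm_sub y x]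
  obtain ⟨g, hg⟩ := exists_continuous_forall_mem_convex_of_local_const ht H
  exact ⟨g, g.continuous, fun S hS x hx => (hg x).1 S hS hx, fun x => (hg x).2⟩

/-- Admissible drifts can be mollified on a large ball, uniformly over the class, keeping the
Lyapunov inequality up to a small error. -/
lemma exists_mollified_drift (hF : Continuous F) (hG : Continuous G) (hN : ∀ S, 0 < N S)
    {β₀ : Ed d → Ed d} (hβ₀ : Admissible F G N β₀) {ε : ℝ} (hε : 0 < ε) {R : ℝ} (hR : 0 < R) :
    ∃ ψ : ContDiffBump (0 : Ed d), ψ.rOut < ε ∧ ψ.rOut ≤ 1 ∧ ψ.rOut ≤ 2 * ψ.rIn ∧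
      ∀ β, Admissible F G N β → ∃ B : Ed d → Ed d, Continuous B ∧
        (∀ S : ℝ, 0 < S → ∀ x, ‖x‖ ≤ S → ‖B x‖ ≤ N (S + 1)) ∧
        (∀ x, ⟪B x, G x⟫ ≤ F x + ε) ∧ ∀ x, ‖x‖ ≤ R → B x = moll ψ β x := by
  obtain ⟨B₀, hB₀c, hB₀N, hB₀⟩ := exists_continuous_admissible hF hG hβ₀ hε
  have hKc := isCompact_closedBall (0 : Ed d) (R + 2)
  have hFu := hKc.uniformContinuousOn_of_continuous hF.continuousOn
  have hGu := hKc.uniformContinuousOn_of_continuous hG.continuousOn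
  have hM := hN (R + 2)
  obtain ⟨r₁, hr₁, hr₁F⟩ := Metric.uniformContinuousOn_iff.1 hFu (ε / 2) (by positivity)
  obtain ⟨r₂, hr₂, hr₂G⟩ := Metric.uniformContinuousOn_iff.1 hGu (ε / (2 * N (R + 2)))
    (by positivity)
  obtain ⟨r, hr, hrr⟩ : ∃ r : ℝ, 0 < r ∧ r < ε ∧ r ≤ 1 ∧ r ≤ r₁ ∧ r ≤ r₂ :=
    ⟨min (ε / 2) (min 1 (min r₁ r₂)), by positivity,
      (min_le_left _ _).trans_lt (by linarith), (min_le_right _ _).trans (min_le_left _ _),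
      (min_le_right _ _).trans ((min_le_right _ _).trans (min_le_left _ _)),
      (min_le_right _ _).trans ((min_le_right _ _).trans (min_le_right _ _))⟩
  let ψ : ContDiffBump (0 : Ed d) := ⟨r / 2, r, by positivity, by linarith⟩
  refine ⟨ψ, hrr.1, hrr.2.1, (by linarith : r ≤ 2 * (r / 2)), fun β hβ => ?_⟩
  have hli := hβ.locallyIntegrable
  have hnear : ∀ {x y : Ed d}, ‖y - x‖ < ψ.rOut → ‖y‖ ≤ ‖x‖ + 1 := fun {x y} h => by
    have h1 : ‖y - x‖ < r := h
    linarith [norm_le_norm_add_norm_sub' y x, hrr.2.1]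
  have hmN : ∀ S : ℝ, 0 < S → ∀ x, ‖x‖ ≤ S → ‖moll ψ β x‖ ≤ N (S + 1) := fun S hS x hx =>
    norm_moll_le ψ fun y hy => hβ.2.1 _ (by linarith) y (by linarith [hnear hy])
  have hmG : ∀ x, ‖x‖ ≤ R + 1 → ⟪moll ψ β x, G x⟫ ≤ F x + ε := by
    intro x hx
    refine inner_moll_le ψ hli fun y hy => ?_
    have hyr : dist y x < r := by rw [dist_eq_norm]; exact hy
    have hyR : ‖y‖ ≤ R + 2 := by linarith [hnear hy]
    have hxm : x ∈ closedBall (0 : Ed d) (R + 2) := by simpa using (by linarith : ‖x‖ ≤ R + 2)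
    have hym : y ∈ closedBall (0 : Ed d) (R + 2) := by simpa using hyR
    have h1 := hr₁F y hym x hxm (hyr.trans_le hrr.2.2.1)
    have h2 := hr₂G x hxm y hym (by rw [dist_comm]; exact hyr.trans_le hrr.2.2.2)
    rw [Real.dist_eq, abs_lt] at h1
    rw [dist_eq_norm] at h2
    have h3 : ⟪β y, G x - G y⟫ ≤ ε / 2 := by
      refine (real_inner_le_norm _ _).trans ?_
      calc ‖β y‖ * ‖G x - G y‖ ≤ N (R + 2) * (ε / (2 * N (R + 2))) :=
            mul_le_mul (hβ.2.1 _ (by linarith) y hyR) h2.le (norm_nonneg _) hM.le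
        _ = ε / 2 := by field_simp
    rw [inner_sub_right] at h3
    linarith [hβ.2.2 y]
  let χ : Ed d → ℝ := fun x => max 0 (min 1 (R + 1 - ‖x‖))
  have hχc : Continuous χ := by fun_prop
  have hχ0 : ∀ x, 0 ≤ χ x := fun x => le_max_left _ _
  have hχ1 : ∀ x, 0 ≤ 1 - χ x := fun x => sub_nonneg.2 (max_le zero_le_one (min_le_left _ _))
  refine ⟨fun x => χ x • moll ψ β x + (1 - χ x) • B₀ x,
    (hχc.smul (continuous_moll ψ hli)).add ((continuous_const.sub hχc).smul hB₀c),
    fun S hS x hx => ?_, fun x => ?_, fun x hx => ?_⟩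
  · have h1 := hmN S hS x hx
    have h2 := hB₀N S hS x hx
    refine (norm_add_le _ _).trans ?_
    rw [norm_smul, norm_smul, Real.norm_eq_abs, Real.norm_eq_abs, abs_of_nonneg (hχ0 x),
      abs_of_nonneg (hχ1 x)]
    nlinarith [mul_le_mul_of_nonneg_left h1 (hχ0 x), mul_le_mul_of_nonneg_left h2 (hχ1 x)]
  · rw [inner_add_left, real_inner_smul_left, real_inner_smul_left]
    have h2 := mul_le_mul_of_nonneg_left (hB₀ x) (hχ1 x)
    have h1 : χ x * ⟪moll ψ β x, G x⟫ ≤ χ x * (F x + ε) := by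
      rcases le_or_gt ‖x‖ (R + 1) with hx | hx
      · exact mul_le_mul_of_nonneg_left (hmG x hx) (hχ0 x)
      · have : χ x = 0 := max_eq_left ((min_le_right _ _).trans (by linarith))
        rw [this, zero_mul, zero_mul]
    nlinarith
  · have : χ x = 1 := by
      simp only [χ]
      rw [min_eq_left (by linarith), max_eq_right zero_le_one]
    simp [this]

end Mollification

/-! ### Approximate solutions -/

section Drift

variable {A : Ed d → Matrix (Fin d) (Fin d) ℝ}

lemma driftBounded_of_isStationarySol (hA : ∀ i j, Continuous fun x => A x i j)
    {B : Ed d → Ed d} (hB : Continuous B) {N' : ℝ → ℝ}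
    (hBN : ∀ S : ℝ, 0 < S → ∀ x, ‖x‖ ≤ S → ‖B x‖ ≤ N' S) {μ : Measure (Ed d)} [IsFiniteMeasure μ]
    (h : IsStationarySol A B μ) : DriftBounded A N' μ := by
  intro R hR φ hφ hsupp
  have h0 := h φ hφ
  have hg := continuous_gradient hφ.contDiff_two
  have hgc := hasCompactSupport_gradient hφ.2
  have hi1 : Integrable (trHess A φ) μ :=
    (continuous_trHess hA hφ.contDiff_two).integrable_of_hasCompactSupport
      (hasCompactSupport_trHess hφ.2)
  have hi2 : Integrable (fun x => ⟪B x, gradient φ x⟫) μ :=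
    (hB.inner hg).integrable_of_hasCompactSupport (HasCompactSupport.intro hφ.2 fun x hx => by
      rw [gradient_eq_zero_of_notMem_tsupport hx, inner_zero_right])
  have hi3 : Integrable (fun x => ‖gradient φ x‖) μ :=
    hg.norm.integrable_of_hasCompactSupport hgc.norm
  simp only [Lop_eq] at h0
  rw [integral_add hi1 hi2] at h0
  rw [eq_neg_of_add_eq_zero_left h0, abs_neg, ← Real.norm_eq_abs, ← integral_const_mul]
  refine norm_integral_le_of_norm_le (hi3.const_mul _) (Eventually.of_forall fun x => ?_)
  by_cases hx : x ∈ tsupport φ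
  · exact (norm_inner_le_norm _ _).trans
      (mul_le_mul_of_nonneg_right (hBN R hR x (by simpa using hsupp hx)) (norm_nonneg _))
  · simp [gradient_eq_zero_of_notMem_tsupport hx]

lemma driftBounded_mixture (hA : ∀ i j, Continuous fun x => A x i j) {N' : ℝ → ℝ} {ι : Type*}
    [Fintype ι] {p : ι → ℝ} (hp : ∀ j, 0 ≤ p j) {μ : ι → Measure (Ed d)}
    (hμ : ∀ j, IsFiniteMeasure (μ j)) (h : ∀ j, DriftBounded A N' (μ j)) :
    DriftBounded A N' (mixture p μ) := by
  intro R hR φ hφ hsupp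
  have hi1 : ∀ j, Integrable (trHess A φ) (μ j) := fun j =>
    (continuous_trHess hA hφ.contDiff_two).integrable_of_hasCompactSupport
      (hasCompactSupport_trHess hφ.2)
  have hi2 : ∀ j, Integrable (fun x => ‖gradient φ x‖) (μ j) := fun j =>
    (continuous_gradient hφ.contDiff_two).norm.integrable_of_hasCompactSupport
      (hasCompactSupport_gradient hφ.2).norm
  rw [integral_mixture hp hi1, integral_mixture hp hi2, Finset.mul_sum]
  refine (Finset.abs_sum_le_sum_abs _ _).trans (Finset.sum_le_sum fun j _ => ?_)
  rw [abs_mul, abs_of_nonneg (hp j), mul_left_comm]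
  exact mul_le_mul_of_nonneg_left (h j R hR φ hφ hsupp) (hp j)

end Drift

/-- If every mixture of the `μ j` is close to some `ν j`, then some mixture is close to `ν j`
for every `j` which it charges. -/
lemma exists_mixture_wDist_lt {ι : Type*} [Fintype ι] [Nonempty ι] {W : Ed d → ℝ}
    (hW : ∀ x, 0 ≤ W x) {μ ν : ι → Measure (Ed d)} (hμ : ∀ j, Integrable W (μ j))
    (hν : ∀ j, Integrable W (ν j)) {ε : ℝ}
    (h : ∀ p ∈ stdSimplex ℝ ι, ∃ j, wDist W (mixture p μ) (ν j) < ε) :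
    ∃ p ∈ stdSimplex ℝ ι, ∀ j, 0 < p j → wDist W (mixture p μ) (ν j) < ε := by
  let w : ι → (ι → ℝ) → ℝ := fun j p => max 0 (ε - wDist W (mixture p μ) (ν j))
  have hw0 : ∀ j p, 0 ≤ w j p := fun j p => le_max_left _ _
  have hwc : ∀ j, ContinuousOn (w j) (stdSimplex ℝ ι) := fun j =>
    ContinuousOn.sup continuousOn_const (continuousOn_const.sub (continuousOn_wDist_mixture hW hμ (hν j)))
  have hs : ∀ p ∈ stdSimplex ℝ ι, 0 < ∑ j, w j p := fun p hp => by
    obtain ⟨j, hj⟩ := h p hp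
    exact Finset.sum_pos' (fun j _ => hw0 j p)
      ⟨j, Finset.mem_univ _, lt_max_of_lt_right (sub_pos.2 hj)⟩
  obtain ⟨p, hp, hfix⟩ := exists_fixedPoint_stdSimplex (fun p j => w j p / ∑ i, w i p)
    (continuousOn_pi.2 fun j => (hwc j).div (continuousOn_finsetSum _ fun i _ => hwc i)
      fun p hp => (hs p hp).ne')
    (fun p hp => ⟨fun j => div_nonneg (hw0 j p) (hs p hp).le, by
      rw [← Finset.sum_div, div_self (hs p hp).ne']⟩)
  refine ⟨p, hp, fun j hj => ?_⟩
  rw [← hfix] at hj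
  have h1 : 0 < w j p := (div_pos_iff_of_pos_right (hs p hp)).1 hj
  simpa [w] using h1

/-- A probability measure which almost solves the nonlinear equation: tested against functions
supported in the ball of radius `R`, it solves up to a small error the equation whose drift is the
mollification of any field close to the drifts of the nearby measures. -/
lemma exists_approximate_solution {A : Ed d → Matrix (Fin d) (Fin d) ℝ} (p : ParametrixData A)
    (hAsymm : ∀ x, (A x).IsSymm) (hApos : ∀ x (v : Ed d), 0 ≤ ∑ i, ∑ j, A x i j * v i * v j)
    {V W : Ed d → ℝ} (hV : ContDiff ℝ 2 V) (hV0 : ∀ x, 0 ≤ V x)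
    (hVinf : Tendsto V (cocompact (Ed d)) atTop) (hWc : Continuous W)
    (hW0 : ∀ x, 0 ≤ W x) (hWV : ∀ x, W x ≤ V x)
    (hWo : ∀ δ : ℝ, 0 < δ → ∃ R : ℝ, 0 < R ∧ ∀ x, R < ‖x‖ → W x ≤ δ * V x)
    {b : Ed d → Measure (Ed d) → Ed d} {N : ℝ → ℝ} (hN : ∀ R, 0 < N R)
    {C₁ C₂ α : ℝ} (hC₁ : 0 < C₁) (hC₂ : 0 < C₂)
    {ν₀ : Measure (Ed d)} (hν₀ : memPV V ν₀) (hν₀V : ∫ x, V x ∂ν₀ ≤ α)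
    (hb : ∀ ν, memPV V ν → ∫ x, V x ∂ν ≤ α →
      Admissible (fun x => C₁ - C₂ * V x - trHess A V x) (gradient V) N fun x => b x ν)
    {ε : ℝ} (hε : 0 < ε) (hεα : (C₁ + ε) / C₂ ≤ α) {R : ℝ} (hR : 0 < R) :
    ∃ ψ : ContDiffBump (0 : Ed d), ψ.rOut < ε ∧ ψ.rOut ≤ 1 ∧ ψ.rOut ≤ 2 * ψ.rIn ∧
      ∃ P ∈ goodSet A V (fun S => N (S + 1)) α,
        ∫ x, V x ∂(P : Measure (Ed d)) ≤ (C₁ + ε) / C₂ ∧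
        ∀ (φ : Ed d → ℝ) (β : Ed d → Ed d) (r M c : ℝ), r ≤ R → IsTestFun φ →
          tsupport φ ⊆ closedBall 0 r →
          (∀ x, ‖gradient φ x‖ ≤ M) → 0 ≤ c → LocallyIntegrable β →
          (∀ Q : Measure (Ed d), memPV V Q → ∫ x, V x ∂Q ≤ α →
            wDist W (P : Measure (Ed d)) Q < ε → ∀ x, ‖x‖ ≤ r + 1 → ‖β x - b x Q‖ ≤ c) →
          |∫ x, Lop A (moll ψ β) φ x ∂(P : Measure (Ed d))| ≤ c * M := by
  have hA := p.continuous_coeff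
  have hVc := hV.continuous
  have hα : 0 ≤ α := (by positivity : 0 ≤ (C₁ + ε) / C₂).trans hεα
  obtain ⟨ψ, hψε, hψ1, hψ2, hψ⟩ := exists_mollified_drift (N := N)
    (F := fun x => C₁ - C₂ * V x - trHess A V x) (G := gradient V)
    ((continuous_const.sub (continuous_const.mul hVc)).sub (continuous_trHess hA hV))
    (continuous_gradient hV) hN (hb ν₀ hν₀ hν₀V) hε hR
  have hsol : ∀ ν : Measure (Ed d), memPV V ν → ∫ x, V x ∂ν ≤ α →
      ∃ (B : Ed d → Ed d) (P : ProbabilityMeasure (Ed d)), Continuous B ∧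
        (∀ x, ‖x‖ ≤ R → B x = moll ψ (fun y => b y ν) x) ∧ memPV V (P : Measure (Ed d)) ∧
        IsStationarySol A B (P : Measure (Ed d)) ∧
        ∫ x, V x ∂(P : Measure (Ed d)) ≤ (C₁ + ε) / C₂ ∧
        DriftBounded A (fun S => N (S + 1)) (P : Measure (Ed d)) := by
    intro ν hν hνV
    obtain ⟨B, hBc, hBN, hBF, hBm⟩ := hψ _ (hb ν hν hνV)
    obtain ⟨μ, hμ, hμs, hμV⟩ := exists_stationary_of_continuous hA hAsymm hApos hV hV0 hVinf hBc
      (C := C₁ + ε) (by positivity) hC₂ fun x => by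
        rw [Lop_eq]
        have := hBF x
        linarith
    have := hμ.1
    have hμd := driftBounded_of_isStationarySol hA hBc hBN hμs
    exact ⟨B, ⟨μ, hμ.1⟩, hBc, hBm, hμ, hμs, hμV, hμd⟩
  have hmem : ∀ P : ProbabilityMeasure (Ed d), P ∈ goodSet A V (fun S => N (S + 1)) α ↔
      (memPV V (P : Measure (Ed d)) ∧ ∫ x, V x ∂(P : Measure (Ed d)) ≤ α) ∧
        DriftBounded A (fun S => N (S + 1)) (P : Measure (Ed d)) := fun P =>
    and_congr (mem_momentSet_iff hVc hV0 hα) Iff.rfl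
  have hWi : ∀ {μ : Measure (Ed d)}, memPV V μ → Integrable W μ := fun hμ =>
    integrable_of_abs_le hμ.2 hWc.measurable fun x => by rw [abs_of_nonneg (hW0 x)]; exact hWV x
  obtain ⟨t, htg, htn⟩ := exists_finite_net p hVc hV0 hVinf hWc hW0 hWV hWo
    (N' := fun S => N (S + 1)) (fun S => (hN _).le) hα hε
  have hne : Nonempty t := by
    obtain ⟨-, P, -, -, h1, -, h2, h3⟩ := hsol ν₀ hν₀ hν₀V
    obtain ⟨Q, hQ, -⟩ := htn P ((hmem P).2 ⟨⟨h1, h2.trans hεα⟩, h3⟩)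
    exact ⟨⟨Q, hQ⟩⟩
  have htm : ∀ j : t, memPV V (j.1 : Measure (Ed d)) ∧ ∫ x, V x ∂(j.1 : Measure (Ed d)) ≤ α :=
    fun j => ((hmem _).1 (htg _ j.2)).1
  choose B P hBc hBm hPm hPs hPV hPd using fun j : t => hsol j.1 (htm j).1 (htm j).2
  let μ : t → Measure (Ed d) := fun j => (P j : Measure (Ed d))
  have hmix : ∀ q ∈ stdSimplex ℝ t, memPV V (mixture q μ) ∧
      ∫ x, V x ∂(mixture q μ) ≤ (C₁ + ε) / C₂ ∧
      DriftBounded A (fun S => N (S + 1)) (mixture q μ) := by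
    intro q hq
    refine ⟨memPV_mixture hq hPm, ?_, driftBounded_mixture hA hq.1 (fun j => inferInstance) hPd⟩
    rw [integral_mixture hq.1 fun j => (hPm j).2]
    calc ∑ j, q j * ∫ x, V x ∂(μ j) ≤ ∑ j, q j * ((C₁ + ε) / C₂) :=
          Finset.sum_le_sum fun j _ => mul_le_mul_of_nonneg_left (hPV j) (hq.1 j)
      _ = (C₁ + ε) / C₂ := by rw [← Finset.sum_mul, hq.2, one_mul]
  have hgood : ∀ q (hq : q ∈ stdSimplex ℝ t),
      (⟨mixture q μ, (hmix q hq).1.1⟩ : ProbabilityMeasure (Ed d)) ∈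
        goodSet A V (fun S => N (S + 1)) α := fun q hq =>
    (hmem _).2 ⟨⟨(hmix q hq).1, (hmix q hq).2.1.trans hεα⟩, (hmix q hq).2.2⟩
  obtain ⟨q, hq, hqν⟩ := exists_mixture_wDist_lt (μ := μ)
    (ν := fun j : t => (j.1 : Measure (Ed d))) hW0 (fun j => hWi (hPm j)) (fun j => hWi (htm j).1)
    fun q hq => by
      obtain ⟨Q, hQ, h⟩ := htn _ (hgood q hq)
      exact ⟨⟨Q, hQ⟩, h⟩
  refine ⟨ψ, hψε, hψ1, hψ2, ⟨mixture q μ, (hmix q hq).1.1⟩, hgood q hq, (hmix q hq).2.1, ?_⟩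
  intro φ β r M c hrR hφ hsupp hM hc hβ hclose
  have hM0 : 0 ≤ M := (norm_nonneg _).trans (hM 0)
  have hi : ∀ {B : Ed d → Ed d} (_ : Continuous B) (j : t), Integrable (Lop A B φ) (μ j) :=
    fun hB j => (continuous_Lop hA hB hφ.contDiff_two).integrable_of_hasCompactSupport
      (hasCompactSupport_Lop A _ hφ.2)
  have hmc := continuous_moll ψ hβ
  show |∫ x, Lop A (moll ψ β) φ x ∂(mixture q μ)| ≤ c * M
  rw [integral_mixture hq.1 fun j => hi hmc j]
  refine (Finset.abs_sum_le_sum_abs _ _).trans ?_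
  calc ∑ j, |q j * ∫ x, Lop A (moll ψ β) φ x ∂(μ j)| ≤ ∑ j, q j * (c * M) := by
        refine Finset.sum_le_sum fun j _ => ?_
        rw [abs_mul, abs_of_nonneg (hq.1 j)]
        rcases (hq.1 j).eq_or_lt with h0 | h0
        · simp [← h0]
        refine mul_le_mul_of_nonneg_left ?_ (hq.1 j)
        have hs : ∫ x, Lop A (B j) φ x ∂(μ j) = 0 := hPs j φ hφ
        rw [← sub_zero (∫ x, Lop A (moll ψ β) φ x ∂(μ j)), ← hs,
          ← integral_sub (hi hmc j) (hi (hBc j) j), ← Real.norm_eq_abs]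
        refine (norm_integral_le_of_norm_le_const (C := c * M)
          (Eventually.of_forall fun x => ?_)).trans_eq (by simp [μ])
        rw [Lop_eq, Lop_eq, add_sub_add_left_eq_sub, ← inner_sub_left]
        by_cases hx : x ∈ tsupport φ
        · have hxr : ‖x‖ ≤ r := by simpa using hsupp hx
          refine (norm_inner_le_norm _ _).trans ?_
          refine mul_le_mul ?_ (hM x) (norm_nonneg _) hc
          rw [hBm j x (hxr.trans hrR), ← moll_sub ψ hβ (hb _ (htm j).1 (htm j).2).locallyIntegrable]
          refine norm_moll_le ψ fun y hy => hclose _ (htm j).1 (htm j).2 (hqν j h0) y ?_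
          linarith [norm_le_norm_add_norm_sub' y x]
        · rw [gradient_eq_zero_of_notMem_tsupport hx, inner_zero_right, norm_zero]
          positivity
    _ = c * M := by rw [← Finset.sum_mul, hq.2, one_mul]

/-- Passage to the limit in the approximate equations. -/
lemma integral_Lop_eq_zero_of_approx {A : Ed d → Matrix (Fin d) (Fin d) ℝ} (p : ParametrixData A)
    {N' : ℝ → ℝ} (hN' : ∀ R, 0 ≤ N' R) {F : Ed d → ℝ} {G : Ed d → Ed d} {N : ℝ → ℝ}
    (hN : ∀ R, 0 < N R) {β : Ed d → Ed d} (hβ : Admissible F G N β)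
    {P : ℕ → ProbabilityMeasure (Ed d)} {Q : ProbabilityMeasure (Ed d)}
    (hP : Tendsto P atTop (𝓝 Q)) (hPd : ∀ m, DriftBounded A N' (P m : Measure (Ed d)))
    (hQd : DriftBounded A N' (Q : Measure (Ed d))) {ψ : ℕ → ContDiffBump (0 : Ed d)}
    (hψ : Tendsto (fun m => (ψ m).rOut) atTop (𝓝 0)) (hψ1 : ∀ m, (ψ m).rOut ≤ 1)
    (hψ2 : ∀ m, (ψ m).rOut ≤ 2 * (ψ m).rIn) {φ : Ed d → ℝ} (hφ : IsTestFun φ)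
    (happ : Tendsto (fun m => ∫ x, Lop A (moll (ψ m) β) φ x ∂(P m : Measure (Ed d))) atTop (𝓝 0)) :
    ∫ x, Lop A β φ x ∂(Q : Measure (Ed d)) = 0 := by
  have hA := p.continuous_coeff
  have hli := hβ.locallyIntegrable
  have hTc := continuous_trHess hA hφ.contDiff_two
  have hGc := continuous_gradient hφ.contDiff_two
  obtain ⟨R, hR, hsupp⟩ : ∃ R : ℝ, 0 < R ∧ tsupport φ ⊆ closedBall 0 R := by
    obtain ⟨R, hR⟩ := hφ.2.isBounded.subset_closedBall (0 : Ed d)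
    exact ⟨max R 1, by positivity, hR.trans (closedBall_subset_closedBall (le_max_left _ _))⟩
  obtain ⟨M₁, hM₁⟩ := hTc.bounded_above_of_compact_support (hasCompactSupport_trHess hφ.2)
  obtain ⟨M₂, hM₂⟩ := hGc.bounded_above_of_compact_support (hasCompactSupport_gradient hφ.2)
  have hzero : ∀ (B : Ed d → Ed d) (x : Ed d), x ∉ tsupport φ → Lop A B φ x = 0 := fun B x hx => by
    rw [Lop_eq, trHess_eq_zero_of_notMem_tsupport hx, gradient_eq_zero_of_notMem_tsupport hx]
    simp
  set M := M₁ + N (R + 1) * M₂ with hMdef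
  have hM0 : 0 ≤ M := add_nonneg ((norm_nonneg _).trans (hM₁ 0))
    (mul_nonneg (hN _).le ((norm_nonneg _).trans (hM₂ 0)))
  have hmN : ∀ m x, ‖x‖ ≤ R → ‖moll (ψ m) β x‖ ≤ N (R + 1) := fun m x hx =>
    norm_moll_le (ψ m) fun y hy => hβ.2.1 _ (by positivity) y
      (by linarith [norm_le_norm_add_norm_sub' y x, hψ1 m])
  have hbd : ∀ m x, |Lop A (moll (ψ m) β) φ x| ≤ M := by
    intro m x
    by_cases hx : x ∈ tsupport φ
    · rw [Lop_eq, ← Real.norm_eq_abs]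
      refine (norm_add_le _ _).trans (add_le_add (hM₁ x) ?_)
      exact (norm_inner_le_norm _ _).trans (mul_le_mul (hmN m x (by simpa using hsupp hx)) (hM₂ x)
        (norm_nonneg _) (hN _).le)
    · rwa [hzero _ x hx, abs_zero]
  have hmeas : ∀ m, Measurable (Lop A (moll (ψ m) β) φ) := fun m =>
    (continuous_Lop hA (continuous_moll (ψ m) hli) hφ.contDiff_two).measurable
  have hdiff : Tendsto (fun m => ∫ x, Lop A (moll (ψ m) β) φ x ∂(P m : Measure (Ed d)) -
      ∫ x, Lop A (moll (ψ m) β) φ x ∂(Q : Measure (Ed d))) atTop (𝓝 0) := by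
    rw [Metric.tendsto_nhds]
    intro ε hε
    filter_upwards [p.eventually_abs_integral_sub_le hN' hP hPd hQd hR hM0 (half_pos hε)] with m hm
    rw [Real.dist_eq, sub_zero]
    exact (hm _ (hmeas m) (fun x hx => hzero _ x fun h => hx (hsupp h)) (hbd m)).trans_lt
      (half_lt_self hε)
  have hlim : Tendsto (fun m => ∫ x, Lop A (moll (ψ m) β) φ x ∂(Q : Measure (Ed d))) atTop
      (𝓝 (∫ x, Lop A β φ x ∂(Q : Measure (Ed d)))) := by
    refine tendsto_integral_of_dominated_convergence (fun _ => M)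
      (fun m => (hmeas m).aestronglyMeasurable) (integrable_const _)
      (fun m => Eventually.of_forall fun x => hbd m x) ?_
    have hae := ContDiffBump.ae_convolution_tendsto_right_of_locallyIntegrable (μ := volume) hψ
      (Eventually.of_forall hψ2) hli
    filter_upwards [(p.absolutelyContinuous hN' hQd).ae_le hae] with x hx
    simp only [Lop_eq]
    exact tendsto_const_nhds.add (Tendsto.inner hx tendsto_const_nhds)
  have h := happ.sub hdiff
  simp only [sub_sub_cancel, sub_zero] at h
  exact tendsto_nhds_unique hlim h

lemma exists_forall_rpow_le_mul {V : Ed d → ℝ} {γ : ℝ} (hV1 : ∀ x, 1 ≤ V x)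
    (hVinf : Tendsto V (cocompact (Ed d)) atTop) (hγ : γ < 1) {δ : ℝ} (hδ : 0 < δ) :
    ∃ R : ℝ, 0 < R ∧ ∀ x, R < ‖x‖ → V x ^ γ ≤ δ * V x := by
  have h1 : Tendsto (fun x => V x ^ (-(1 - γ))) (cocompact (Ed d)) (𝓝 0) :=
    (tendsto_rpow_neg_atTop (by linarith)).comp hVinf
  obtain ⟨R, hR⟩ := Metric.closedBall_compl_subset_of_mem_cocompact
    (h1.eventually (gt_mem_nhds hδ)) (0 : Ed d)
  refine ⟨max R 1, by positivity, fun x hx => ?_⟩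
  have hxR : V x ^ (-(1 - γ)) < δ := hR (by
    simpa using (le_max_left R 1).trans_lt hx)
  have hVx : 0 < V x := one_pos.trans_le (hV1 x)
  calc V x ^ γ = V x ^ (-(1 - γ)) * V x := by
        rw [← Real.rpow_add_one hVx.ne']
        congr 1
        ring
    _ ≤ δ * V x := mul_le_mul_of_nonneg_right hxR.le hVx.le

lemma exists_delta_of_tendstoUniformlyOn {V W : Ed d → ℝ} {b : Ed d → Measure (Ed d) → Ed d}
    {α : ℝ} {μ : Measure (Ed d)} {S : Set (Ed d)}
    (hpos : ∀ ν, memPV V ν → 0 ≤ wDist W ν μ)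
    (h : ∀ μs : ℕ → Measure (Ed d), (∀ n, memPV V (μs n) ∧ ∫ x, V x ∂(μs n) ≤ α) →
      Tendsto (fun n => wDist W (μs n) μ) atTop (𝓝 0) →
      TendstoUniformlyOn (fun n x => b x (μs n)) (fun x => b x μ) atTop S)
    {c : ℝ} (hc : 0 < c) :
    ∃ δ : ℝ, 0 < δ ∧ ∀ ν, memPV V ν → ∫ x, V x ∂ν ≤ α → wDist W ν μ < δ →
      ∀ x ∈ S, ‖b x μ - b x ν‖ ≤ c := by
  by_contra! hcon
  choose ν hν hνα hνd x hxS hx using fun n : ℕ => hcon (1 / (n + 1)) Nat.one_div_pos_of_nat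
  have hu := h ν (fun n => ⟨hν n, hνα n⟩)
    (squeeze_zero (fun n => hpos _ (hν n)) (fun n => (hνd n).le)
      tendsto_one_div_add_atTop_nhds_zero_nat)
  obtain ⟨n, hn⟩ := (Metric.tendstoUniformlyOn_iff.1 hu c hc).exists
  have := hn (x n) (hxS n)
  rw [dist_eq_norm] at this
  linarith [hx n]

/-- **Remark 1** (existence of a stationary solution under a uniform Lyapunov
condition, with the moment bound `∫V dμ ≤ C₁/C₂`). -/
theorem stmt10_existence_stationary_uniform
    (A : Ed d → Matrix (Fin d) (Fin d) ℝ) (K₁ K₂ : ℝ)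
    (hK₁ : 0 < K₁) (hK₂ : 0 < K₂)
    (hAsymm : ∀ x, (A x).IsSymm)
    (hAlow : ∀ x (v : Ed d), K₁⁻¹ * ‖v‖ ^ 2 ≤ ∑ i, ∑ j, A x i j * v i * v j)
    (hAup : ∀ x (v : Ed d), ∑ i, ∑ j, A x i j * v i * v j ≤ K₁ * ‖v‖ ^ 2)
    (hALip : ∀ x y i j, |A x i j - A y i j| ≤ K₂ * ‖x - y‖)
    (V : Ed d → ℝ) (hV : ContDiff ℝ 2 V) (hV1 : ∀ x, 1 ≤ V x)
    (hVinf : Tendsto V (cocompact (Ed d)) atTop)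
    (γ : ℝ) (hγ : γ ∈ Set.Ioc (0:ℝ) (1/2))
    (W : Ed d → ℝ) (hW : W = fun x => V x ^ γ)
    (b : Ed d → Measure (Ed d) → Ed d)
    (hbBorel : ∀ μ, Measurable (fun x => b x μ))
    (hbGrow : ∀ μ : Measure (Ed d), memPV V μ →
      ∃ Cb : ℝ, ∀ x, ‖b x μ‖ ≤ Cb * V x ^ (1 - γ))
    (C₁ C₂ : ℝ) (hC₁ : 0 < C₁) (hC₂ : 0 < C₂)
    (N : ℝ → ℝ → ℝ) (hN : ∀ α R, 0 < N α R)
    (hLyap : ∀ α : ℝ, 0 < α → ∀ μ : Measure (Ed d),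
      memPV V μ → (∫ x, V x ∂μ) ≤ α →
      ∀ x, Lop A (fun y => b y μ) V x ≤ C₁ - C₂ * V x)
    (hLocBdd : ∀ α : ℝ, 0 < α → ∀ μ : Measure (Ed d),
      memPV V μ → (∫ x, V x ∂μ) ≤ α →
      ∀ R : ℝ, 0 < R → ∀ x : Ed d, ‖x‖ ≤ R → ‖b x μ‖ ≤ N α R)
    (hCont : ∀ α : ℝ, 0 < α → ∀ μs : ℕ → Measure (Ed d), ∀ μ : Measure (Ed d),
      (∀ n, memPV V (μs n) ∧ (∫ x, V x ∂(μs n)) ≤ α) →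
      memPV V μ → (∫ x, V x ∂μ) ≤ α →
      Tendsto (fun n => wDist W (μs n) μ) atTop (nhds 0) →
      ∀ R : ℝ, 0 < R →
        TendstoUniformlyOn (fun n x => b x (μs n)) (fun x => b x μ) atTop
          (Metric.closedBall (0 : Ed d) R)) :
    ∃ μ : Measure (Ed d), memPV V μ ∧
      IsStationarySol A (fun y => b y μ) μ ∧
      (∫ x, V x ∂μ) ≤ C₁ / C₂ := by
  have hγ0 := hγ.1
  have hγ1 : γ < 1 := hγ.2.trans_lt (by norm_num)
  have hV0 : ∀ x, 0 ≤ V x := fun x => zero_le_one.trans (hV1 x)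
  have hVc := hV.continuous
  have hA : ∀ i j, Continuous fun x => A x i j := fun i j =>
    (LipschitzWith.of_dist_le_mul (K := K₂.toNNReal) fun x y => by
      rw [Real.dist_eq, dist_eq_norm, Real.coe_toNNReal _ hK₂.le]
      exact hALip x y i j).continuous
  have hApos : ∀ x (v : Ed d), 0 ≤ ∑ i, ∑ j, A x i j * v i * v j := fun x v =>
    (by positivity : 0 ≤ K₁⁻¹ * ‖v‖ ^ 2).trans (hAlow x v)
  obtain ⟨p⟩ := nonempty_parametrixData hK₁ hK₂ hAsymm hAlow hAup hALip hA
  have hWc : Continuous W := by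
    rw [hW]
    exact hVc.rpow_const fun x => Or.inr hγ0.le
  have hW0 : ∀ x, 0 ≤ W x := fun x => by
    rw [hW]
    exact Real.rpow_nonneg (hV0 x) γ
  have hWV : ∀ x, W x ≤ V x := fun x => by
    rw [hW]
    exact (Real.rpow_le_rpow_of_exponent_le (hV1 x) hγ1.le).trans_eq (Real.rpow_one _)
  have hWo : ∀ δ : ℝ, 0 < δ → ∃ R : ℝ, 0 < R ∧ ∀ x, R < ‖x‖ → W x ≤ δ * V x := fun δ hδ => by
    rw [hW]
    exact exists_forall_rpow_le_mul hV1 hVinf hγ1 hδ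
  have hWi : ∀ {μ : Measure (Ed d)}, memPV V μ → Integrable W μ := fun hμ =>
    integrable_of_abs_le hμ.2 hWc.measurable fun x => by rw [abs_of_nonneg (hW0 x)]; exact hWV x
  set α := max ((C₁ + 1) / C₂) (V 0) with hαdef
  have hα : 0 < α := lt_max_of_lt_left (by positivity)
  have hν₀ : memPV V (Measure.dirac (0 : Ed d)) :=
    ⟨inferInstance, integrable_dirac (by simp)⟩
  have hν₀V : ∫ x, V x ∂(Measure.dirac (0 : Ed d)) ≤ α := by
    rw [integral_dirac]
    exact le_max_right _ _
  have hb : ∀ ν, memPV V ν → ∫ x, V x ∂ν ≤ α →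
      Admissible (fun x => C₁ - C₂ * V x - trHess A V x) (gradient V) (N α) fun x => b x ν := by
    refine fun ν hν hνα => ⟨hbBorel ν, hLocBdd α hα ν hν hνα, fun x => ?_⟩
    have h := hLyap α hα ν hν hνα x
    rw [Lop_eq] at h
    linarith
  have hεα : ∀ n : ℕ, (C₁ + 1 / ((n : ℝ) + 1)) / C₂ ≤ α := fun n => by
    refine le_trans ?_ (le_max_left _ _)
    have : 1 / ((n : ℝ) + 1) ≤ 1 := by
      rw [div_le_one (by positivity)]
      linarith [n.cast_nonneg (α := ℝ)]
    gcongr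
  choose ψ hψε hψ1 hψ2 P hPg hPV hPapp using fun n : ℕ =>
    exists_approximate_solution p hAsymm hApos hV hV0 hVinf hWc hW0 hWV hWo (hN α) hC₁ hC₂ hν₀ hν₀V
      hb (Nat.one_div_pos_of_nat : 0 < 1 / ((n : ℝ) + 1)) (hεα n)
      (by positivity : 0 < (n : ℝ) + 1)
  have hN' : ∀ R, 0 ≤ N α (R + 1) := fun R => (hN _ _).le
  obtain ⟨Q, hQg, k, hk, hlim, hwlim⟩ := exists_subseq_tendsto_wDist p hVc hV0 hVinf hWc hW0 hWV hWo
    hN' hα.le hPg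
  have hkt : Tendsto (fun m => 1 / ((k m : ℝ) + 1)) atTop (𝓝 0) :=
    tendsto_one_div_add_atTop_nhds_zero_nat.comp hk.tendsto_atTop
  have hPm : ∀ n, memPV V (P n : Measure (Ed d)) := fun n =>
    ((mem_momentSet_iff hVc hV0 hα.le).1 (hPg n).1).1
  have hQ := (mem_momentSet_iff hVc hV0 hα.le).1 hQg.1
  refine ⟨Q, hQ.1, fun φ hφ => ?_, ?_⟩
  · refine integral_Lop_eq_zero_of_approx p hN' (hN α) (hb _ hQ.1 hQ.2) hlim
      (fun m => (hPg _).2) hQg.2 (ψ := fun m => ψ (k m))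
      (squeeze_zero (fun m => (ψ (k m)).rOut_pos.le) (fun m => (hψε _).le) hkt)
      (fun m => hψ1 _) (fun m => hψ2 _) hφ ?_
    obtain ⟨R, hR, hsupp⟩ : ∃ R : ℝ, 0 < R ∧ tsupport φ ⊆ closedBall 0 R := by
      obtain ⟨R, hR⟩ := hφ.2.isBounded.subset_closedBall (0 : Ed d)
      exact ⟨max R 1, by positivity, hR.trans (closedBall_subset_closedBall (le_max_left _ _))⟩
    obtain ⟨M, hM⟩ := (continuous_gradient hφ.contDiff_two).bounded_above_of_compact_support
      (hasCompactSupport_gradient hφ.2)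
    have hM0 : 0 ≤ M := (norm_nonneg _).trans (hM 0)
    rw [Metric.tendsto_nhds]
    intro ε hε
    obtain ⟨δ, hδ, hδb⟩ := exists_delta_of_tendstoUniformlyOn
      (fun ν hν => wDist_nonneg hW0 (hWi hν) (hWi hQ.1))
      (fun μs hμs hμsQ => hCont α hα μs Q hμs hQ.1 hQ.2 hμsQ (R + 1) (by positivity))
      (c := ε / (M + 1)) (by positivity)
    have hkR : ∀ᶠ m in atTop, R ≤ (k m : ℝ) + 1 :=
      (tendsto_atTop_add_const_right _ _
        (tendsto_natCast_atTop_atTop.comp hk.tendsto_atTop)).eventually_ge_atTop R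
    filter_upwards [hkR, hkt.eventually (gt_mem_nhds (half_pos hδ)),
      hwlim.eventually (gt_mem_nhds (half_pos hδ))] with m hmR hm1 hm2
    rw [Real.dist_eq, sub_zero]
    refine (hPapp (k m) φ (fun x => b x Q) R M (ε / (M + 1)) hmR hφ hsupp hM (by positivity)
      (hb _ hQ.1 hQ.2).locallyIntegrable fun ν hν hνα hνP x hx =>
        hδb ν hν hνα ?_ x (by simpa using hx)).trans_lt ?_
    · have h1 := wDist_triangle hW0 (hWi hν) (hWi (hPm (k m))) (hWi hQ.1)
      rw [wDist_comm hW0 (hWi hν) (hWi (hPm (k m)))] at h1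
      linarith
    · rw [div_mul_eq_mul_div, div_lt_iff₀ (by positivity)]
      nlinarith
  · have hlimV : Tendsto (fun n : ℕ => (C₁ + 1 / ((n : ℝ) + 1)) / C₂) atTop (𝓝 (C₁ / C₂)) := by
      simpa using (tendsto_one_div_add_atTop_nhds_zero_nat.const_add C₁).div_const C₂
    refine ge_of_tendsto' hlimV fun n => ?_
    have h0 : 0 ≤ (C₁ + 1 / ((n : ℝ) + 1)) / C₂ := by positivity
    refine ((mem_momentSet_iff hVc hV0 h0).1 ((isClosed_momentSet hVc _).mem_of_tendsto hlim ?_)).2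
    filter_upwards [eventually_ge_atTop n] with m hm
    refine (mem_momentSet_iff hVc hV0 h0).2 ⟨hPm _, (hPV (k m)).trans ?_⟩
    have hnk : (n : ℝ) ≤ k m := by exact_mod_cast hm.trans (hk.id_le m)
    gcongr
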